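/- arXiv:2212.08644 — 4 statements merged into one kernel-verified Lean document; each statement's English description precedes it below -/
import Mathlib

section
/- Let (A, I) be a Henselian pair and let B be an A-algebra such that (B, I·B) is a Henselian pair. Then the following are equivalent: (i) B is hfp over A with respect to I, the map A → B is h-formally smooth, and B is flat as an A-module; (ii) B is h-smooth over A, i.e. there exist a smooth A-algebra R and an A-algebra homomorphism R → B exhibiting B as a Henselization of the pair (R, I·R). -/
universe u

/-- A ring homomorphism `ρ : R →+* H` exhibits `H` as a Henselization of the pair `(R, K)`:
`(H, K·H)` is a Henselian pair, and every map from `(R, K)` to a Henselian pair factors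
uniquely through `ρ`. -/
def IsHenselization {R H : Type u} [CommRing R] [CommRing H]
    (K : Ideal R) (ρ : R →+* H) : Prop :=
  HenselianRing H (K.map ρ) ∧
    ∀ (C : Type u) [CommRing C] (J : Ideal C), HenselianRing C J →
      ∀ f : R →+* C, K.map f ≤ J → ∃! g : H →+* C, g.comp ρ = f

/-- `φ : A →+* B` is Henselian finitely presented (hfp) with respect to `I`:
`B` is a Henselization of `(R, I·R)` for some finitely presented `A`-algebra `R`. -/
def IsHfp {A B : Type u} [CommRing A] [CommRing B] (φ : A →+* B) (I : Ideal A) : Prop :=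
  ∃ (R : Type u) (_ : CommRing R) (ψ : A →+* R) (ρ : R →+* B),
    ψ.FinitePresentation ∧ ρ.comp ψ = φ ∧ IsHenselization (I.map ψ) ρ

/-- `φ : A →+* B` is h-formally étale with respect to `I`. -/
def IsHFormallyEtale {A B : Type u} [CommRing A] [CommRing B] (φ : A →+* B) (I : Ideal A) :
    Prop :=
  ∀ (E C : Type u) [CommRing E] [CommRing C] (e : A →+* E) (c : A →+* C)
    (p : E →+* C) (u : B →+* C),
    p.comp e = c → u.comp φ = c →
    (∃ N : ℕ, 1 ≤ N ∧ Ideal.map e (I ^ N) = ⊥ ∧ Ideal.map c (I ^ N) = ⊥) →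
    Function.Surjective p →
    (∃ M : ℕ, 1 ≤ M ∧ RingHom.ker p ^ M = ⊥) →
    ∃! v : B →+* E, v.comp φ = e ∧ p.comp v = u

/-- `φ : A →+* B` is h-formally smooth with respect to `I`. -/
def IsHFormallySmooth {A B : Type u} [CommRing A] [CommRing B] (φ : A →+* B) (I : Ideal A) :
    Prop :=
  ∀ (E C : Type u) [CommRing E] [CommRing C] (e : A →+* E) (c : A →+* C)
    (p : E →+* C) (u : B →+* C),
    p.comp e = c → u.comp φ = c →
    (∃ N : ℕ, 1 ≤ N ∧ Ideal.map e (I ^ N) = ⊥ ∧ Ideal.map c (I ^ N) = ⊥) →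
    Function.Surjective p →
    (∃ M : ℕ, 1 ≤ M ∧ RingHom.ker p ^ M = ⊥) →
    ∃ v : B →+* E, v.comp φ = e ∧ p.comp v = u

/-- `φ : A →+* B` is h-étale with respect to `I`: `B` is a Henselization of `(R, I·R)`
for some étale `A`-algebra `R`. -/
def IsHEtale {A B : Type u} [CommRing A] [CommRing B] (φ : A →+* B) (I : Ideal A) : Prop :=
  ∃ (R : Type u) (_ : CommRing R) (_ : Algebra A R) (ρ : R →+* B),
    Algebra.Etale A R ∧ ρ.comp (algebraMap A R) = φ ∧
      IsHenselization (I.map (algebraMap A R)) ρ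

/-- `φ : A →+* B` is h-smooth with respect to `I`: `B` is a Henselization of `(R, I·R)`
for some smooth `A`-algebra `R`. -/
def IsHSmooth {A B : Type u} [CommRing A] [CommRing B] (φ : A →+* B) (I : Ideal A) : Prop :=
  ∃ (R : Type u) (_ : CommRing R) (_ : Algebra A R) (ρ : R →+* B),
    Algebra.Smooth A R ∧ ρ.comp (algebraMap A R) = φ ∧
      IsHenselization (I.map (algebraMap A R)) ρ

/-- A ring homomorphism is flat if it makes the target into a flat module over the source. -/
def RingHomFlat {A C : Type u} [CommRing A] [CommRing C] (f : A →+* C) : Prop :=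
  letI := f.toAlgebra
  Module.Flat A C

/-- A ring homomorphism is smooth if it makes the target into a smooth algebra over the
source (smooth = formally smooth + finitely presented). -/
def RingHomSmooth {A C : Type u} [CommRing A] [CommRing C] (f : A →+* C) : Prop :=
  letI := f.toAlgebra
  Algebra.Smooth A C

/-- A ring homomorphism is étale if it makes the target into an étale algebra over the
source (étale = formally étale + finitely presented). -/
def RingHomEtale {A C : Type u} [CommRing A] [CommRing C] (f : A →+* C) : Prop :=
  letI := f.toAlgebra
  Algebra.Etale A C

section EtaleColimit


open CategoryTheory TensorProduct

lemma etale_coeq {R B S S' : Type u} [CommRing R] [CommRing B] [Algebra R B] [CommRing S]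
    [Algebra R S] [CommRing S'] [Algebra R S'] [Algebra.Etale R S] [Algebra.Etale R S']
    (f g : S →ₐ[R] S') (φ : S →ₐ[R] B) (φ' : S' →ₐ[R] B) (hf : φ'.comp f = φ)
    (hg : φ'.comp g = φ) :
    ∃ (Q : Type u) (_ : CommRing Q) (_ : Algebra R Q) (_ : Algebra.Etale R Q) (i : S' →ₐ[R] Q)
      (ψ : Q →ₐ[R] B), ψ.comp i = φ' ∧ i.comp f = i.comp g := by
  have : Algebra.Etale R (S ⊗[R] S) := .comp R S _
  let m : S ⊗[R] S →ₐ[R] S := Algebra.TensorProduct.lift (.id R S) (.id R S) fun _ _ ↦ .all _ _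
  let k : S ⊗[R] S →ₐ[R] S' := Algebra.TensorProduct.lift f g fun _ _ ↦ .all _ _
  let : Algebra (S ⊗[R] S) S := m.toRingHom.toAlgebra
  let : Algebra (S ⊗[R] S) S' := k.toRingHom.toAlgebra
  have : IsScalarTower R (S ⊗[R] S) S := .of_algebraMap_eq' m.comp_algebraMap.symm
  have : IsScalarTower R (S ⊗[R] S) S' := .of_algebraMap_eq' k.comp_algebraMap.symm
  have : Algebra.Etale (S ⊗[R] S) S := .of_restrictScalars R _ _
  let Q := S' ⊗[S ⊗[R] S] S
  have : Algebra.Etale R Q := .comp R S' _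
  let : Algebra (S ⊗[R] S) B := (φ.comp m).toRingHom.toAlgebra
  have hm : ∀ x, algebraMap (S ⊗[R] S) S x = m x := fun _ ↦ rfl
  have hk : ∀ x, algebraMap (S ⊗[R] S) S' x = k x := fun _ ↦ rfl
  have hB : ∀ x, algebraMap (S ⊗[R] S) B x = φ (m x) := fun _ ↦ rfl
  have hc : φ'.comp k = φ.comp m := by
    ext x
    · simpa [k, m] using DFunLike.congr_fun hf x
    · simpa [k, m] using DFunLike.congr_fun hg x
  have : IsScalarTower R (S ⊗[R] S) B :=
    .of_algebraMap_eq' (φ.comp m).comp_algebraMap.symm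
  let a1 : S' →ₐ[S ⊗[R] S] B :=
    { φ' with commutes' := fun r ↦ DFunLike.congr_fun hc r }
  let a2 : S →ₐ[S ⊗[R] S] B :=
    { φ with commutes' := fun r ↦ rfl }
  let ψ : Q →ₐ[S ⊗[R] S] B := Algebra.TensorProduct.lift a1 a2 fun _ _ ↦ .all _ _
  let i : S' →ₐ[R] Q := (Algebra.TensorProduct.includeLeft :
    S' →ₐ[S ⊗[R] S] Q).restrictScalars R
  refine ⟨Q, inferInstance, inferInstance, inferInstance, i, ψ.restrictScalars R, ?_, ?_⟩
  · ext x
    change ψ (x ⊗ₜ[S ⊗[R] S] (1 : S)) = φ' x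
    have : a1 x * a2 1 = φ' x := by rw [map_one, mul_one]; rfl
    exact (Algebra.TensorProduct.lift_tmul a1 a2 _ x 1).trans this
  · apply AlgHom.ext
    intro x
    change (f x) ⊗ₜ[S ⊗[R] S] (1 : S) = (g x) ⊗ₜ[S ⊗[R] S] (1 : S)
    have h1 : f x = (x ⊗ₜ[R] (1 : S)) • (1 : S') := by
      rw [Algebra.smul_def, hk]; simp [k]
    have h2 : g x = ((1 : S) ⊗ₜ[R] x) • (1 : S') := by
      rw [Algebra.smul_def, hk]; simp [k]
    rw [h1, h2, TensorProduct.smul_tmul, TensorProduct.smul_tmul, Algebra.smul_def,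
      Algebra.smul_def, hm, hm]
    simp [m]

lemma etale_prod {R B S S' : Type u} [CommRing R] [CommRing B] [Algebra R B] [CommRing S]
    [Algebra R S] [CommRing S'] [Algebra R S'] [Algebra.Etale R S] [Algebra.Etale R S']
    (φ : S →ₐ[R] B) (φ' : S' →ₐ[R] B) :
    ∃ (Q : Type u) (_ : CommRing Q) (_ : Algebra R Q) (_ : Algebra.Etale R Q) (i : S →ₐ[R] Q)
      (i' : S' →ₐ[R] Q) (ψ : Q →ₐ[R] B), ψ.comp i = φ ∧ ψ.comp i' = φ' := by
  have : Algebra.Etale R (S ⊗[R] S') := .comp R S _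
  refine ⟨S ⊗[R] S', inferInstance, inferInstance, inferInstance,
    Algebra.TensorProduct.includeLeft, Algebra.TensorProduct.includeRight,
    Algebra.TensorProduct.lift φ φ' fun _ _ ↦ .all _ _, ?_, ?_⟩ <;> ext x <;> simp

structure EtObj (R B : Type u) [CommRing R] [CommRing B] [Algebra R B] : Type u where
  n : ℕ
  I : Ideal (MvPolynomial (Fin n) R)
  et : Algebra.Etale R (MvPolynomial (Fin n) R ⧸ I)
  φ : (MvPolynomial (Fin n) R ⧸ I) →ₐ[R] B

namespace EtObj

variable {R B : Type u} [CommRing R] [CommRing B] [Algebra R B]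

abbrev Ring (o : EtObj R B) : Type u := MvPolynomial (Fin o.n) R ⧸ o.I

instance (o : EtObj R B) : Algebra.Etale R o.Ring := o.et

noncomputable instance : SmallCategory (EtObj R B) where
  Hom o o' := {f : o.Ring →ₐ[R] o'.Ring // o'.φ.comp f = o.φ}
  id o := ⟨AlgHom.id R _, by simp⟩
  comp f g := ⟨g.1.comp f.1, by rw [← AlgHom.comp_assoc, g.2, f.2]⟩

def toHom {o o' : EtObj R B} (f : o ⟶ o') : o.Ring →ₐ[R] o'.Ring := f.1

lemma toHom_comm {o o' : EtObj R B} (f : o ⟶ o') : o'.φ.comp (toHom f) = o.φ := f.2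

lemma toHom_comp {o o' o'' : EtObj R B} (f : o ⟶ o') (g : o' ⟶ o'') :
    toHom (f ≫ g) = (toHom g).comp (toHom f) := rfl

lemma exists_obj (S : Type u) [CommRing S] [Algebra R S] [Algebra.Etale R S] (φ : S →ₐ[R] B) :
    ∃ (o : EtObj R B) (e : S ≃ₐ[R] o.Ring), o.φ.comp (e : S →ₐ[R] o.Ring) = φ := by
  obtain ⟨n, I, e, -⟩ := Algebra.FinitePresentation.iff.mp
    (inferInstance : Algebra.FinitePresentation R S)
  refine ⟨⟨n, I, .of_equiv e.symm, φ.comp (e : _ →ₐ[R] S)⟩, e.symm, ?_⟩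
  ext x
  simp

instance : IsFiltered (EtObj R B) where
  nonempty := ⟨(exists_obj R (Algebra.ofId R B)).choose⟩
  cocone_objs o o' := by
    obtain ⟨Q, _, _, _, i, i', ψ, h1, h2⟩ := etale_prod o.φ o'.φ
    obtain ⟨p, e, he⟩ := exists_obj Q ψ
    refine ⟨p, ⟨(e : _ →ₐ[R] p.Ring).comp i, ?_⟩, ⟨(e : _ →ₐ[R] p.Ring).comp i', ?_⟩, trivial⟩
    · rw [← AlgHom.comp_assoc, he, h1]
    · rw [← AlgHom.comp_assoc, he, h2]
  cocone_maps o o' f g := by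
    obtain ⟨Q, _, _, _, i, ψ, h1, h2⟩ := etale_coeq (toHom f) (toHom g) o.φ o'.φ
      (toHom_comm f) (toHom_comm g)
    obtain ⟨p, e, he⟩ := exists_obj Q ψ
    refine ⟨p, ⟨(e : _ →ₐ[R] p.Ring).comp i, ?_⟩, ?_⟩
    · rw [← AlgHom.comp_assoc, he, h1]
    · apply Subtype.ext
      change ((e : _ →ₐ[R] p.Ring).comp i).comp (toHom f) =
        ((e : _ →ₐ[R] p.Ring).comp i).comp (toHom g)
      rw [AlgHom.comp_assoc, AlgHom.comp_assoc, h2]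

variable (R B) in
noncomputable def functor : EtObj R B ⥤ CommRingCat.{u} where
  obj o := CommRingCat.of o.Ring
  map f := CommRingCat.ofHom (toHom f).toRingHom
  map_id _ := rfl
  map_comp _ _ := rfl

variable (R B) in
theorem exists_colimit : ∃ (H : Type u) (_ : CommRing H) (_ : Algebra R H) (π : H →ₐ[R] B)
    (ι : ∀ o : EtObj R B, o.Ring →ₐ[R] H),
    (∀ o, π.comp (ι o) = o.φ) ∧ (∀ {o o'} (f : o ⟶ o'), (ι o').comp (toHom f) = ι o) ∧
    (∀ h, ∃ o x, ι o x = h) ∧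
    (∀ o x, ι o x = 0 → ∃ (o' : EtObj R B) (f : o ⟶ o'), toHom f x = 0) := by
  let F := functor R B
  let H := Limits.colimit F
  let j (o : EtObj R B) : o.Ring →+* H := (Limits.colimit.ι F o).hom
  have hj {o o' : EtObj R B} (f : o ⟶ o') : (j o').comp (toHom f).toRingHom = j o := by
    have := Limits.colimit.w F f
    exact congrArg CommRingCat.Hom.hom this
  have hjj (o o' : EtObj R B) : (j o).comp (algebraMap R _) = (j o').comp (algebraMap R _) := by
    rw [← hj (IsFiltered.leftToMax o o'), ← hj (IsFiltered.rightToMax o o'), RingHom.comp_assoc,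
      RingHom.comp_assoc]
    congr 1
    rw [AlgHom.toRingHom_eq_coe, AlgHom.toRingHom_eq_coe, AlgHom.comp_algebraMap,
      AlgHom.comp_algebraMap]
  let o₀ : EtObj R B := Classical.choice IsFiltered.nonempty
  let : Algebra R H := ((j o₀).comp (algebraMap R _)).toAlgebra
  let c : Limits.Cocone F := ⟨CommRingCat.of B, 
    { app := fun o ↦ CommRingCat.ofHom o.φ.toRingHom
      naturality := fun o o' f ↦ by
        ext x
        exact DFunLike.congr_fun (toHom_comm f) x }⟩
  let p : H →+* B := (Limits.colimit.desc F c).hom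
  have hp (o : EtObj R B) : p.comp (j o) = o.φ.toRingHom :=
    congrArg CommRingCat.Hom.hom (Limits.colimit.ι_desc c o)
  refine ⟨H, inferInstance, inferInstance, { p with commutes' := fun r ↦ ?_ },
    fun o ↦ { j o with commutes' := fun r ↦ ?_ }, ?_, ?_, ?_, ?_⟩
  · change (p.comp (j o₀)) (algebraMap R _ r) = _
    rw [hp]
    exact o₀.φ.commutes r
  · exact DFunLike.congr_fun (hjj o o₀) r
  · intro o
    ext x
    exact DFunLike.congr_fun (hp o) x
  · intro o o' f
    apply AlgHom.ext
    intro x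
    exact DFunLike.congr_fun (hj f) x
  · intro h
    obtain ⟨o, x, hx⟩ := Limits.Concrete.colimit_exists_rep F h
    exact ⟨o, x, hx⟩
  · intro o x hx
    have hx' : Limits.colimit.ι F o x = Limits.colimit.ι F o 0 := by
      rw [map_zero]; exact hx
    obtain ⟨o', f, hf⟩ := ((Limits.colimit.isColimit F).eq_iff' x 0).mp hx'
    refine ⟨o', f, ?_⟩
    rw [map_zero] at hf
    exact hf

end EtObj

namespace EtObj

variable {R B : Type u} [CommRing R] [CommRing B] [Algebra R B]

lemma etale_trans (R O S : Type u) [CommRing R] [CommRing O] [CommRing S] [Algebra R O]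
    [Algebra O S] [Algebra.Etale R O] [Algebra.Etale O S] :
    ∃ (_ : Algebra R S), algebraMap R S = (algebraMap O S).comp (algebraMap R O) ∧
      Algebra.Etale R S := by
  let : Algebra R S := ((algebraMap O S).comp (algebraMap R O)).toAlgebra
  have : IsScalarTower R O S := .of_algebraMap_eq' rfl
  exact ⟨inferInstance, rfl, .comp R O S⟩

lemma exists_ext {H : Type u} [CommRing H] [Algebra R H] (π : H →ₐ[R] B)
    (ι : ∀ o : EtObj R B, o.Ring →ₐ[R] H) (h1 : ∀ o, π.comp (ι o) = o.φ)
    (h2 : ∀ {o o'} (f : o ⟶ o'), (ι o').comp (toHom f) = ι o)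
    (o : EtObj R B) (S : Type u) [CommRing S] [Algebra o.Ring S] [Algebra.Etale o.Ring S]
    (χ : S →+* B) (hχ : ∀ x, χ (algebraMap o.Ring S x) = o.φ x) :
    ∃ θ : S →+* H, (∀ x, θ (algebraMap o.Ring S x) = ι o x) ∧ ∀ x, π (θ x) = χ x := by
  obtain ⟨_, hRS, _⟩ := etale_trans R o.Ring S
  have hcomm (r : R) : χ (algebraMap R S r) = algebraMap R B r := by
    rw [hRS]
    exact (hχ _).trans (o.φ.commutes r)
  let χ' : S →ₐ[R] B := { χ with commutes' := hcomm }
  let s : o.Ring →ₐ[R] S :=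
    { algebraMap o.Ring S with commutes' := fun r ↦ (DFunLike.congr_fun hRS r).symm }
  obtain ⟨p, e, he⟩ := exists_obj S χ'
  let f : o ⟶ p := ⟨(e : S →ₐ[R] p.Ring).comp s, by
    rw [← AlgHom.comp_assoc, he]
    apply AlgHom.ext
    intro x
    exact hχ x⟩
  refine ⟨((ι p).comp (e : S →ₐ[R] p.Ring)).toRingHom, fun x ↦ ?_, fun x ↦ ?_⟩
  · exact DFunLike.congr_fun (h2 f) x
  · change (π.comp (ι p)) (e x) = _
    rw [h1]
    exact DFunLike.congr_fun he x

lemma exists_fin {H : Type u} [CommRing H] [Algebra R H]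
    (ι : ∀ o : EtObj R B, o.Ring →ₐ[R] H)
    (h2 : ∀ {o o'} (f : o ⟶ o'), (ι o').comp (toHom f) = ι o)
    (h3 : ∀ h, ∃ o x, ι o x = h) (l : ℕ) (x : Fin l → H) :
    ∃ (o : EtObj R B) (y : Fin l → o.Ring), ∀ i, ι o (y i) = x i := by
  classical
  choose o y hy using h3
  obtain ⟨p, hp⟩ := IsFiltered.sup_objs_exists (Finset.univ.image fun i ↦ o (x i))
  have hp' (i) : Nonempty (o (x i) ⟶ p) := hp (by simp)
  let f (i) := Classical.choice (hp' i)
  refine ⟨p, fun i ↦ toHom (f i) (y (x i)), fun i ↦ ?_⟩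
  rw [← hy (x i)]
  exact DFunLike.congr_fun (h2 (f i)) _

lemma flat_colimit {H : Type u} [CommRing H] [Algebra R H]
    (ι : ∀ o : EtObj R B, o.Ring →ₐ[R] H)
    (h2 : ∀ {o o'} (f : o ⟶ o'), (ι o').comp (toHom f) = ι o)
    (h3 : ∀ h, ∃ o x, ι o x = h)
    (h4 : ∀ o x, ι o x = 0 → ∃ (o' : EtObj R B) (f : o ⟶ o'), toHom f x = 0) :
    Module.Flat R H := by
  refine Module.Flat.of_forall_isTrivialRelation fun {l f x} h ↦ ?_
  obtain ⟨o, y, hy⟩ := exists_fin ι h2 h3 l x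
  obtain ⟨o', g, hg⟩ := h4 o (∑ i, f i • y i) (by simpa [hy] using h)
  have hg' : ∑ i, f i • toHom g (y i) = 0 := by simpa using hg
  obtain ⟨k, a, z, hz, ha⟩ := Module.Flat.isTrivialRelation_of_sum_smul_eq_zero hg'
  refine ⟨k, a, fun j ↦ ι o' (z j), fun i ↦ ?_, ha⟩
  rw [← hy, ← h2 g, AlgHom.comp_apply]
  refine (congrArg (ι o') (hz i)).trans ?_
  simp

lemma exists_poly {H : Type u} [CommRing H] [Algebra R H]
    (ι : ∀ o : EtObj R B, o.Ring →ₐ[R] H)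
    (h2 : ∀ {o o'} (f : o ⟶ o'), (ι o').comp (toHom f) = ι o)
    (h3 : ∀ h, ∃ o x, ι o x = h) (f : Polynomial H) (hf : f.Monic) :
    ∃ (o : EtObj R B) (f₀ : Polynomial o.Ring), f₀.Monic ∧ f₀.map (ι o).toRingHom = f := by
  obtain ⟨o, y, hy⟩ := exists_fin ι h2 h3 (f.natDegree + 1) (fun i ↦ f.coeff i)
  have : f ∈ Polynomial.lifts (ι o).toRingHom := by
    rw [Polynomial.lifts_iff_coeff_lifts]
    intro n
    by_cases h : n < f.natDegree + 1
    · exact ⟨y ⟨n, h⟩, hy ⟨n, h⟩⟩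
    · rw [Polynomial.coeff_eq_zero_of_natDegree_lt (by omega)]
      exact ⟨0, map_zero _⟩
  obtain ⟨g, h, -, hg⟩ := Polynomial.lifts_and_natDegree_eq_and_monic this hf
  exact ⟨o, g, hg, h⟩

theorem exists_flat_henselian (K : Ideal R) [hB : HenselianRing B (K.map (algebraMap R B))] :
    ∃ (H : Type u) (_ : CommRing H) (_ : Algebra R H) (_ : H →ₐ[R] B), Module.Flat R H ∧
      HenselianRing H (K.map (algebraMap R H)) := by
  obtain ⟨H, _, _, π, ι, h1, h2, h3, h4⟩ := exists_colimit R B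
  refine ⟨H, inferInstance, inferInstance, π, flat_colimit ι h2 h3 h4, ?_⟩
  have h1' (o x) : π (ι o x) = o.φ x := DFunLike.congr_fun (h1 o) x
  have hKB : (K.map (algebraMap R H)).map π.toRingHom = K.map (algebraMap R B) := by
    rw [Ideal.map_map, AlgHom.toRingHom_eq_coe, AlgHom.comp_algebraMap]
  have hK (x) (hx : x ∈ K.map (algebraMap R H)) : π x ∈ K.map (algebraMap R B) :=
    hKB ▸ Ideal.mem_map_of_mem π.toRingHom hx
  have hU {b c : B} (hb : IsUnit b) (h : c - b ∈ K.map (algebraMap R B)) : IsUnit c := by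
    have := isLocalHom_of_le_jacobson_bot _ hB.jac
    apply IsUnit.of_map (Ideal.Quotient.mk (K.map (algebraMap R B)))
    rw [Ideal.Quotient.eq.mpr h]
    exact hb.map _
  have P1 (h : H) (hh : IsUnit (π h)) : IsUnit h := by
    obtain ⟨o, x, rfl⟩ := h3 h
    rw [h1'] at hh
    have : Algebra.Etale o.Ring (Localization.Away x) := .of_isLocalizationAway x
    obtain ⟨θ, hθ, -⟩ := exists_ext π ι h1 h2 o (Localization.Away x)
      (IsLocalization.Away.lift (g := o.φ.toRingHom) x hh)
      (fun y ↦ IsLocalization.Away.lift_eq (g := o.φ.toRingHom) x hh y)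
    rw [← hθ]
    exact (IsLocalization.Away.algebraMap_isUnit x).map θ
  have P2 (f : Polynomial H) (hf : f.Monic) (b : B) (hb : (f.map π.toRingHom).eval b = 0)
      (hb' : IsUnit ((f.map π.toRingHom).derivative.eval b)) : ∃ x, f.eval x = 0 ∧ π x = b := by
    obtain ⟨o, f₀, hf₀, rfl⟩ := exists_poly ι h2 h3 f hf
    let P : StandardEtalePair o.Ring :=
      ⟨f₀, hf₀, f₀.derivative, 1, 0, 1, by simp⟩
    let : Algebra o.Ring B := o.φ.toRingHom.toAlgebra
    have hm : f₀.map (algebraMap o.Ring B) =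
        (f₀.map (ι o).toRingHom).map π.toRingHom := by
      rw [Polynomial.map_map]
      congr 1
      exact RingHom.ext fun x ↦ (h1' o x).symm
    have hP : P.HasMap b := by
      constructor
      · rw [← hm] at hb
        simpa [P, Polynomial.aeval_def, Polynomial.eval_map] using hb
      · rw [← hm, Polynomial.derivative_map] at hb'
        simpa [P, Polynomial.aeval_def, Polynomial.eval_map] using hb'
    obtain ⟨θ, hθ, hθ'⟩ := exists_ext π ι h1 h2 o P.Ring (P.lift b hP).toRingHom
      (fun x ↦ (P.lift b hP).commutes x)
    refine ⟨θ P.X, ?_, ?_⟩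
    · have := congrArg θ P.hasMap_X.1
      rw [map_zero, Polynomial.aeval_def, Polynomial.hom_eval₂] at this
      rw [Polynomial.eval_map, ← this]
      congr 1
      exact RingHom.ext fun x ↦ (hθ x).symm
    · rw [hθ']
      exact P.lift_X b hP
  constructor
  · intro x hx
    rw [Ideal.mem_jacobson_bot]
    intro y
    refine P1 _ (hU isUnit_one ?_)
    simpa using Ideal.mul_mem_right (π y) _ (hK x hx)
  · intro f hf a ha hu
    obtain ⟨b, hb, hba⟩ := hB.is_henselian (f.map π.toRingHom) (hf.map _) (π a)
      (by
        have := hK _ ha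
        rw [Polynomial.eval_map]
        have e := Polynomial.eval₂_hom π.toRingHom a (p := f)
        exact e.symm ▸ this)
      (by
        have := hu.map (Ideal.quotientMap (K.map (algebraMap R B)) π.toRingHom
          (Ideal.map_le_iff_le_comap.mp hKB.le))
        rw [Ideal.quotientMap_mk] at this
        convert! this using 2
        rw [Polynomial.derivative_map, Polynomial.eval_map]
        exact Polynomial.eval₂_hom π.toRingHom a)
    have hfa : IsUnit (π (f.derivative.eval a)) := by
      have := isLocalHom_of_le_jacobson_bot _ hB.jac
      apply IsUnit.of_map (Ideal.Quotient.mk (K.map (algebraMap R B)))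
      have := hu.map (Ideal.quotientMap (K.map (algebraMap R B)) π.toRingHom
          (Ideal.map_le_iff_le_comap.mp hKB.le))
      rwa [Ideal.quotientMap_mk] at this
    have key (g : Polynomial H) (hg : IsUnit (π (g.eval a))) :
        IsUnit ((g.map π.toRingHom).eval b) := by
      refine hU hg ?_
      have h := Polynomial.sub_dvd_eval_sub b (π a) (g.map π.toRingHom)
      have h' : (g.map π.toRingHom).eval (π a) = π (g.eval a) := by
        rw [Polynomial.eval_map]; exact Polynomial.eval₂_hom π.toRingHom a
      rw [h'] at h
      exact Ideal.mem_of_dvd _ h hba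
    obtain ⟨x, hx, rfl⟩ := P2 f hf b hb (by rw [Polynomial.derivative_map]; exact key _ hfa)
    refine ⟨x, hx, ?_⟩
    obtain ⟨g, hg⟩ : Polynomial.X - Polynomial.C a ∣ f - Polynomial.C (f.eval a) :=
      Polynomial.X_sub_C_dvd_sub_C_eval
    have hga : g.eval a = f.derivative.eval a := by
      have := congrArg (fun p ↦ (Polynomial.derivative p).eval a) hg
      simpa using this.symm
    have hgx : IsUnit (g.eval x) := by
      refine P1 _ ?_
      have := key g (hga ▸ hfa)
      rw [Polynomial.eval_map] at this
      have e := Polynomial.eval₂_hom π.toRingHom x (p := g)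
      exact e ▸ this
    have hxg : (x - a) * g.eval x = - f.eval a := by
      have := congrArg (fun p ↦ p.eval x) hg
      simp [hx] at this
      exact this.symm
    rw [← Ideal.mul_unit_mem_iff_mem _ hgx, hxg]
    exact neg_mem ha

end EtObj

end EtaleColimit

section HensAux

open TensorProduct IsLocalRing

lemma henselian_of_nilpotent {C : Type u} [CommRing C] (J : Ideal C) (N : ℕ) (h : J ^ N = ⊥) :
    HenselianRing C J := by
  have hz {n : ℕ} (hn : N ≤ n) : J ^ n = ⊥ := le_bot_iff.mp (h ▸ Ideal.pow_le_pow_right hn)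
  have : IsAdicComplete J C :=
    { haus' := fun x hx ↦ by
        have := hx N
        rw [h, Submodule.bot_smul, SModEq.bot] at this
        exact this
      prec' := fun f hf ↦ by
        refine ⟨f N, fun n ↦ ?_⟩
        rcases le_total n N with hn | hn
        · exact hf hn
        · have := (hf hn).symm
          rw [h, Submodule.bot_smul, SModEq.bot] at this
          rw [this] }
  infer_instance

lemma IsHenselization.flat {R B : Type u} [CommRing R] [CommRing B] [Algebra R B] {K : Ideal R}
    (h : IsHenselization K (algebraMap R B)) : Module.Flat R B := by
  have := h.1
  obtain ⟨H, _, _, π, _, hH⟩ := EtObj.exists_flat_henselian (R := R) (B := B) K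
  obtain ⟨g, hg, -⟩ := h.2 H _ hH (algebraMap R H) le_rfl
  have hπ : π.toRingHom.comp g = RingHom.id B := by
    refine (h.2 B _ h.1 (algebraMap R B) le_rfl).unique ?_ (RingHom.id_comp _)
    rw [RingHom.comp_assoc, hg]
    exact π.comp_algebraMap
  let g' : B →ₐ[R] H := { g with commutes' := fun r ↦ DFunLike.congr_fun hg r }
  exact Module.Flat.of_retract (M := H) g'.toLinearMap π.toLinearMap
    (LinearMap.ext fun x ↦ DFunLike.congr_fun hπ x)

lemma hsmooth_forward {A B : Type u} [CommRing A] [CommRing B] [Algebra A B]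
    (I : Ideal A) (h : IsHSmooth (algebraMap A B) I) :
    IsHfp (algebraMap A B) I ∧ IsHFormallySmooth (algebraMap A B) I ∧ Module.Flat A B := by
  obtain ⟨R, _, _, ρ, hR, hρ, hH⟩ := h
  refine ⟨⟨R, inferInstance, algebraMap A R, ρ, ?_, hρ, hH⟩, ?_, ?_⟩
  · rw [RingHom.finitePresentation_algebraMap]
    infer_instance
  · intro E C _ _ e c p u hp hu hN hsurj hM
    obtain ⟨N, -, hNe, hNc⟩ := hN
    obtain ⟨M, -, hM⟩ := hM
    algebraize [e, c]
    let p' : E →ₐ[A] C := { p with commutes' := fun r ↦ DFunLike.congr_fun hp r }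
    let u' : R →ₐ[A] C := { u.comp ρ with
      commutes' := fun r ↦ by
        refine Eq.trans ?_ (DFunLike.congr_fun hu r)
        exact congrArg u (DFunLike.congr_fun hρ r) }
    have hk : IsNilpotent (RingHom.ker (p' : E →+* C)) := ⟨M, hM⟩
    let w : R →ₐ[A] E := Algebra.FormallySmooth.liftOfSurjective u' p' hsurj hk
    have hw (x) : p (w x) = u (ρ x) :=
      Algebra.FormallySmooth.liftOfSurjective_apply u' p' hsurj hk x
    have hE : HenselianRing E (I.map e) := henselian_of_nilpotent _ N (by rw [← Ideal.map_pow, hNe])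
    have hC : HenselianRing C (I.map c) := henselian_of_nilpotent _ N (by rw [← Ideal.map_pow, hNc])
    obtain ⟨v, hv, -⟩ := hH.2 E _ hE w.toRingHom (by
      rw [Ideal.map_map, AlgHom.toRingHom_eq_coe, AlgHom.comp_algebraMap]; exact le_rfl)
    have hv' (x) : v (ρ x) = w x := DFunLike.congr_fun hv x
    refine ⟨v, ?_, ?_⟩
    · rw [← hρ, ← RingHom.comp_assoc, hv]
      exact w.comp_algebraMap
    · refine (hH.2 C _ hC (u.comp ρ) ?_).unique ?_ rfl
      · rw [Ideal.map_map, RingHom.comp_assoc, hρ, hu]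
      · ext x
        simp [hv', hw]
  · algebraize [ρ]
    have : IsScalarTower A R B := .of_algebraMap_eq' hρ.symm
    have : Module.Flat R B := hH.flat
    exact Module.Flat.trans A R B

lemma flat_descent {A S T : Type u} [CommRing A] [CommRing S] [CommRing T] [Algebra A S]
    [Algebra A T] [Algebra S T] [IsScalarTower A S T] [Module.FaithfullyFlat S T]
    [Module.Flat A T] : Module.Flat A S := by
  rw [Module.Flat.iff_lTensor_preserves_injective_linearMap]
  intro N P _ _ _ _ f hf
  let F : S ⊗[A] N →ₗ[S] S ⊗[A] P := TensorProduct.AlgebraTensorModule.lTensor S S f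
  have hF : Function.Injective F := by
    rw [← Module.FaithfullyFlat.lTensor_injective_iff_injective S T]
    have h1 := TensorProduct.AlgebraTensorModule.lTensor_comp_cancelBaseChange A S T (M := T) f
    have h2 : Function.Injective (f.lTensor T) := Module.Flat.lTensor_preserves_injective_linearMap f hf
    intro x y hxy
    apply (TensorProduct.AlgebraTensorModule.cancelBaseChange A S T T N).injective
    apply h2
    have hx := DFunLike.congr_fun h1 x
    have hy := DFunLike.congr_fun h1 y
    refine hx.trans (Eq.trans ?_ hy.symm)
    exact congrArg (TensorProduct.AlgebraTensorModule.cancelBaseChange A S T T P) hxy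
  exact hF

open Algebra in
lemma isSmoothAt_of_fiber {R S : Type u} [CommRing R] [CommRing S] [Algebra R S]
    [Algebra.FinitePresentation R S] (p : Ideal R) (q : Ideal S)
    [p.IsPrime] [q.IsPrime] [q.LiesOver p] [Module.Flat R (Localization.AtPrime q)]
    [FormallySmooth p.ResidueField (p.Fiber S)] :
    Algebra.IsSmoothAt R q := by
  let Rp := Localization.AtPrime p
  let Sp := Localization (algebraMapSubmonoid S p.primeCompl)
  let Sq := Localization.AtPrime q
  let := Localization.AtPrime.algebraOfLiesOver p q
  have : Module.Flat Rp Sq := by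
    rw [Module.flat_iff_of_isLocalization (Localization.AtPrime p) p.primeCompl]
    infer_instance
  let f : Sp →ₐ[S] Sq := IsLocalization.liftAlgHom (M := algebraMapSubmonoid S p.primeCompl)
        (f := Algebra.ofId _ _) (by
      rintro ⟨_, x, hx, rfl⟩
      simpa using! IsLocalization.map_units (M := q.primeCompl) Sq ⟨algebraMap _ _ x,
        by simp_all [q.over_def p]⟩)
  algebraize [f.toRingHom]
  have : IsScalarTower R Sp Sq := .to₁₃₄ _ S _ _
  have : IsScalarTower Rp Sp Sq := .of_algebraMap_eq' <| by
    apply IsLocalization.ringHom_ext p.primeCompl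
    simp only [RingHom.comp_assoc, ← IsScalarTower.algebraMap_eq]
  have : IsLocalization (algebraMapSubmonoid Sp q.primeCompl) Sq :=
    .isLocalization_of_submonoid_le _ _ (algebraMapSubmonoid S p.primeCompl) _
    (by rintro _ ⟨x, hx, rfl⟩; simp_all [q.over_def p])
  have : FinitePresentation Rp Sp := by
    have : Algebra.IsPushout R Rp S Sp :=
      .symm <| Algebra.isPushout_of_isLocalization p.primeCompl _ _ _
    exact .equiv (Algebra.IsPushout.equiv R Rp S Sp)
  have : FormallySmooth (ResidueField Rp) ((ResidueField Rp) ⊗[Rp] Sq) := by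
    let : Algebra S ((ResidueField Rp) ⊗[R] S) := TensorProduct.rightAlgebra
    have : FormallySmooth (ResidueField Rp) (((ResidueField Rp) ⊗[R] S) ⊗[S] Sq) :=
      .comp _ ((ResidueField Rp) ⊗[R] S) _
    let e : (ResidueField Rp) ⊗[R] S ≃ₐ[S] S ⊗[R] (ResidueField Rp) :=
      { __ := Algebra.TensorProduct.comm _ _ _, commutes' _ := rfl }
    let e' : ((ResidueField Rp) ⊗[R] S) ⊗[S] Sq ≃ₐ[R] (ResidueField Rp) ⊗[Rp] Sq :=
      ((Algebra.TensorProduct.comm _ _ _).restrictScalars R).trans <|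
      ((Algebra.TensorProduct.congr (.refl (R := S)) e).restrictScalars R).trans <|
      ((Algebra.TensorProduct.cancelBaseChange _ _ S _ _).restrictScalars R).trans <|
      (Algebra.TensorProduct.comm _ _ _).trans (Algebra.TensorProduct.equivOfCompatibleSMul ..)
    have : e'.toAlgHom.comp (IsScalarTower.toAlgHom R p.ResidueField _) =
        IsScalarTower.toAlgHom _ _ _ := by ext
    let e'' : ((ResidueField Rp) ⊗[R] S) ⊗[S] Sq ≃ₐ[(ResidueField Rp)] (ResidueField Rp) ⊗[Rp] Sq :=
      { __ := e', commutes' r := DFunLike.congr_fun this r }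
    exact .of_equiv e''
  have := FormallySmooth.of_formallySmooth_residueField_tensor
    (R := Rp) (S := Sq) (P := Sp) (algebraMapSubmonoid _ q.primeCompl)
  exact .comp R Rp Sq

lemma flat_at {A R B : Type u} [CommRing A] [CommRing R] [CommRing B] [Algebra A R]
    [Algebra R B] [Algebra A B] [IsScalarTower A R B] [Module.Flat A B] {K : Ideal R}
    (h : IsHenselization K (algebraMap R B)) (q : Ideal R) [q.IsPrime] (hq : K ≤ q) :
    Module.Flat A (Localization.AtPrime q) := by
  have := h.flat
  have hbot : HenselianRing (R ⧸ q) ⊥ := henselian_of_nilpotent ⊥ 1 (pow_one _)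
  obtain ⟨σ, hσ, -⟩ := h.2 (R ⧸ q) ⊥ hbot (Ideal.Quotient.mk q) (by
    rw [le_bot_iff, Ideal.map_eq_bot_iff_le_ker, Ideal.mk_ker]; exact hq)
  let Q : Ideal B := RingHom.ker σ
  have : Q.IsPrime := RingHom.ker_isPrime σ
  have : Q.LiesOver q := ⟨by
    rw [Ideal.under, RingHom.comap_ker, hσ, Ideal.mk_ker]⟩
  let := Localization.AtPrime.algebraOfLiesOver q Q
  have : IsScalarTower A (Localization.AtPrime q) (Localization.AtPrime Q) :=
    .of_algebraMap_eq' (by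
      rw [IsScalarTower.algebraMap_eq A R (Localization.AtPrime q), ← RingHom.comp_assoc,
        ← IsScalarTower.algebraMap_eq R, IsScalarTower.algebraMap_eq A B (Localization.AtPrime Q),
        IsScalarTower.algebraMap_eq A R B, ← RingHom.comp_assoc,
        ← IsScalarTower.algebraMap_eq R B])
  have : Module.Flat A (Localization.AtPrime Q) := .trans A B _
  have : Module.FaithfullyFlat (Localization.AtPrime q) (Localization.AtPrime Q) :=
    .of_flat_of_isLocalHom
  exact flat_descent (T := Localization.AtPrime Q)

lemma fiber_smooth {A R B : Type u} [CommRing A] [CommRing R] [CommRing B] [Algebra A R]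
    [Algebra R B] [Algebra A B] [IsScalarTower A R B] (I : Ideal A)
    (h : IsHenselization (I.map (algebraMap A R)) (algebraMap R B))
    (hs : IsHFormallySmooth (algebraMap A B) I) (p : Ideal A) [p.IsPrime] (hp : I ≤ p) :
    Algebra.FormallySmooth p.ResidueField (p.Fiber R) := by
  refine .of_comp_surjective fun E _ _ J hJ g ↦ ?_
  let : Algebra A E := ((algebraMap p.ResidueField E).comp (algebraMap A _)).toAlgebra
  have : IsScalarTower A p.ResidueField E := .of_algebraMap_eq' rfl
  let r : R →ₐ[A] p.Fiber R := Algebra.TensorProduct.includeRight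
  let gr : R →ₐ[A] E ⧸ J := (g.restrictScalars A).comp r
  have hker : I.map (algebraMap A p.ResidueField) = ⊥ := by
    rw [Ideal.map_eq_bot_iff_le_ker, Ideal.ker_algebraMap_residueField]
    exact hp
  have hIE : I.map (algebraMap A E) = ⊥ := by
    rw [IsScalarTower.algebraMap_eq A p.ResidueField E, ← Ideal.map_map, hker, Ideal.map_bot]
  have hIC : I.map (algebraMap A (E ⧸ J)) = ⊥ := by
    rw [IsScalarTower.algebraMap_eq A E (E ⧸ J), ← Ideal.map_map, hIE, Ideal.map_bot]
  have hbot : HenselianRing (E ⧸ J) ⊥ := henselian_of_nilpotent ⊥ 1 (pow_one _)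
  obtain ⟨u, hu, -⟩ := h.2 (E ⧸ J) ⊥ hbot gr.toRingHom (by
    rw [Ideal.map_map, AlgHom.toRingHom_eq_coe, AlgHom.comp_algebraMap, hIC])
  obtain ⟨v, hv, hvu⟩ := hs E (E ⧸ J) (algebraMap A E) (algebraMap A (E ⧸ J))
    (Ideal.Quotient.mk J) u rfl (by
      rw [IsScalarTower.algebraMap_eq A R B, ← RingHom.comp_assoc, hu]
      exact gr.comp_algebraMap) ⟨1, le_rfl, by simpa using hIE, by simpa using hIC⟩
      Ideal.Quotient.mk_surjective ⟨2, by norm_num, by rw [Ideal.mk_ker, hJ]⟩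
  let v' : R →ₐ[A] E := { v.comp (algebraMap R B) with
    commutes' := fun a ↦ by
      refine Eq.trans ?_ (DFunLike.congr_fun hv a)
      exact congrArg v (IsScalarTower.algebraMap_apply A R B a).symm }
  refine ⟨Algebra.TensorProduct.lift (Algebra.ofId _ E) v' fun _ _ ↦ .all _ _, ?_⟩
  apply Algebra.TensorProduct.ext
  · ext
  · apply AlgHom.ext
    intro x
    have h1 := DFunLike.congr_fun hvu (algebraMap R B x)
    have h2 := DFunLike.congr_fun hu x
    have h3 : (Algebra.TensorProduct.lift (Algebra.ofId p.ResidueField E) v'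
      fun _ _ ↦ .all _ _) (1 ⊗ₜ x) = v' x := by simp
    change Ideal.Quotient.mk J ((Algebra.TensorProduct.lift (Algebra.ofId p.ResidueField E) v'
      fun _ _ ↦ .all _ _) (1 ⊗ₜ x)) = _
    rw [h3]
    exact h1.trans h2

lemma hsmooth_backward {A B : Type u} [CommRing A] [CommRing B] [Algebra A B]
    (I : Ideal A) (h : IsHfp (algebraMap A B) I) (hs : IsHFormallySmooth (algebraMap A B) I)
    [Module.Flat A B] : IsHSmooth (algebraMap A B) I := by
  obtain ⟨R, _, ψ, ρ, hψ, hρ, hH⟩ := h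
  let : Algebra A R := ψ.toAlgebra
  let : Algebra R B := ρ.toAlgebra
  have : Algebra.FinitePresentation A R := hψ
  have : IsScalarTower A R B := .of_algebraMap_eq' hρ.symm
  let K : Ideal R := I.map (algebraMap A R)
  have hH' : IsHenselization K (algebraMap R B) := hH
  have hq (q : PrimeSpectrum R) (hq : K ≤ q.asIdeal) : q ∈ Algebra.smoothLocus A R := by
    have := flat_at (A := A) hH' q.asIdeal hq
    have := fiber_smooth I hH' hs (q.asIdeal.under A) (Ideal.map_le_iff_le_comap.mp hq)
    exact isSmoothAt_of_fiber (q.asIdeal.under A) q.asIdeal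
  obtain ⟨J, hJ⟩ := (PrimeSpectrum.isClosed_iff_zeroLocus_ideal _).mp
    (Algebra.isOpen_smoothLocus (R := A) (A := R)).isClosed_compl
  have hJK : J ⊔ K = ⊤ := by
    by_contra hne
    obtain ⟨m, hm, hle⟩ := Ideal.exists_le_maximal _ hne
    have h1 := hq ⟨m, hm.isPrime⟩ (le_sup_right.trans hle)
    have h2 : (⟨m, hm.isPrime⟩ : PrimeSpectrum R) ∈ (Algebra.smoothLocus A R)ᶜ := by
      rw [hJ]
      exact le_sup_left.trans hle
    exact h2 h1
  obtain ⟨j, hj, k, hk, hjk⟩ := Submodule.mem_sup.mp ((Ideal.eq_top_iff_one _).mp hJK)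
  have hsm : Algebra.Smooth A (Localization.Away j) := by
    rw [← Algebra.basicOpen_subset_smoothLocus_iff_smooth]
    intro x hx
    by_contra hx'
    have : x ∈ PrimeSpectrum.zeroLocus (J : Set R) := hJ ▸ hx'
    exact hx (this hj)
  have hunit {C : Type u} [CommRing C] (L : Ideal C) (hC : HenselianRing C L) (f : R →+* C)
      (hf : K.map f ≤ L) : IsUnit (f j) := by
    have := isLocalHom_of_le_jacobson_bot _ hC.jac
    apply IsUnit.of_map (Ideal.Quotient.mk L)
    have h1 : f j = 1 - f k := by rw [← map_one f, ← hjk]; simp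
    have h2 : Ideal.Quotient.mk L (f k) = 0 :=
      Ideal.Quotient.eq_zero_iff_mem.mpr (hf (Ideal.mem_map_of_mem f hk))
    rw [h1, map_sub, h2, map_one, sub_zero]
    exact isUnit_one
  have hρj : IsUnit (ρ j) := hunit _ hH.1 ρ le_rfl
  let ρ' : Localization.Away j →+* B := IsLocalization.Away.lift j hρj
  have hρ' : ρ'.comp (algebraMap R _) = ρ := IsLocalization.Away.lift_comp j hρj
  have hAR : ρ'.comp (algebraMap A (Localization.Away j)) = algebraMap A B := by
    rw [IsScalarTower.algebraMap_eq A R, ← RingHom.comp_assoc, hρ']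
    exact hρ
  refine ⟨Localization.Away j, inferInstance, inferInstance, ρ', hsm, hAR, ?_, ?_⟩
  · rw [Ideal.map_map, hAR, ← hρ, ← Ideal.map_map]
    exact hH.1
  · intro C _ L hC f hf
    obtain ⟨g, hg, hg'⟩ := hH.2 C L hC (f.comp (algebraMap R _)) (by
      rw [← Ideal.map_map]
      refine le_trans (le_of_eq ?_) hf
      rw [IsScalarTower.algebraMap_eq A R, ← Ideal.map_map]
      rfl)
    refine ⟨g, ?_, ?_⟩
    · apply IsLocalization.ringHom_ext (Submonoid.powers j)
      rw [RingHom.comp_assoc, hρ', hg]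
    · intro g₁ h1
      apply hg'
      rw [← hρ', ← RingHom.comp_assoc, h1]

end HensAux

/-- `B` is hfp, h-formally smooth and flat over the Henselian pair `(A, I)` iff `B` is
h-smooth over `A`. -/
theorem isHSmooth_iff_isHfp_isHFormallySmooth_flat
    {A B : Type u} [CommRing A] [CommRing B] [Algebra A B]
    (I : Ideal A) [HenselianRing A I]
    [HenselianRing B (I.map (algebraMap A B))] :
    (IsHfp (algebraMap A B) I ∧ IsHFormallySmooth (algebraMap A B) I ∧ Module.Flat A B) ↔
      IsHSmooth (algebraMap A B) I := by
  exact ⟨fun ⟨h1, h2, _⟩ ↦ hsmooth_backward I h1 h2, hsmooth_forward I⟩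
end

section
/- Let (A, I) be a Henselian pair and let B be an A-algebra which is hfp over A with respect to I and which is flat as an A-module. Then there exist a finitely presented A-algebra S which is flat as an A-module and an A-algebra homomorphism S → B exhibiting B as a Henselization of the pair (S, I·S). -/
universe u

section PartH
open Polynomial

lemma henselianRing_of_pow_eq_bot {Q : Type u} [CommRing Q] (K : Ideal Q) (n : ℕ)
    (h : K ^ n = ⊥) : HenselianRing Q K := by
  have hle : ∀ m, n ≤ m → K ^ m = ⊥ := fun m hm => by
    rw [eq_bot_iff, ← h]; exact Ideal.pow_le_pow_right hm
  have : IsHausdorff K Q := ⟨fun x hx => by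
    have := hx n
    rw [h] at this
    simpa [SModEq.zero] using this⟩
  have : IsPrecomplete K Q := ⟨fun f hf => by
    refine ⟨f n, fun m => ?_⟩
    rcases le_total m n with hmn | hmn
    · exact hf hmn
    · have := hf hmn
      rw [h] at this
      rw [hle m hmn]
      exact this.symm⟩
  have : IsAdicComplete K Q := ⟨⟩
  infer_instance

section red
variable {ι : Type u} (F : Filter ι) (C : ι → Type u) [∀ i, CommRing (C i)]
  (J : ∀ i, Ideal (C i))

/-- families eventually lying in given ideals -/
def evIdeal : Ideal (∀ i, C i) where
  carrier := {x | ∀ᶠ i in F, x i ∈ J i}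
  add_mem' := fun ha hb => by
    filter_upwards [ha, hb] with i h1 h2 using (J i).add_mem h1 h2
  zero_mem' := Filter.Eventually.of_forall fun i => (J i).zero_mem
  smul_mem' := fun c x hx => by
    filter_upwards [hx] with i h1 using (J i).mul_mem_left _ h1

lemma mem_evIdeal {x : ∀ i, C i} : x ∈ evIdeal F C J ↔ ∀ᶠ i in F, x i ∈ J i := Iff.rfl

lemma evIdeal_mem_map {x : ∀ i, C i}
    (hx : Ideal.Quotient.mk (evIdeal F C (fun _ => ⊥)) x ∈
      (evIdeal F C J).map (Ideal.Quotient.mk (evIdeal F C (fun _ => ⊥)))) :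
    ∀ᶠ i in F, x i ∈ J i := by
  rw [Ideal.mem_map_iff_of_surjective _ Ideal.Quotient.mk_surjective] at hx
  obtain ⟨y, hy, hxy⟩ := hx
  rw [Ideal.Quotient.eq] at hxy
  filter_upwards [(mem_evIdeal F C J).1 hy, (mem_evIdeal F C _).1 hxy] with i h1 h2
  have : y i - x i = 0 := h2
  rwa [← sub_eq_zero.1 this]

lemma henselianRing_evIdeal (hJ : ∀ i, HenselianRing (C i) (J i)) :
    HenselianRing ((∀ i, C i) ⧸ evIdeal F C (fun _ => ⊥))
      ((evIdeal F C J).map (Ideal.Quotient.mk (evIdeal F C (fun _ => ⊥)))) := by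
  classical
  constructor
  · intro x hx
    obtain ⟨x, rfl⟩ := Ideal.Quotient.mk_surjective x
    have hx := evIdeal_mem_map F C J hx
    rw [Ideal.mem_jacobson_bot]
    intro y
    obtain ⟨y, rfl⟩ := Ideal.Quotient.mk_surjective y
    have : ∀ i, ∃ v : C i, x i ∈ J i → (x i * y i + 1) * v = 1 := fun i => by
      by_cases h : x i ∈ J i
      · have := (Ideal.mem_jacobson_bot.1 ((hJ i).jac h)) (y i)
        obtain ⟨v, hv⟩ := this.exists_right_inv
        exact ⟨v, fun _ => hv⟩
      · exact ⟨0, fun h' => (h h').elim⟩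
    choose v hv using this
    rw [← map_mul, ← map_one (Ideal.Quotient.mk _), ← map_add]
    refine IsUnit.of_mul_eq_one (Ideal.Quotient.mk _ v) ?_
    rw [← map_mul, ← map_one (Ideal.Quotient.mk _), Ideal.Quotient.eq]
    show ∀ᶠ i in F, _
    filter_upwards [hx] with i h
    simp [hv i h]
  · intro f hf a₀ h1 h2
    obtain ⟨p, hp, -, hpm⟩ := Polynomial.lifts_and_natDegree_eq_and_monic
      (f := Ideal.Quotient.mk (evIdeal F C (fun _ => ⊥))) (p := f)
      (by rw [Polynomial.lifts_iff_coeff_lifts]; intro n; exact Ideal.Quotient.mk_surjective _) hf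
    obtain ⟨a, rfl⟩ := Ideal.Quotient.mk_surjective a₀
    subst hp
    rw [Polynomial.eval_map, Polynomial.eval₂_hom] at h1
    rw [Polynomial.derivative_map, Polynomial.eval_map, Polynomial.eval₂_hom] at h2
    have h1 := evIdeal_mem_map F C J h1
    obtain ⟨v, hv⟩ := h2.exists_right_inv
    obtain ⟨v, rfl⟩ := Ideal.Quotient.mk_surjective v
    obtain ⟨v, rfl⟩ := Ideal.Quotient.mk_surjective v
    rw [← map_mul, ← map_mul, ← map_one (Ideal.Quotient.mk _), ← map_one (Ideal.Quotient.mk _),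
      Ideal.Quotient.eq, ← map_sub] at hv
    have h3 := evIdeal_mem_map F C J hv
    have hev : ∀ (q : (∀ i, C i)[X]) (b : ∀ i, C i) (i : ι),
        q.eval b i = (q.map (Pi.evalRingHom C i)).eval (b i) := fun q b i => by
      rw [Polynomial.eval_map]
      exact (Polynomial.hom_eval₂ q (RingHom.id _) (Pi.evalRingHom C i) b)
    have : ∀ i, ∃ b : C i, (p.eval a i ∈ J i → (p.derivative.eval a * v - 1) i ∈ J i →
        (p.map (Pi.evalRingHom C i)).eval b = 0 ∧ b - a i ∈ J i) := fun i => by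
      by_cases h : p.eval a i ∈ J i ∧ (p.derivative.eval a * v - 1) i ∈ J i
      · obtain ⟨b, hb, hb'⟩ := (hJ i).is_henselian (p.map (Pi.evalRingHom C i)) (hpm.map _) (a i)
          (by rw [← hev]; exact h.1) (by
            refine IsUnit.of_mul_eq_one (Ideal.Quotient.mk _ (v i)) ?_
            rw [Polynomial.derivative_map, ← hev, ← map_mul, ← map_one (Ideal.Quotient.mk _),
              Ideal.Quotient.eq]
            exact h.2)
        exact ⟨b, fun _ _ => ⟨hb, hb'⟩⟩
      · exact ⟨0, fun h1 h2 => (h ⟨h1, h2⟩).elim⟩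
    choose b hb using this
    refine ⟨Ideal.Quotient.mk _ b, ?_, ?_⟩
    · rw [Polynomial.IsRoot, Polynomial.eval_map, Polynomial.eval₂_hom,
        Ideal.Quotient.eq_zero_iff_mem]
      show ∀ᶠ i in F, _
      filter_upwards [h1, h3] with i h1 h3
      rw [hev]
      exact (hb i h1 h3).1
    · rw [← map_sub]
      refine Ideal.mem_map_of_mem _ ?_
      show ∀ᶠ i in F, _
      filter_upwards [h1, h3] with i h1 h3
      exact (hb i h1 h3).2
end red

lemma krull_torsion {T : Type u} [CommRing T] [IsNoetherianRing T] (L : Ideal T) (x : T) (n : ℕ)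
    (h : ∀ m, n ≤ m → x ∈ L ^ m) : ∃ k ∈ L, (1 - k) * x = 0 := by
  have hin : x ∈ (⨅ i : ℕ, L ^ i • ⊤ : Submodule T T) := by
    rw [Submodule.mem_iInf]
    intro m
    have := Ideal.pow_le_pow_right (le_max_right n m) (h _ (le_max_left n m))
    simpa using this
  rw [Ideal.mem_iInf_smul_pow_eq_bot_iff] at hin
  obtain ⟨r, hr⟩ := hin
  refine ⟨r, r.2, ?_⟩
  rw [smul_eq_mul] at hr
  rw [sub_mul, one_mul, hr, sub_self]

lemma exists_henselian_detecting {Q : Type u} [CommRing Q] (K : Ideal Q) :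
    ∃ (C : Type u) (_ : CommRing C) (J : Ideal C) (h : Q →+* C), HenselianRing C J ∧
      K.map h ≤ J ∧ ∀ x, h x = 0 → ∃ k ∈ K, (1 - k) * x = 0 := by
  classical
  let ι := Finset Q × ℕ
  let S : Finset Q → Subalgebra ℤ Q := fun s => Algebra.adjoin ℤ (s : Set Q)
  let L : ∀ s, Ideal (S s) := fun s => K.comap (S s).val
  let C : ι → Type u := fun i => S i.1 ⧸ (L i.1 ^ i.2)
  let J : ∀ i : ι, Ideal (C i) := fun i => (L i.1).map (Ideal.Quotient.mk _)
  have hJ : ∀ i, HenselianRing (C i) (J i) := fun i => by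
    refine henselianRing_of_pow_eq_bot _ i.2 ?_
    rw [← Ideal.map_pow, Ideal.map_quotient_self]
  let F : Filter ι := Filter.atTop
  have hmem : ∀ x : Q, ∀ᶠ i : ι in F, x ∈ S i.1 := fun x => by
    filter_upwards [Filter.eventually_ge_atTop (({x}, 0) : ι)] with i hi
    exact Algebra.subset_adjoin (hi.1 (Finset.mem_singleton_self x))
  let φ : Q → ∀ i, C i := fun x i => if h : x ∈ S i.1 then Ideal.Quotient.mk _ ⟨x, h⟩ else 0
  have hφ : ∀ x (i : ι) (h : x ∈ S i.1), φ x i = Ideal.Quotient.mk _ ⟨x, h⟩ := fun x i h => by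
    simp only [φ, dif_pos h]
  let E := evIdeal F C (fun _ => ⊥)
  let h : Q →+* (∀ i, C i) ⧸ E :=
    { toFun := fun x => Ideal.Quotient.mk _ (φ x)
      map_one' := by
        rw [← map_one (Ideal.Quotient.mk _), Ideal.Quotient.eq]
        show ∀ᶠ i in F, _
        filter_upwards [hmem 1] with i h1
        show φ 1 i - 1 = 0
        rw [hφ _ _ h1]; exact sub_self _
      map_zero' := by
        rw [← map_zero (Ideal.Quotient.mk _), Ideal.Quotient.eq]
        show ∀ᶠ i in F, _
        filter_upwards [hmem 0] with i h1
        show φ 0 i - 0 = 0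
        rw [hφ _ _ h1, sub_zero]; exact map_zero _
      map_add' := fun x y => by
        rw [← map_add, Ideal.Quotient.eq]
        show ∀ᶠ i in F, _
        filter_upwards [hmem x, hmem y] with i h1 h2
        show φ (x + y) i - (φ x i + φ y i) = 0
        rw [hφ _ _ h1, hφ _ _ h2, hφ _ _ (add_mem h1 h2), ← map_add]; exact sub_self _
      map_mul' := fun x y => by
        rw [← map_mul, Ideal.Quotient.eq]
        show ∀ᶠ i in F, _
        filter_upwards [hmem x, hmem y] with i h1 h2
        show φ (x * y) i - (φ x i * φ y i) = 0
        rw [hφ _ _ h1, hφ _ _ h2, hφ _ _ (mul_mem h1 h2), ← map_mul]; exact sub_self _ }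
  refine ⟨_, inferInstance, _, h, henselianRing_evIdeal F C J hJ, ?_, ?_⟩
  · rw [Ideal.map_le_iff_le_comap]
    intro x hx
    refine Ideal.mem_map_of_mem _ ?_
    show ∀ᶠ i in F, _
    filter_upwards [hmem x] with i h1
    rw [hφ _ _ h1]
    exact Ideal.mem_map_of_mem _ hx
  · intro x hx
    have hx : ∀ᶠ i in F, φ x i = 0 := Ideal.Quotient.eq_zero_iff_mem.1 hx
    obtain ⟨⟨s, n⟩, hsn⟩ := Filter.eventually_atTop.1 (hx.and (hmem x))
    have hxs : x ∈ S s := (hsn (s, n) le_rfl).2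
    have : IsNoetherianRing (S s) := by
      have : Algebra.FiniteType ℤ (S s) := (S s).fg_iff_finiteType.1 ⟨s, rfl⟩
      exact Algebra.FiniteType.isNoetherianRing ℤ _
    obtain ⟨k, hk, hkx⟩ := krull_torsion (L s) (⟨x, hxs⟩ : S s) n (fun m hm => by
      have h0 : φ x (s, m) = 0 := (hsn (s, m) ⟨le_rfl, hm⟩).1
      exact Ideal.Quotient.eq_zero_iff_mem.1 ((hφ x (s, m) hxs).symm.trans h0))
    exact ⟨k, hk, congrArg Subtype.val hkx⟩

/-- A Henselization detects membership in ideals up to `1 + K`. -/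
lemma exists_mul_mem_of_isHenselization {R B : Type u} [CommRing R] [CommRing B] (K : Ideal R)
    (ρ : R →+* B)
    (hρ : ∀ (C : Type u) [CommRing C] (J : Ideal C), HenselianRing C J →
      ∀ f : R →+* C, K.map f ≤ J → ∃! g : B →+* C, g.comp ρ = f)
    (b : Ideal R) (x : R) (hx : ρ x ∈ b.map ρ) : ∃ k ∈ K, (1 - k) * x ∈ b := by
  obtain ⟨C, _, J, h, hC, hK, hker⟩ :=
    exists_henselian_detecting (K.map (Ideal.Quotient.mk b))
  obtain ⟨g, hg, -⟩ := hρ C J hC (h.comp (Ideal.Quotient.mk b)) (by rwa [← Ideal.map_map])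
  have h0 : h (Ideal.Quotient.mk b x) = 0 := by
    have h1 : g (ρ x) ∈ (b.map ρ).map g := Ideal.mem_map_of_mem g hx
    rw [Ideal.map_map, hg, ← Ideal.map_map, Ideal.map_quotient_self, Ideal.map_bot] at h1
    rw [← RingHom.comp_apply, hg] at h1
    exact h1
  obtain ⟨k, hk, hkx⟩ := hker _ h0
  rw [Ideal.mem_map_iff_of_surjective _ Ideal.Quotient.mk_surjective] at hk
  obtain ⟨k, hk, rfl⟩ := hk
  refine ⟨k, hk, ?_⟩
  rw [← map_one (Ideal.Quotient.mk b), ← map_sub, ← map_mul] at hkx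
  exact Ideal.Quotient.eq_zero_iff_mem.1 hkx

end PartH

section PartRF1
open TensorProduct

def RF (A : Type u) [CommRing A] (M : Type u) [AddCommGroup M] [Module A M] (J : Ideal A) (c : A) :
    Prop :=
  ∀ (N N' : Type u) [AddCommGroup N] [AddCommGroup N'] [Module A N] [Module A N'] (f : N →ₗ[A] N'),
    Function.Injective f → (∀ j ∈ J, ∀ n : N', j • n = 0) →
    Function.Bijective (fun n : N => c • n) → Function.Bijective (fun n : N' => c • n) →
    Function.Injective (f.lTensor M)

lemma lr_comm {A M M' N N' : Type u} [CommRing A] [AddCommGroup M] [Module A M]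
    [AddCommGroup M'] [Module A M'] [AddCommGroup N] [Module A N] [AddCommGroup N'] [Module A N']
    (f : M →ₗ[A] M') (g : N →ₗ[A] N') (x : M ⊗[A] N) :
    g.lTensor M' (f.rTensor N x) = f.rTensor N' (g.lTensor M x) := by
  rw [← LinearMap.comp_apply, ← LinearMap.comp_apply, LinearMap.lTensor_comp_rTensor,
    LinearMap.rTensor_comp_lTensor]

lemma RF.baseChange {A1 A2 M : Type u} [CommRing A1] [CommRing A2] [Algebra A1 A2]
    [AddCommGroup M] [Module A1 M] {J : Ideal A1} {c : A1} (h : RF A1 M J c) :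
    RF A2 (A2 ⊗[A1] M) (J.map (algebraMap A1 A2)) (algebraMap A1 A2 c) := by
  intro N N' _ _ _ _ f hf hJ hc hc'
  let _ := Module.compHom N (algebraMap A1 A2)
  let _ := Module.compHom N' (algebraMap A1 A2)
  have : IsScalarTower A1 A2 N := ⟨fun a b n => by
    rw [Algebra.smul_def, mul_smul]; rfl⟩
  have : IsScalarTower A1 A2 N' := ⟨fun a b n => by
    rw [Algebra.smul_def, mul_smul]; rfl⟩
  have key := h N N' (f.restrictScalars A1) hf
    (fun j hj n => by
      rw [← algebraMap_smul A2 j n]; exact hJ _ (Ideal.mem_map_of_mem _ hj) n)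
    (by simpa only [algebraMap_smul] using hc) (by simpa only [algebraMap_smul] using hc')
  rw [LinearMap.lTensor_inj_iff_rTensor_inj] at key ⊢
  have comm : ∀ x, TensorProduct.AlgebraTensorModule.cancelBaseChange A1 A2 A2 N' M
      (f.rTensor (A2 ⊗[A1] M) x) = (f.restrictScalars A1).rTensor M
        (TensorProduct.AlgebraTensorModule.cancelBaseChange A1 A2 A2 N M x) := by
    intro x
    induction x with
    | zero => simp
    | add x y hx hy => simp only [map_add, hx, hy]
    | tmul n y =>
      induction y with
      | zero => simp
      | add x y hx hy => simp only [map_add, tmul_add, hx, hy]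
      | tmul a m => simp
  intro x y hxy
  apply (TensorProduct.AlgebraTensorModule.cancelBaseChange A1 A2 A2 N M).injective
  apply key
  rw [← comm, ← comm, hxy]

lemma RF.of_flat {A S S' : Type u} [CommRing A] [CommRing S] [CommRing S'] [Algebra A S]
    [Algebra S S'] [Algebra A S'] [IsScalarTower A S S'] [Module.Flat S S']
    {J : Ideal A} {c : A} (h : RF A S J c) : RF A S' J c := by
  intro N N' _ _ _ _ f hf hJ hc hc'
  have key := h N N' f hf hJ hc hc'
  let F : S ⊗[A] N →ₗ[S] S ⊗[A] N' := TensorProduct.AlgebraTensorModule.lTensor S S f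
  have hF : Function.Injective F := key
  have key2 := Module.Flat.lTensor_preserves_injective_linearMap (M := S') F hF
  have comm : ∀ x, TensorProduct.AlgebraTensorModule.cancelBaseChange A S S S' N'
      (F.lTensor S' x) = f.lTensor S' 
        (TensorProduct.AlgebraTensorModule.cancelBaseChange A S S S' N x) := by
    intro x
    induction x with
    | zero => simp
    | add x y hx hy => simp only [map_add, hx, hy]
    | tmul n y =>
      induction y with
      | zero => simp
      | add x y hx hy => simp only [map_add, tmul_add, hx, hy]
      | tmul a m => simp [F]
  intro x y hxy
  obtain ⟨x, rfl⟩ := (TensorProduct.AlgebraTensorModule.cancelBaseChange A S S S' N).surjective x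
  obtain ⟨y, rfl⟩ := (TensorProduct.AlgebraTensorModule.cancelBaseChange A S S S' N).surjective y
  rw [← comm, ← comm] at hxy
  rw [key2 ((TensorProduct.AlgebraTensorModule.cancelBaseChange A S S S' N').injective hxy)]

lemma RF.of_equiv {A M M' : Type u} [CommRing A] [AddCommGroup M] [Module A M] [AddCommGroup M']
    [Module A M'] (e : M ≃ₗ[A] M') {J : Ideal A} {c : A} (h : RF A M J c) : RF A M' J c := by
  intro N N' _ _ _ _ f hf hJ hc hc'
  have key := h N N' f hf hJ hc hc'
  have comm : ∀ x, (e.rTensor N') (f.lTensor M x) = f.lTensor M' (e.rTensor N x) := by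
    intro x
    induction x with
    | zero => simp
    | add x y hx hy => simp only [map_add, hx, hy]
    | tmul n y => simp
  intro x y hxy
  obtain ⟨x, rfl⟩ := (e.rTensor N).surjective x
  obtain ⟨y, rfl⟩ := (e.rTensor N).surjective y
  rw [← comm, ← comm] at hxy
  rw [key ((e.rTensor N').injective hxy)]

lemma bij_of_mul {A N : Type u} [CommRing A] [AddCommGroup N] [Module A N] {a b : A}
    (h : Function.Bijective (fun n : N => (a * b) • n)) : Function.Bijective (fun n : N => a • n) := by
  constructor
  · intro x y hxy
    apply h.1
    simp only [mul_comm a b, mul_smul] at hxy ⊢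
    rw [hxy]
  · intro y
    obtain ⟨x, hx⟩ := h.2 y
    exact ⟨b • x, by simpa [mul_smul] using hx⟩

lemma RF.mul {A M : Type u} [CommRing A] [AddCommGroup M] [Module A M] {J : Ideal A} {b : A}
    (h : RF A M J b) (b' : A) : RF A M J (b * b') := by
  intro N N' _ _ _ _ f hf hJ hc hc'
  exact h N N' f hf hJ (bij_of_mul hc) (bij_of_mul hc')

lemma RF.mono_dvd {A M : Type u} [CommRing A] [AddCommGroup M] [Module A M] {J : Ideal A} {b c : A}
    (h : RF A M J b) (hb : b ∣ c) : RF A M J c := by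
  obtain ⟨d, rfl⟩ := hb
  exact h.mul d

lemma RF.flat {A M : Type u} [CommRing A] [AddCommGroup M] [Module A M]
    (h : RF A M ⊥ 1) : Module.Flat A M := by
  rw [Module.Flat.iff_lTensor_preserves_injective_linearMap]
  intro N N' _ _ _ _ f hf
  exact h N N' f hf (by simp) 
    (by simp only [one_smul]; exact Function.bijective_id (α := N)) (by simp only [one_smul]; exact Function.bijective_id (α := N'))

lemma RF.of_module_flat {A M : Type u} [CommRing A] [AddCommGroup M] [Module A M] [Module.Flat A M]
    (J : Ideal A) (b : A) : RF A M J b := by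
  intro N N' _ _ _ _ f hf _ _ _
  exact Module.Flat.lTensor_preserves_injective_linearMap f hf

lemma RF.of_smul_zero {A M : Type u} [CommRing A] [AddCommGroup M] [Module A M]
    (J : Ideal A) (b : A) (hb : ∀ m : M, b • m = 0) : RF A M J b := by
  intro N N' _ _ _ _ f hf _ hc _
  have : ∀ x : M ⊗[A] N, x = 0 := by
    intro x
    induction x with
    | zero => simp
    | add x y hx hy => rw [hx, hy, add_zero]
    | tmul m n =>
      obtain ⟨n', rfl⟩ := hc.2 n
      change m ⊗ₜ[A] (b • n') = 0
      rw [← smul_tmul, hb, zero_tmul]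
  intro x y _
  rw [this x, this y]

lemma RF.top {A M : Type u} [CommRing A] [AddCommGroup M] [Module A M]
     (b : A)  : RF A M ⊤ b := by
  intro N N' _ _ _ _ f hf hJ hc _
  have : ∀ x : M ⊗[A] N, x = 0 := by
    intro x
    induction x with
    | zero => simp
    | add x y hx hy => rw [hx, hy, add_zero]
    | tmul m n =>
      have : n = 0 := hf (by rw [map_zero]; simpa using hJ 1 trivial (f n))
      simp [this]
  intro x y _
  rw [this x, this y]

/-- A flat module with `b` bijective, surjecting on `N`. -/
lemma exists_flat_cover {A N : Type u} [CommRing A] [AddCommGroup N] [Module A N] (b : A)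
    (hb : Function.Bijective (fun n : N => b • n)) :
    ∃ (F : Type u) (_ : AddCommGroup F) (_ : Module A F) (π : F →ₗ[A] N), Module.Flat A F ∧
      Function.Surjective π ∧ Function.Bijective (fun n : F => b • n) ∧
      Function.Bijective (fun n : LinearMap.ker π => b • n) := by
  have hu : ∀ x : Submonoid.powers b, IsUnit (algebraMap A (Module.End A N) x) := by
    rintro ⟨_, n, rfl⟩
    simp only [map_pow]
    apply IsUnit.pow
    rw [Module.End.isUnit_iff]
    exact hb
  let g : N → (Localization.Away b →ₗ[A] N) := fun n =>
    IsLocalizedModule.lift (Submonoid.powers b) (Algebra.linearMap A (Localization.Away b))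
      (LinearMap.toSpanSingleton A N n) hu
  have hg : ∀ n, g n 1 = n := by
    intro n
    have := IsLocalizedModule.lift_apply (Submonoid.powers b) (Algebra.linearMap A (Localization.Away b))
      (LinearMap.toSpanSingleton A N n) hu 1
    simpa using this
  have hbF : Function.Bijective (fun n : N →₀ Localization.Away b => b • n) := by
    have hbu : IsUnit (algebraMap A (Localization.Away b) b) := IsLocalization.Away.algebraMap_isUnit b
    obtain ⟨v, hv⟩ := hbu
    constructor
    · intro x y hxy
      ext n
      have := DFunLike.congr_fun hxy n
      simp only [Finsupp.coe_smul, Pi.smul_apply, Algebra.smul_def, ← hv] at this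
      simpa using this
    · intro y
      refine ⟨(↑v⁻¹ : Localization.Away b) • y, ?_⟩
      ext n
      simp [Algebra.smul_def, ← hv]
  let π : (N →₀ Localization.Away b) →ₗ[A] N := Finsupp.lsum A g
  refine ⟨N →₀ Localization.Away b, inferInstance, inferInstance, π, ?_, ?_, hbF, ?_⟩
  · have : Module.Flat A (Localization.Away b) := IsLocalization.flat _ (Submonoid.powers b)
    classical exact Module.Flat.of_linearEquiv (finsuppLEquivDirectSum A (Localization.Away b) N)
  · intro n
    exact ⟨Finsupp.single n 1, by simp [π, hg]⟩
  · constructor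
    · intro x y hxy
      apply Subtype.ext
      apply hbF.1
      exact congrArg Subtype.val hxy
    · intro y
      obtain ⟨x, hx⟩ := hbF.2 y
      simp only at hx
      refine ⟨⟨x, ?_⟩, Subtype.ext hx⟩
      rw [LinearMap.mem_ker]
      apply hb.1
      simp only [smul_zero]
      rw [← map_smul, hx]
      exact y.2

lemma RF.ext {A M M' M'' : Type u} [CommRing A] [AddCommGroup M] [Module A M] [AddCommGroup M']
    [Module A M'] [AddCommGroup M''] [Module A M''] {b : A} (i : M' →ₗ[A] M) (p : M →ₗ[A] M'')
    (hi : Function.Injective i) (hip : Function.Exact i p) (hp : Function.Surjective p)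
    (h' : RF A M' ⊥ b) (h'' : RF A M'' ⊥ b) : RF A M ⊥ b := by
  -- purity
  have pure : ∀ (N : Type u) [AddCommGroup N] [Module A N],
      Function.Bijective (fun n : N => b • n) → Function.Injective (i.rTensor N) := by
    intro N _ _ hN
    obtain ⟨F, _, _, π, hF, hπ, hbF, hbL⟩ := exists_flat_cover b hN
    let L := LinearMap.ker π
    rw [injective_iff_map_eq_zero]
    intro y hy
    obtain ⟨z, rfl⟩ := LinearMap.lTensor_surjective M' hπ y
    have e1 : π.lTensor M (i.rTensor F z) = 0 := by
      rw [lr_comm, hy]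
    obtain ⟨l, hl⟩ := (lTensor_exact M (LinearMap.exact_subtype_ker_map π) hπ _).1 e1
    have e2 : p.rTensor L l = 0 := by
      apply h'' L F L.subtype L.subtype_injective (by simp) hbL hbF
      rw [map_zero, lr_comm, hl, ← LinearMap.comp_apply, ← LinearMap.rTensor_comp,
        hip.linearMap_comp_eq_zero, LinearMap.rTensor_zero, LinearMap.zero_apply]
    obtain ⟨l', hl'⟩ := (rTensor_exact L hip hp _).1 e2
    have e3 : z = L.subtype.lTensor M' l' := by
      apply Module.Flat.rTensor_preserves_injective_linearMap (M := F) i hi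
      rw [← lr_comm, hl', hl]
    rw [e3]
    exact (lTensor_exact M' (LinearMap.exact_subtype_ker_map π) hπ _).2 ⟨l', rfl⟩
  intro N N' _ _ _ _ f hf hJ hc hc'
  rw [injective_iff_map_eq_zero]
  intro x hx
  have e1 : p.rTensor N x = 0 := by
    apply h'' N N' f hf hJ hc hc'
    rw [lr_comm, hx, map_zero, map_zero]
  obtain ⟨x', rfl⟩ := (rTensor_exact N hip hp _).1 e1
  have : x' = 0 := by
    apply h' N N' f hf hJ hc hc'
    rw [map_zero]
    apply pure N' hc'
    rw [← lr_comm, hx, map_zero]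
  simp [this]

end PartRF1

section PartRF2
open TensorProduct

lemma bij_one_smul {A N : Type u} [CommRing A] [AddCommGroup N] [Module A N] :
    Function.Bijective (fun n : N => (1 : A) • n) := by
  simp only [one_smul]
  exact Function.bijective_id (α := N)

/-- the preimage under multiplication by `c` -/
def cpre {A N' : Type u} [CommRing A] [AddCommGroup N'] [Module A N'] (c : A)
    (N : Submodule A N') : Submodule A N' := N.comap (LinearMap.lsmul A N' c)

def cmap {A N' : Type u} [CommRing A] [AddCommGroup N'] [Module A N'] (c : A)
    (N : Submodule A N') : cpre c N →ₗ[A] N := (LinearMap.lsmul A N' c).restrict (fun _ hx => hx)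

lemma cmap_coe {A N' : Type u} [CommRing A] [AddCommGroup N'] [Module A N'] (c : A)
    (N : Submodule A N') (x : cpre c N) : (cmap c N x : N') = c • (x : N') := rfl

lemma subtype_cmap {A M N' : Type u} [CommRing A] [AddCommGroup N'] [Module A N']
    [AddCommGroup M] [Module A M] (c : A)
    (N : Submodule A N') (x : M ⊗[A] cpre c N) :
    N.subtype.lTensor M ((cmap c N).lTensor M x) = c • (cpre c N).subtype.lTensor M x := by
  rw [← LinearMap.comp_apply, ← LinearMap.lTensor_comp, ← LinearMap.smul_apply,
    ← LinearMap.lTensor_smul]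
  rfl

lemma RF_C {A M N' : Type u} [CommRing A] [AddCommGroup M] [Module A M] [AddCommGroup N']
    [Module A N'] {J : Ideal A} {c : A} (h : RF A M (J ⊔ Ideal.span {c}) 1)
    (hJ : ∀ j ∈ J, ∀ n : N', j • n = 0) (N : Submodule A N') (x : M ⊗[A] N) (y : M ⊗[A] N')
    (hxy : N.subtype.lTensor M x = c • y) :
    ∃ x1 : M ⊗[A] cpre c N, (cmap c N).lTensor M x1 = x := by
  let K := LinearMap.range (cmap c N)
  let Q := LinearMap.range (LinearMap.lsmul A N' c)
  have hKQ : K ≤ Q.comap N.subtype := by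
    rintro _ ⟨z, rfl⟩
    exact ⟨z, rfl⟩
  let g : (N ⧸ K) →ₗ[A] (N' ⧸ Q) := K.mapQ Q N.subtype hKQ
  have hg : Function.Injective g := by
    rw [injective_iff_map_eq_zero]
    intro z hz
    obtain ⟨z, rfl⟩ := K.mkQ_surjective z
    simp only [g, Submodule.mkQ_apply, Submodule.mapQ_apply] at hz
    rw [Submodule.Quotient.mk_eq_zero] at hz
    obtain ⟨w, hw⟩ := hz
    rw [Submodule.mkQ_apply, Submodule.Quotient.mk_eq_zero]
    have hw' : w ∈ cpre c N := by
      change LinearMap.lsmul A N' c w ∈ N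
      rw [hw]; exact z.2
    exact ⟨⟨w, hw'⟩, Subtype.ext hw⟩
  have hker : ∀ j ∈ J ⊔ Ideal.span {c}, ∀ n : N' ⧸ Q, j • n = 0 := by
    intro j hj n
    obtain ⟨n, rfl⟩ := Q.mkQ_surjective n
    obtain ⟨a, ha, b, hb, rfl⟩ := Submodule.mem_sup.1 hj
    obtain ⟨d, rfl⟩ := Ideal.mem_span_singleton'.1 hb
    rw [add_smul, ← map_smul, hJ a ha, map_zero, zero_add, ← map_smul, Submodule.mkQ_apply,
      Submodule.Quotient.mk_eq_zero]
    exact ⟨d • n, by rw [LinearMap.lsmul_apply, mul_comm, mul_smul]⟩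
  have hinj := h _ _ g hg hker bij_one_smul bij_one_smul
  have hz : K.mkQ.lTensor M x = 0 := by
    apply hinj
    rw [map_zero, ← LinearMap.comp_apply, ← LinearMap.lTensor_comp]
    have : g ∘ₗ K.mkQ = Q.mkQ ∘ₗ N.subtype := rfl
    rw [this, LinearMap.lTensor_comp, LinearMap.comp_apply, hxy, map_smul]
    have : c • Q.mkQ.lTensor M = 0 := by
      rw [← LinearMap.lTensor_smul]
      have : c • Q.mkQ = 0 := by
        ext n
        rw [LinearMap.smul_apply, ← map_smul, Submodule.mkQ_apply, LinearMap.zero_apply,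
          Submodule.Quotient.mk_eq_zero]
        exact ⟨n, rfl⟩
      rw [this, LinearMap.lTensor_zero]
    exact LinearMap.congr_fun this y
  exact (lTensor_exact M (LinearMap.exact_map_mkQ_range (cmap c N)) K.mkQ_surjective x).1 hz

lemma exists_cover_T {A M P : Type u} [CommRing A] [AddCommGroup M] [Module A M] [AddCommGroup P]
    [Module A P] {J : Ideal A} (c : A) (hJ : ∀ j ∈ J, ∀ n : P, j • n = 0) :
    ∃ (F : Type u) (_ : AddCommGroup F) (_ : Module A F) (π : F →ₗ[A] P), Function.Surjective π ∧
      (∀ j ∈ J, ∀ n : F, j • n = 0) ∧ ∀ q : M ⊗[A] F, c • q = 0 →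
        q ∈ LinearMap.range ((cpre c (J • (⊤ : Submodule A M))).subtype.rTensor F) := by
  classical
  let π : (P →₀ (A ⧸ J)) →ₗ[A] P := Finsupp.lsum A (fun p => Submodule.liftQ J (LinearMap.toSpanSingleton A P p)
    (fun j hj => by simpa using hJ j hj p))
  have hπs : ∀ p, π (Finsupp.single p (Submodule.Quotient.mk 1)) = p := by
    intro p
    simp only [π, Finsupp.lsum_single, Submodule.liftQ_apply]
    simp
  have hπ : Function.Surjective π := fun p => ⟨_, hπs p⟩
  have hJF : ∀ j ∈ J, ∀ n : (P →₀ (A ⧸ J)), j • n = 0 := by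
    intro j hj n
    ext i
    obtain ⟨z, hz⟩ := Submodule.mkQ_surjective J (n i)
    rw [Finsupp.smul_apply, ← hz, ← map_smul, Submodule.mkQ_apply, Finsupp.zero_apply,
      Submodule.Quotient.mk_eq_zero]
    exact J.mul_mem_right _ hj
  let T1 := cpre c (J • (⊤ : Submodule A M))
  have hq : ∀ q : M ⊗[A] (P →₀ (A ⧸ J)), c • q = 0 → q ∈ LinearMap.range (T1.subtype.rTensor (P →₀ (A ⧸ J))) := by
    intro q hq
    let e := TensorProduct.finsuppRight A A M (A ⧸ J) P
    have hq1 : q = e.symm (e q) := by simp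
    rw [hq1, ← Finsupp.sum_single (e q), Finsupp.sum, map_sum]
    refine Submodule.sum_mem _ fun i _ => ?_
    have hci : c • (e q i) = 0 := by
      rw [← Finsupp.smul_apply, ← map_smul, hq]; simp
    let t := TensorProduct.tensorQuotEquivQuotSMul M J
    obtain ⟨mi, hmi⟩ := Submodule.mkQ_surjective _ (t (e q i))
    have hmi' : e q i = mi ⊗ₜ Submodule.Quotient.mk 1 := by
      apply t.injective
      rw [← hmi]
      exact (LinearMap.congr_fun (tensorQuotEquivQuotSMul_comp_mk (M := M) J) mi).symm
    have hmT : mi ∈ T1 := by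
      change c • mi ∈ (J • (⊤ : Submodule A M))
      rw [← Submodule.Quotient.mk_eq_zero, Submodule.Quotient.mk_smul, ← Submodule.mkQ_apply, hmi,
        ← map_smul, hci, map_zero]
    rw [hmi', finsuppRight_symm_apply_single]
    exact ⟨(⟨mi, hmT⟩ : T1) ⊗ₜ Finsupp.single i (Submodule.Quotient.mk 1), rfl⟩
  exact ⟨(P →₀ (A ⧸ J)), inferInstance, inferInstance, π, hπ, hJF, hq⟩

lemma RF_T {A M P : Type u} [CommRing A] [AddCommGroup M] [Module A M] [AddCommGroup P]
    [Module A P] {J : Ideal A} {c : A} (h : RF A M (J ⊔ Ideal.span {c}) 1)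
    (hJ : ∀ j ∈ J, ∀ n : P, j • n = 0) (p : M ⊗[A] P) (hp : c • p = 0) :
    ∃ (a : M ⊗[A] LinearMap.ker (LinearMap.lsmul A P c))
      (b : (cpre c (J • (⊤ : Submodule A M)) : Submodule A M) ⊗[A] P),
      p = (LinearMap.ker (LinearMap.lsmul A P c)).subtype.lTensor M a +
        (cpre c (J • (⊤ : Submodule A M))).subtype.rTensor P b := by
  obtain ⟨F, _, _, π, hπ, hJF, hq⟩ := exists_cover_T (M := M) c hJ
  let L := LinearMap.ker π
  obtain ⟨m, rfl⟩ := LinearMap.lTensor_surjective M hπ p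
  rw [← map_smul] at hp
  obtain ⟨l, hl⟩ := (lTensor_exact M (LinearMap.exact_subtype_ker_map π) hπ _).1 hp
  obtain ⟨l1, hl1⟩ := RF_C h hJF L l m hl
  let m1 := (cpre c L).subtype.lTensor M l1
  have hm1 : c • m1 = c • m := by
    rw [← hl, ← hl1]
    exact (subtype_cmap c L l1).symm
  -- π m1
  have hr : ∀ x ∈ cpre c L, π x ∈ LinearMap.ker (LinearMap.lsmul A P c) := by
    intro x hx
    have : π (c • x) = 0 := hx
    rw [LinearMap.mem_ker, LinearMap.lsmul_apply, ← map_smul, this]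
  let a := (π.restrict hr).lTensor M l1
  have ha : (LinearMap.ker (LinearMap.lsmul A P c)).subtype.lTensor M a = π.lTensor M m1 := by
    simp only [a, m1, ← LinearMap.comp_apply, ← LinearMap.lTensor_comp]
    rfl
  obtain ⟨b, hb⟩ := hq (m - m1) (by rw [smul_sub, hm1, sub_self])
  refine ⟨a, π.lTensor _ b, ?_⟩
  rw [ha, ← lr_comm, hb, map_sub]
  abel

def colonI {A : Type u} [CommRing A] (J : Ideal A) (c : A) : Ideal A := cpre c J

lemma mem_colonI {A : Type u} [CommRing A] {J : Ideal A} {c a : A} : a ∈ colonI J c ↔ c * a ∈ J :=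
  Iff.rfl

lemma RF_T' {A S : Type u} [CommRing A] [AddCommGroup S] [Module A S]
    {J : Ideal A} {c : A} (h : RF A S (J ⊔ Ideal.span {c}) 1)
    (hiii : ∀ s : S, c • s ∈ J • (⊤ : Submodule A S) → s ∈ colonI J c • (⊤ : Submodule A S))
    {P : Type u} [AddCommGroup P] [Module A P]
    (hJ : ∀ j ∈ J, ∀ n : P, j • n = 0) (p : S ⊗[A] P) (hp : c • p = 0) :
    p ∈ LinearMap.range ((LinearMap.ker (LinearMap.lsmul A P c)).subtype.lTensor S) := by
  obtain ⟨a, b, rfl⟩ := RF_T h hJ p hp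
  refine Submodule.add_mem _ ⟨a, rfl⟩ ?_
  clear hp
  induction b with
  | zero => simp
  | add x y hx hy => rw [map_add]; exact Submodule.add_mem _ hx hy
  | tmul t p =>
    rw [LinearMap.rTensor_tmul]
    have ht := hiii t.1 t.2
    simp only [Submodule.subtype_apply]
    generalize (t : S) = t' at ht
    induction ht using Submodule.smul_induction_on' with
    | smul a ha s hs =>
      rw [smul_tmul]
      have : a • p ∈ LinearMap.ker (LinearMap.lsmul A P c) := by
        rw [LinearMap.mem_ker, LinearMap.lsmul_apply, ← mul_smul]
        exact hJ _ ha _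
      exact ⟨s ⊗ₜ ⟨_, this⟩, rfl⟩
    | add x hx y hy h1 h2 => rw [add_tmul]; exact Submodule.add_mem _ h1 h2

/-- torsion -/
lemma RF_tors {A M N N' : Type u} [CommRing A] [AddCommGroup M] [Module A M] [AddCommGroup N]
    [Module A N] [AddCommGroup N'] [Module A N'] {J : Ideal A} {c : A} (h : RF A M J c)
    (hJ : ∀ j ∈ J, ∀ n : N', j • n = 0) (f : N →ₗ[A] N') (hf : Function.Injective f)
    (z : M ⊗[A] N) (hz : f.lTensor M z = 0) : ∃ n : ℕ, c ^ n • z = 0 := by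
  let W := Submonoid.powers c
  let gN := LocalizedModule.mkLinearMap W N
  let gN' := LocalizedModule.mkLinearMap W N'
  let fc : LocalizedModule W N →ₗ[A] LocalizedModule W N' := IsLocalizedModule.map W gN gN' f
  have hfc : Function.Injective fc := IsLocalizedModule.map_injective W gN gN' f hf
  have hb : ∀ (K : Type u) [AddCommGroup K] [Module A K],
      Function.Bijective (fun n : LocalizedModule W K => c • n) := by
    intro K _ _
    have := IsLocalizedModule.map_units (LocalizedModule.mkLinearMap W K) (⟨c, 1, by simp⟩ : W)
    rw [Module.End.isUnit_iff] at this
    exact this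
  have hinj := h _ _ fc hfc (by
    intro j hj n
    obtain ⟨⟨x, s⟩, hx⟩ := IsLocalizedModule.surj W gN' n
    have : s • (j • n) = 0 := by
      rw [smul_comm, hx]
      simp only 
      rw [← map_smul, hJ j hj, map_zero]
    exact IsLocalizedModule.smul_injective gN' s (by simpa using this)) (hb N) (hb N')
  have h0 : gN.lTensor M z = 0 := by
    apply hinj
    rw [map_zero, ← LinearMap.comp_apply, ← LinearMap.lTensor_comp]
    have : fc ∘ₗ gN = gN' ∘ₗ f := IsLocalizedModule.map_comp W gN gN' f
    rw [this, LinearMap.lTensor_comp, LinearMap.comp_apply, hz, map_zero]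
  have hl : IsLocalizedModule W (gN.rTensor M) := IsLocalizedModule.rTensor (R := A) (A := A) W gN
  have h1 : gN.rTensor M (TensorProduct.comm A M N z) = 0 := by
    rw [← LinearMap.comm_comp_lTensor_comp_comm_eq] 
    simp [h0]
  obtain ⟨⟨_, n, rfl⟩, hn⟩ := (IsLocalizedModule.eq_zero_iff W (gN.rTensor M)).1 h1
  refine ⟨n, (TensorProduct.comm A M N).injective ?_⟩
  rw [map_smul, map_zero]
  exact hn

lemma RF_L {A S : Type u} [CommRing A] [IsNoetherianRing A] [CommRing S] [IsNoetherianRing S]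
    [Algebra A S] {J : Ideal A} {c : A} (h : RF A S (J ⊔ Ideal.span {c}) 1) (hc : RF A S J c)
    (hiii : ∀ s : S, c • s ∈ J • (⊤ : Submodule A S) → s ∈ colonI J c • (⊤ : Submodule A S)) :
    RF A S J 1 := by
  have main : ∀ (N' : Type u) [AddCommGroup N'] [Module A N'] [Module.Finite A N']
      (_ : ∀ j ∈ J, ∀ n : N', j • n = 0) (N : Submodule A N'),
        ∀ x, N.subtype.lTensor S x = 0 → x = 0 := by
    intro N' _ _ _ hJ N
    have : IsNoetherian A N' := isNoetherian_of_isNoetherianRing_of_finite A N'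
    have step : ∀ (N : Submodule A N') (x : S ⊗[A] N), N.subtype.lTensor S x = 0 →
        ∃ x1 : S ⊗[A] cpre c N, (cmap c N).lTensor S x1 = x ∧
          (cpre c N).subtype.lTensor S x1 = 0 := by
      intro N x hx
      obtain ⟨x1, rfl⟩ := RF_C h hJ N x 0 (by rw [hx, smul_zero])
      rw [subtype_cmap] at hx
      obtain ⟨x2, hx2⟩ := RF_T' h hiii hJ _ hx
      have hle : LinearMap.ker (LinearMap.lsmul A N' c) ≤ cpre c N := by
        intro y hy
        change LinearMap.lsmul A N' c y ∈ N
        rw [LinearMap.mem_ker.1 hy]; exact N.zero_mem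
      refine ⟨x1 - (Submodule.inclusion hle).lTensor S x2, ?_, ?_⟩
      · rw [map_sub, ← LinearMap.comp_apply, ← LinearMap.lTensor_comp]
        have : cmap c N ∘ₗ Submodule.inclusion hle = 0 := by
          ext y
          exact y.2
        rw [this]; simp
      · rw [map_sub, ← hx2, ← LinearMap.comp_apply, ← LinearMap.lTensor_comp]
        exact sub_self _
    induction N using WellFoundedGT.induction with
    | ind N IH =>
    have hle : N ≤ cpre c N := fun y hy => N.smul_mem c hy
    rcases hle.lt_or_eq with hlt | heq
    · intro x hx
      obtain ⟨x1, rfl, h1⟩ := step N x hx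
      rw [IH _ hlt x1 h1, map_zero]
    · let Z : Submodule S (S ⊗[A] N) :=
        LinearMap.ker (TensorProduct.AlgebraTensorModule.lTensor S S N.subtype)
      have hmemZ : ∀ x, x ∈ Z ↔ N.subtype.lTensor S x = 0 := fun x => Iff.rfl
      have hZ : Z.FG := by
        have : IsNoetherian S (S ⊗[A] N) := isNoetherian_of_isNoetherianRing_of_finite S _
        exact IsNoetherian.noetherian Z
      have hZc : Z ≤ Ideal.span {algebraMap A S c} • Z := by
        intro x hx
        obtain ⟨x1, h1, h2⟩ := step N x hx
        have hx1 : x = algebraMap A S c • (Submodule.inclusion heq.ge).lTensor S x1 := by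
          rw [algebraMap_smul, ← h1, ← LinearMap.smul_apply, ← LinearMap.lTensor_smul]
          rfl
        rw [hx1]
        refine Submodule.smul_mem_smul (Ideal.mem_span_singleton_self _) ?_
        rw [hmemZ, ← h2, ← LinearMap.comp_apply, ← LinearMap.lTensor_comp]
        rfl
      obtain ⟨r, hr, hrZ⟩ := Submodule.exists_sub_one_mem_and_smul_eq_zero_of_fg_of_le_smul _ Z hZ hZc
      obtain ⟨s, hs⟩ := Ideal.mem_span_singleton'.1 hr
      intro x hx
      have hx1 : ∀ n : ℕ, x = ((-s) ^ n) • (c ^ n • x) := by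
        intro n
        have h1 : x = (-s) • (c • x) := by
          have h2 := hrZ x hx
          have h3 : (1 : S) = r + (-s) * algebraMap A S c := by rw [neg_mul, hs]; ring
          calc x = (1 : S) • x := (one_smul _ _).symm
            _ = (r + (-s) * algebraMap A S c) • x := by rw [← h3]
            _ = _ := by rw [add_smul, h2, zero_add, mul_smul, algebraMap_smul]
        induction n with
        | zero => simp
        | succ n ih =>
          rw [pow_succ, pow_succ, mul_smul, mul_smul, smul_comm (-s) (c^n), ← h1]
          exact ih
      obtain ⟨n, hn⟩ := RF_tors hc hJ N.subtype N.subtype_injective x hx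
      rw [hx1 n, hn, smul_zero]
  intro N N' _ _ _ _ f hf hJ _ _
  rw [LinearMap.lTensor_inj_iff_rTensor_inj]
  refine LinearMap.rTensor_injective_of_fg fun N P Nfg Pfg le ↦ ?_
  rw [← Module.Finite.iff_fg] at Pfg
  rw [LinearMap.rTensor_injective_iff_subtype (fun _ _ ↦ (Subtype.ext <| hf <| Subtype.ext_iff.mp ·)) (LinearEquiv.refl A P)]
  rw [← LinearMap.lTensor_inj_iff_rTensor_inj, injective_iff_map_eq_zero]
  exact main P (fun j hj n => Subtype.ext (hJ j hj n)) _

end PartRF2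

section PartRF3
open TensorProduct

lemma exists_fg_le_chain {A M : Type u} [CommRing A] [AddCommGroup M] [Module A M]
    (P : ℕ → Submodule A M) (hP : Monotone P) (hU : ∀ m, ∃ k, m ∈ P k)
    (Q : Submodule A M) (hQ : Q.FG) : ∃ k, Q ≤ P k := by
  obtain ⟨s, rfl⟩ := hQ
  choose k hk using hU
  refine ⟨s.sup k, Submodule.span_le.2 fun m hm => ?_⟩
  exact hP (Finset.le_sup hm) (hk m)

lemma RF.union {A M : Type u} [CommRing A] [AddCommGroup M] [Module A M] {J : Ideal A} {b : A}
    (P : ℕ → Submodule A M) (hP : Monotone P) (hU : ∀ m, ∃ k, m ∈ P k)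
    (h : ∀ k, RF A (P k) J b) : RF A M J b := by
  intro N N' _ _ _ _ f hf hJ hc hc'
  rw [injective_iff_map_eq_zero]
  intro x hx
  obtain ⟨M0, hM0, x0, rfl⟩ := TensorProduct.exists_of_fg x
  rw [lr_comm] at hx
  obtain ⟨Q, hQ, hQfg, h0⟩ := TensorProduct.eq_zero_of_fg_of_subtype_eq_zero hM0 hx
  rw [← lr_comm] at h0
  obtain ⟨k, hk⟩ := exists_fg_le_chain P hP hU Q hQfg
  have h1 : (Submodule.inclusion hk).rTensor N ((Submodule.inclusion hQ).rTensor N x0) = 0 := by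
    apply h k N N' f hf hJ hc hc'
    rw [lr_comm, h0, map_zero, map_zero]
  have : M0.subtype = (P k).subtype ∘ₗ Submodule.inclusion hk ∘ₗ Submodule.inclusion hQ := rfl
  rw [this, LinearMap.rTensor_comp, LinearMap.rTensor_comp, LinearMap.comp_apply,
    LinearMap.comp_apply, h1, map_zero]

def GF (D Q : Type u) [CommRing D] [CommRing Q] [Algebra D Q] : Prop :=
  ∀ (M : Type u) [AddCommGroup M] [Module D M] [Module Q M] [IsScalarTower D Q M]
    [Module.Finite Q M], ∃ b : D, b ≠ 0 ∧ RF D M ⊥ b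

lemma gf_self {D : Type u} [CommRing D] [IsDomain D] [IsNoetherianRing D] (M : Type u)
    [AddCommGroup M] [Module D M] [hM : Module.Finite D M] : ∃ b : D, b ≠ 0 ∧ RF D M ⊥ b := by
  induction hM using IsNoetherianRing.induction_on_isQuotientEquivQuotientPrime D with
  | subsingleton N =>
    exact ⟨1, one_ne_zero, RF.of_smul_zero _ _ fun _ => Subsingleton.elim _ _⟩
  | quotient N p e =>
    by_cases hp : p.1 = ⊥
    · refine ⟨1, one_ne_zero, RF.of_equiv e.symm ?_⟩
      rw [hp]
      exact RF.of_equiv (Submodule.quotEquivOfEqBot (⊥ : Ideal D) rfl).symm (RF.of_module_flat _ _)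
    · obtain ⟨b, hb, hb0⟩ := Submodule.exists_mem_ne_zero_of_ne_bot hp
      refine ⟨b, hb0, RF.of_equiv e.symm (RF.of_smul_zero _ _ fun m => ?_)⟩
      obtain ⟨m, rfl⟩ := Submodule.mkQ_surjective _ m
      rw [← map_smul, Submodule.mkQ_apply, Submodule.Quotient.mk_eq_zero]
      exact Ideal.mul_mem_right _ _ hb
  | exact N1 N2 N3 f g hf hg hfg h1 h3 =>
    obtain ⟨b1, hb1, h1⟩ := h1
    obtain ⟨b3, hb3, h3⟩ := h3
    exact ⟨b1 * b3, mul_ne_zero hb1 hb3, RF.ext f g hf hfg hg (h1.mul _)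
      (h3.mono_dvd (Dvd.intro_left _ rfl))⟩

lemma gf_of_surjective {D Q : Type u} [CommRing D] [IsDomain D] [IsNoetherianRing D] [CommRing Q]
    [Algebra D Q] (h : Function.Surjective (algebraMap D Q)) : GF D Q := by
  intro M _ _ _ _ _
  have : Module.Finite D Q := Module.Finite.of_surjective (Algebra.linearMap D Q) h
  have : Module.Finite D M := Module.Finite.trans Q M
  exact gf_self M

lemma GF.of_surj {D Q Q' : Type u} [CommRing D] [CommRing Q] [CommRing Q']
    [Algebra D Q] [Algebra D Q'] (h : GF D Q) (φ : Q →ₐ[D] Q') (hφ : Function.Surjective φ) :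
    GF D Q' := by
  intro M _ _ _ _ _
  let _ : Algebra Q Q' := φ.toRingHom.toAlgebra
  let _ : Module Q M := Module.compHom M φ.toRingHom
  have : IsScalarTower Q Q' M := ⟨fun a b n => by
    rw [Algebra.smul_def, mul_smul]; rfl⟩
  have : IsScalarTower D Q M := ⟨fun a b n => by
    change φ (a • b) • n = a • (φ b • n)
    rw [map_smul, smul_assoc]⟩
  have : Module.Finite Q Q' := Module.Finite.of_surjective (Algebra.linearMap Q Q') hφ
  have : Module.Finite Q M := Module.Finite.trans Q' M
  exact h M

set_option maxHeartbeats 1000000 in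
open Polynomial in
lemma GF.polynomial {D Q : Type u} [CommRing D] [IsDomain D] [CommRing Q] [IsNoetherianRing Q]
    [Algebra D Q] (h : GF D Q) : GF D Q[X] := by
  intro M _ _ _ _ hfin
  let _ : Module Q M := Module.compHom M (Polynomial.C : Q →+* Q[X])
  have : IsScalarTower Q Q[X] M := ⟨fun a b n => by
    rw [Algebra.smul_def, mul_smul]; rfl⟩
  have : IsScalarTower D Q M := ⟨fun a b n => by
    change Polynomial.C (a • b) • n = a • (Polynomial.C b • n)
    rw [← Polynomial.smul_C, smul_assoc]⟩
  obtain ⟨s, hs⟩ := hfin.fg_top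
  let N0 : Submodule Q M := Submodule.span Q s
  have : Module.Finite Q N0 := Module.Finite.iff_fg.2 ⟨s, rfl⟩
  have : IsNoetherian Q N0 := isNoetherian_of_isNoetherianRing_of_finite Q N0
  let μ : ℕ → (M →ₗ[Q] M) := fun k => Algebra.lsmul Q Q M ((X : Q[X]) ^ k)
  have hμ : ∀ k m, μ k m = (X : Q[X]) ^ k • m := fun _ _ => rfl
  obtain ⟨P, hP0, hPs⟩ : ∃ P : ℕ → Submodule Q M, P 0 = ⊥ ∧
      ∀ k, P (k + 1) = P k ⊔ N0.map (μ k) :=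
    ⟨fun k => Nat.rec ⊥ (fun k p => p ⊔ N0.map (μ k)) k, rfl, fun _ => rfl⟩
  have hmono : Monotone P := monotone_nat_of_le_succ fun k => by rw [hPs]; exact le_sup_left
  have hX : ∀ k m, m ∈ P k → (X : Q[X]) • m ∈ P (k + 1) := by
    intro k
    induction k with
    | zero => intro m hm; rw [hP0, Submodule.mem_bot] at hm; simp [hm]
    | succ k ih =>
      intro m hm
      rw [hPs] at hm
      obtain ⟨m1, h1, m2, ⟨n, hn, rfl⟩, rfl⟩ := Submodule.mem_sup.1 hm
      rw [smul_add]
      refine Submodule.add_mem _ (hmono (Nat.le_succ _) (ih _ h1)) ?_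
      rw [hPs]
      refine Submodule.mem_sup_right ⟨n, hn, ?_⟩
      rw [hμ, hμ, ← mul_smul, pow_succ']
  have hXn : ∀ n k m, m ∈ P k → (X : Q[X]) ^ n • m ∈ P (k + n) := by
    intro n
    induction n with
    | zero => intro k m hm; simpa using hm
    | succ n ih =>
      intro k m hm
      rw [pow_succ', mul_smul]
      exact hX _ _ (ih k m hm)
  have hU : ∀ m, ∃ k, m ∈ P k := by
    intro m
    have hm : m ∈ Submodule.span Q[X] (s : Set M) := by rw [hs]; trivial
    induction hm using Submodule.span_induction with
    | mem x hx =>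
      refine ⟨1, ?_⟩
      rw [hPs]
      exact Submodule.mem_sup_right ⟨x, Submodule.subset_span hx, by rw [hμ]; simp⟩
    | zero => exact ⟨0, Submodule.zero_mem _⟩
    | add x y _ _ hx hy =>
      obtain ⟨k, hk⟩ := hx
      obtain ⟨l, hl⟩ := hy
      exact ⟨max k l, Submodule.add_mem _ (hmono (le_max_left _ _) hk) (hmono (le_max_right _ _) hl)⟩
    | smul p x _ hx =>
      obtain ⟨k, hk⟩ := hx
      induction p using Polynomial.induction_on' with
      | add p q hp hq =>
        obtain ⟨k, hk⟩ := hp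
        obtain ⟨l, hl⟩ := hq
        rw [add_smul]
        exact ⟨max k l, Submodule.add_mem _ (hmono (le_max_left _ _) hk)
          (hmono (le_max_right _ _) hl)⟩
      | monomial n a =>
        refine ⟨k + n, ?_⟩
        rw [← Polynomial.C_mul_X_pow_eq_monomial, mul_smul]
        exact Submodule.smul_mem _ a (hXn n k x hk)
  let g : ∀ k, N0 →ₗ[Q] M ⧸ P k := fun k => (P k).mkQ ∘ₗ μ k ∘ₗ N0.subtype
  have hg : ∀ k u, g k u = (P k).mkQ ((X : Q[X]) ^ k • (u : M)) := fun _ _ => rfl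
  let U : ℕ → Submodule Q N0 := fun k => LinearMap.ker (g k)
  have hUmono : Monotone U := monotone_nat_of_le_succ fun k u hu => by
    simp only [U, LinearMap.mem_ker, hg, Submodule.mkQ_apply, Submodule.Quotient.mk_eq_zero]
      at hu ⊢
    rw [pow_succ', mul_smul]
    exact hX _ _ hu
  obtain ⟨k0, hk0⟩ := WellFoundedGT.monotone_chain_condition (⟨U, hUmono⟩ : ℕ →o Submodule Q N0)
  simp only [OrderHom.coe_mk] at hk0
  have hbk : ∀ k, ∃ b : D, b ≠ 0 ∧ RF D (N0 ⧸ U k) ⊥ b := fun k => h (N0 ⧸ U k)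
  choose b hb0 hb using hbk
  let B := ∏ i ∈ Finset.range (k0 + 1), b i
  have hB : ∀ k, RF D (N0 ⧸ U k) ⊥ B := by
    have h1 : ∀ k ≤ k0, RF D (N0 ⧸ U k) ⊥ B := fun k hk =>
      (hb k).mono_dvd (Finset.dvd_prod_of_mem b (by simp; omega))
    intro k
    rcases le_total k k0 with hk | hk
    · exact h1 k hk
    · rw [← hk0 k hk]
      exact h1 k0 le_rfl
  refine ⟨B, Finset.prod_ne_zero_iff.2 fun i _ => hb0 i, ?_⟩
  have hPk : ∀ k, RF D (P k) ⊥ B := by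
    intro k
    induction k with
    | zero =>
      refine RF.of_smul_zero _ _ fun m => ?_
      obtain ⟨m, hm⟩ := m
      apply Subtype.ext
      rw [hP0, Submodule.mem_bot] at hm
      change B • m = 0
      rw [hm, smul_zero]
    | succ k ih =>
      have hle : P k ≤ P (k + 1) := hmono (Nat.le_succ _)
      have hmem : ∀ m : P (k + 1), ((P k).mkQ ∘ₗ (P (k + 1)).subtype) m ∈ LinearMap.range (g k) := by
        rintro ⟨m, hm⟩
        rw [hPs] at hm
        obtain ⟨m1, h1, m2, ⟨n, hn, rfl⟩, rfl⟩ := Submodule.mem_sup.1 hm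
        refine ⟨⟨n, hn⟩, ?_⟩
        simp only [LinearMap.comp_apply, Submodule.subtype_apply, map_add]
        rw [(Submodule.Quotient.mk_eq_zero _).2 h1 |> fun (h : (P k).mkQ m1 = 0) => h, zero_add]
        rfl
      let p : P (k + 1) →ₗ[Q] LinearMap.range (g k) :=
        LinearMap.codRestrict _ ((P k).mkQ ∘ₗ (P (k + 1)).subtype) hmem
      have hp : ∀ m, p m = 0 ↔ (m : M) ∈ P k := by
        intro m
        rw [← Subtype.coe_inj]
        exact Submodule.Quotient.mk_eq_zero _
      refine RF.ext ((Submodule.inclusion hle).restrictScalars D) (p.restrictScalars D)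
        (Submodule.inclusion_injective hle) ?_ ?_ ih
        (RF.of_equiv ((g k).quotKerEquivRange.restrictScalars D) (hB k))
      · intro m
        refine (hp m).trans ⟨fun hm => ⟨⟨m, hm⟩, rfl⟩, ?_⟩
        rintro ⟨y, rfl⟩
        exact y.2
      · rintro ⟨_, u, rfl⟩
        refine ⟨⟨(X : Q[X]) ^ k • (u : M), ?_⟩, rfl⟩
        rw [hPs]
        exact Submodule.mem_sup_right ⟨u, u.2, rfl⟩
  refine RF.union (fun k => (P k).restrictScalars D) (fun i j hij => hmono hij) hU fun k => ?_
  exact hPk k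

lemma gf_mvPolynomial {D : Type u} [CommRing D] [IsDomain D] [IsNoetherianRing D] (n : ℕ) :
    GF D (MvPolynomial (Fin n) D) := by
  induction n with
  | zero => exact gf_of_surjective (MvPolynomial.C_surjective (Fin 0))
  | succ n ih =>
    exact ih.polynomial.of_surj (MvPolynomial.finSuccEquiv D n).symm.toAlgHom
      (MvPolynomial.finSuccEquiv D n).symm.surjective

lemma RF_G_dom {D R : Type u} [CommRing D] [IsDomain D] [IsNoetherianRing D] [CommRing R]
    [Algebra D R] [hR : Algebra.FiniteType D R] : ∃ b : D, b ≠ 0 ∧ RF D R ⊥ b := by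
  obtain ⟨n, f, hf⟩ := Algebra.FiniteType.iff_quotient_mvPolynomial''.1 hR
  exact (gf_mvPolynomial n).of_surj f hf R

lemma RF_G_prime {A R : Type u} [CommRing A] [IsNoetherianRing A] [CommRing R]
    [Algebra A R] [hR : Algebra.FiniteType A R] (p : Ideal A) [p.IsPrime] :
    ∃ b : A, b ∉ p ∧ RF A R p b := by
  obtain ⟨b, hb0, hb⟩ := RF_G_dom (D := A ⧸ p) (R := (A ⧸ p) ⊗[A] R)
  obtain ⟨b, rfl⟩ := Ideal.Quotient.mk_surjective b
  refine ⟨b, fun h => hb0 (Ideal.Quotient.eq_zero_iff_mem.2 h), ?_⟩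
  intro N N' _ _ _ _ f hf hJ hc hc'
  have hJN : ∀ j ∈ p, ∀ n : N, j • n = 0 := fun j hj n => hf (by
    rw [map_smul, hJ j hj, map_zero])
  have tN : Module.IsTorsionBySet A N (p : Set A) := fun n j => hJN j j.2 n
  have tN' : Module.IsTorsionBySet A N' (p : Set A) := fun n j => hJ j j.2 n
  let _ : Module (A ⧸ p) N := tN.module
  let _ : Module (A ⧸ p) N' := tN'.module
  have : IsScalarTower A (A ⧸ p) N := tN.isScalarTower
  have : IsScalarTower A (A ⧸ p) N' := tN'.isScalarTower
  let f' : N →ₗ[A ⧸ p] N' := f.extendScalarsOfSurjective Ideal.Quotient.mk_surjective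
  have key := hb N N' f' hf (by simp) hc hc'
  have key2 := (LinearMap.lTensor_inj_iff_rTensor_inj _ _).1 key
  rw [LinearMap.lTensor_inj_iff_rTensor_inj]
  have comm : ∀ x, TensorProduct.AlgebraTensorModule.cancelBaseChange A (A ⧸ p) (A ⧸ p) N' R
      (f'.rTensor ((A ⧸ p) ⊗[A] R) x) = f.rTensor R
        (TensorProduct.AlgebraTensorModule.cancelBaseChange A (A ⧸ p) (A ⧸ p) N R x) := by
    intro x
    induction x with
    | zero => simp
    | add x y hx hy => simp only [map_add, hx, hy]
    | tmul n y =>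
      induction y with
      | zero => simp
      | add x y hx hy => simp only [map_add, tmul_add, hx, hy]
      | tmul a m =>
        simp only [LinearMap.rTensor_tmul, AlgebraTensorModule.cancelBaseChange_tmul]
        rw [← map_smul]
        rfl
  intro x y hxy
  obtain ⟨x, rfl⟩ :=
    (TensorProduct.AlgebraTensorModule.cancelBaseChange A (A ⧸ p) (A ⧸ p) N R).surjective x
  obtain ⟨y, rfl⟩ :=
    (TensorProduct.AlgebraTensorModule.cancelBaseChange A (A ⧸ p) (A ⧸ p) N R).surjective y
  rw [← comm, ← comm] at hxy
  rw [key2 ((TensorProduct.AlgebraTensorModule.cancelBaseChange A (A ⧸ p) (A ⧸ p) N' R).injective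
    hxy)]

lemma RF_G {A R : Type u} [CommRing A] [IsNoetherianRing A] [CommRing R]
    [Algebra A R] [hR : Algebra.FiniteType A R] (J : Ideal A) (hJ : J ≠ ⊤) :
    ∃ c : A, c ∉ J ∧ RF A R J c := by
  have hne : (Submodule.Quotient.mk 1 : A ⧸ J) ≠ 0 := by
    rw [Ne, Submodule.Quotient.mk_eq_zero]
    exact fun h => hJ ((Ideal.eq_top_iff_one _).2 h)
  obtain ⟨p, hp, -⟩ := exists_le_isAssociatedPrime_of_isNoetherianRing A _ hne
  rw [isAssociatedPrime_iff] at hp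
  obtain ⟨hp, x, hx⟩ := hp
  obtain ⟨a, rfl⟩ := Submodule.mkQ_surjective _ x
  have hmem : ∀ q, q ∈ p ↔ a * q ∈ J := by
    intro q
    rw [hx, Submodule.mem_colon_singleton, Submodule.mem_bot, ← map_smul, Submodule.mkQ_apply,
      Submodule.Quotient.mk_eq_zero, smul_eq_mul, mul_comm]
  obtain ⟨b, hbp, hb⟩ := RF_G_prime (R := R) p
  refine ⟨a * b, fun h => hbp ((hmem b).2 h), ?_⟩
  intro N N' _ _ _ _ f hf hJ hc hc'
  refine hb N N' f hf ?_ (bij_of_mul (mul_comm a b ▸ hc)) (bij_of_mul (mul_comm a b ▸ hc'))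
  intro q hq n
  apply (bij_of_mul hc').1
  simp only [smul_zero]
  rw [← mul_smul]
  exact hJ _ ((hmem q).1 hq) n

end PartRF3

section PartM1
open TensorProduct

def Good {A : Type u} [CommRing A] (I : Ideal A) (B : Type u) [CommRing B] [Algebra A B]
    (R : Type u) [CommRing R] [Algebra A R] : Prop :=
  Algebra.FinitePresentation A R ∧ ∃ ρ : R →+* B, ρ.comp (algebraMap A R) = algebraMap A B ∧
    IsHenselization (I.map (algebraMap A R)) ρ

lemma Good.of_equiv {A : Type u} [CommRing A] {I : Ideal A} {B : Type u} [CommRing B] [Algebra A B]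
    {R R' : Type u} [CommRing R] [Algebra A R] [CommRing R'] [Algebra A R']
    (h : Good I B R) (e : R ≃ₐ[A] R') : Good I B R' := by
  obtain ⟨hfp, ρ, hρ, hH, hU⟩ := h
  have hc : (ρ.comp (e.symm : R' →+* R)).comp (algebraMap A R') = algebraMap A B := by
    rw [← hρ]; ext a; simp
  refine ⟨Algebra.FinitePresentation.equiv e, ρ.comp (e.symm : R' →+* R), hc, ?_, ?_⟩
  · rw [Ideal.map_map, hc]
    rwa [Ideal.map_map, hρ] at hH
  · intro C _ J hJ f hf
    obtain ⟨g, hg, hg'⟩ := hU C J hJ (f.comp (e : R →+* R')) (by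
      rw [Ideal.map_map, RingHom.comp_assoc]
      rw [Ideal.map_map] at hf
      have : (e : R →+* R').comp (algebraMap A R) = algebraMap A R' := by ext a; simp
      rwa [this])
    refine ⟨g, ?_, ?_⟩
    · ext x
      have := RingHom.congr_fun hg (e.symm x)
      simpa using this
    · intro g' h'
      apply hg'
      ext x
      have := RingHom.congr_fun h' (e x)
      simpa using this

lemma Good.localization {A : Type u} [CommRing A] {I : Ideal A} {B : Type u} [CommRing B]
    [Algebra A B] {R R' : Type u} [CommRing R] [Algebra A R] [CommRing R'] [Algebra A R']
    [Algebra R R'] [IsScalarTower A R R'] (h : Good I B R) (w : R)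
    (hw : w - 1 ∈ I.map (algebraMap A R)) [IsLocalization.Away w R'] : Good I B R' := by
  obtain ⟨hfp, ρ, hρ, hH, hU⟩ := h
  have hunit : ∀ (C : Type u) [CommRing C] (J : Ideal C), HenselianRing C J →
      ∀ f : R →+* C, (I.map (algebraMap A R)).map f ≤ J → IsUnit (f w) := by
    intro C _ J hJ f hf
    have h1 : f w - 1 ∈ J := by
      have := hf (Ideal.mem_map_of_mem f hw)
      simpa using this
    have h2 := hJ.jac h1
    have := (Ideal.mem_jacobson_bot.mp h2) 1
    simpa using this
  have hu : IsUnit (ρ w) := hunit B _ hH ρ le_rfl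
  let ρ' : R' →+* B := IsLocalization.Away.lift w hu
  have hρ' : ρ'.comp (algebraMap R R') = ρ := by
    ext x; exact IsLocalization.Away.lift_eq w hu x
  have hc : ρ'.comp (algebraMap A R') = algebraMap A B := by
    rw [IsScalarTower.algebraMap_eq A R R', ← RingHom.comp_assoc, hρ', hρ]
  have : Algebra.FinitePresentation R R' := IsLocalization.Away.finitePresentation w
  refine ⟨Algebra.FinitePresentation.trans A R R', ρ', hc, ?_, ?_⟩
  · rw [Ideal.map_map, hc]
    rwa [Ideal.map_map, hρ] at hH
  · intro C _ J hJ f hf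
    rw [IsScalarTower.algebraMap_eq A R R', ← Ideal.map_map, Ideal.map_map] at hf
    obtain ⟨g, hg, hg'⟩ := hU C J hJ (f.comp (algebraMap R R')) hf
    refine ⟨g, ?_, ?_⟩
    · apply IsLocalization.ringHom_ext (Submonoid.powers w)
      change (g.comp ρ').comp (algebraMap R R') = f.comp (algebraMap R R')
      rw [RingHom.comp_assoc, hρ', hg]
    · intro g' h'
      apply hg'
      rw [← h', RingHom.comp_assoc, hρ']

lemma flat_colon {A B : Type u} [CommRing A] [CommRing B] [Algebra A B] [Module.Flat A B]
    (J : Ideal A) (c : A) (b : B) (hb : algebraMap A B c * b ∈ J.map (algebraMap A B)) :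
    b ∈ (colonI J c).map (algebraMap A B) := by
  let f : (A ⧸ colonI J c) →ₗ[A] (A ⧸ J) :=
    Submodule.mapQ (colonI J c) J (LinearMap.lsmul A A c) (fun x hx => hx)
  have hf : Function.Injective f := by
    rw [← LinearMap.ker_eq_bot, LinearMap.ker_eq_bot']
    intro m hm
    obtain ⟨m, rfl⟩ := Submodule.Quotient.mk_surjective _ m
    rw [Submodule.Quotient.mk_eq_zero]
    have : Submodule.Quotient.mk (p := J) (c * m) = 0 := hm
    rw [Submodule.Quotient.mk_eq_zero] at this
    exact this
  have hinj := Module.Flat.lTensor_preserves_injective_linearMap (M := B) f hf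
  have key : f.lTensor B (b ⊗ₜ Submodule.Quotient.mk 1) = 0 := by
    have : f (Submodule.Quotient.mk 1) = c • Submodule.Quotient.mk (p := J) 1 := by
      change Submodule.Quotient.mk (c * 1) = _
      rw [← Submodule.Quotient.mk_smul]; rfl
    rw [LinearMap.lTensor_tmul, this, ← TensorProduct.smul_tmul]
    apply (TensorProduct.tensorQuotEquivQuotSMul B J).injective
    rw [map_zero]
    have := TensorProduct.tensorQuotEquivQuotSMul_tmul_mk J (c • b) (1 : A)
    refine this.trans ?_
    rw [Submodule.Quotient.mk_eq_zero, one_smul, Ideal.smul_top_eq_map, Algebra.smul_def]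
    exact hb
  have h0 : (b ⊗ₜ[A] (Submodule.Quotient.mk 1 : A ⧸ colonI J c)) = 0 := hinj (by rw [key, map_zero])
  have h1 := congrArg (TensorProduct.tensorQuotEquivQuotSMul B (colonI J c)) h0
  rw [map_zero] at h1
  have := TensorProduct.tensorQuotEquivQuotSMul_tmul_mk (colonI J c) b (1 : A)
  have h2 := this.symm.trans h1
  rw [Submodule.Quotient.mk_eq_zero, one_smul, Ideal.smul_top_eq_map] at h2
  exact h2

lemma Good.colon {A : Type u} [CommRing A] {I : Ideal A} {B : Type u} [CommRing B] [Algebra A B]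
    [Module.Flat A B] {R : Type u} [CommRing R] [Algebra A R] (h : Good I B R)
    (J : Ideal A) (c : A) (s : Finset R)
    (hs : ∀ t ∈ s, algebraMap A R c * t ∈ J.map (algebraMap A R)) :
    ∃ w : R, w - 1 ∈ I.map (algebraMap A R) ∧
      ∀ t ∈ s, w * t ∈ (colonI J c).map (algebraMap A R) := by
  classical
  obtain ⟨hfp, ρ, hρ, hH, hU⟩ := h
  induction s using Finset.induction_on with
  | empty => exact ⟨1, by simp, by simp⟩
  | insert a s ha ih =>
    obtain ⟨w, hw, hws⟩ := ih (fun t ht => hs t (Finset.mem_insert_of_mem ht))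
    have h1 : algebraMap A B c * ρ a ∈ J.map (algebraMap A B) := by
      have := Ideal.mem_map_of_mem ρ (hs a (Finset.mem_insert_self _ _))
      rw [Ideal.map_map, hρ, map_mul, ← RingHom.comp_apply, hρ] at this
      exact this
    have h2 := flat_colon J c _ h1
    rw [← hρ, ← Ideal.map_map] at h2
    obtain ⟨k, hk, hka⟩ := exists_mul_mem_of_isHenselization _ ρ hU _ a h2
    refine ⟨w * (1 - k), ?_, ?_⟩
    · have : w * (1 - k) - 1 = (w - 1) - w * k := by ring
      rw [this]
      exact Ideal.sub_mem _ hw (Ideal.mul_mem_left _ _ hk)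
    · intro t ht
      rcases Finset.mem_insert.mp ht with rfl | ht
      · rw [mul_assoc]; exact Ideal.mul_mem_left _ _ hka
      · have : w * (1 - k) * t = (1 - k) * (w * t) := by ring
        rw [this]; exact Ideal.mul_mem_left _ _ (hws t ht)

end PartM1

section PartM2
open TensorProduct

def Ev {A1 A : Type u} [CommRing A1] [CommRing A] [Algebra A1 A] (p : Subalgebra A1 A → Prop) :
    Prop := ∃ A0 : Subalgebra A1 A, A0.FG ∧ ∀ A', A0 ≤ A' → p A'

section Ev
variable {A1 A S1 : Type u} [CommRing A1] [CommRing A] [CommRing S1] [Algebra A1 A] [Algebra A1 S1]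

lemma Ev.and {p q : Subalgebra A1 A → Prop} (hp : Ev p) (hq : Ev q) : Ev (fun X => p X ∧ q X) := by
  obtain ⟨X, hX, h⟩ := hp
  obtain ⟨Y, hY, h'⟩ := hq
  exact ⟨X ⊔ Y, hX.sup hY, fun Z hZ => ⟨h Z (le_sup_left.trans hZ), h' Z (le_sup_right.trans hZ)⟩⟩

lemma Ev.imp {p q : Subalgebra A1 A → Prop} (hp : Ev p) (h : ∀ X, p X → q X) : Ev q := by
  obtain ⟨X, hX, h'⟩ := hp
  exact ⟨X, hX, fun Z hZ => h _ (h' Z hZ)⟩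

lemma Ev.all {p : Subalgebra A1 A → Prop} (h : ∀ X, p X) : Ev p :=
  ⟨⊥, Subalgebra.fg_bot, fun Z _ => h Z⟩

lemma Ev.forall_finset {T : Type u} {p : T → Subalgebra A1 A → Prop} (s : Finset T)
    (h : ∀ t ∈ s, Ev (p t)) : Ev (fun X => ∀ t ∈ s, p t X) := by
  classical
  induction s using Finset.induction_on with
  | empty => exact Ev.all (by simp)
  | insert a s ha ih =>
    refine ((h a (Finset.mem_insert_self _ _)).and
      (ih fun t ht => h t (Finset.mem_insert_of_mem ht))).imp ?_
    intro X hX t ht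
    rcases Finset.mem_insert.mp ht with rfl | ht
    · exact hX.1
    · exact hX.2 t ht

lemma Ev.mem (a : A) : Ev (fun X : Subalgebra A1 A => a ∈ X) :=
  ⟨Algebra.adjoin A1 {a}, ⟨{a}, by simp⟩, fun Z hZ => hZ (Algebra.subset_adjoin rfl)⟩

lemma Ev.mapJ (J : Ideal A1) (a : A) (ha : a ∈ J.map (algebraMap A1 A)) :
    Ev (fun X : Subalgebra A1 A => ∃ x ∈ J.map (algebraMap A1 X), (x : A) = a) := by
  induction ha using Submodule.span_induction with
  | mem x hx =>
    obtain ⟨j, hj, rfl⟩ := hx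
    exact Ev.all fun X => ⟨algebraMap A1 X j, Ideal.mem_map_of_mem _ hj, rfl⟩
  | zero => exact Ev.all fun X => ⟨0, zero_mem _, rfl⟩
  | add x y _ _ hx hy =>
    refine (hx.and hy).imp ?_
    rintro X ⟨⟨x, hx1, rfl⟩, y, hy1, rfl⟩
    exact ⟨x + y, add_mem hx1 hy1, rfl⟩
  | smul r x _ hx =>
    refine (hx.and (Ev.mem r)).imp ?_
    rintro X ⟨⟨x, hx1, rfl⟩, hr⟩
    exact ⟨⟨r, hr⟩ * x, Ideal.mul_mem_left _ _ hx1, rfl⟩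

lemma Ev.colonI (J : Ideal A1) (c : A1) (a : A)
    (ha : a ∈ colonI (J.map (algebraMap A1 A)) (algebraMap A1 A c)) :
    Ev (fun X : Subalgebra A1 A =>
      ∃ x ∈ _root_.colonI (J.map (algebraMap A1 X)) (algebraMap A1 X c), (x : A) = a) := by
  refine ((Ev.mem a).and (Ev.mapJ J _ (mem_colonI.mp ha))).imp ?_
  rintro X ⟨ha, y, hy, h⟩
  refine ⟨⟨a, ha⟩, ?_, rfl⟩
  rw [mem_colonI]
  convert hy
  exact Subtype.ext h.symm

noncomputable def iot (S1 : Type u) [CommRing S1] [Algebra A1 S1] (X : Subalgebra A1 A) :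
    X ⊗[A1] S1 →ₐ[A1] A ⊗[A1] S1 :=
  Algebra.TensorProduct.map X.val (AlgHom.id A1 S1)

lemma Ev.range (r : A ⊗[A1] S1) : Ev (fun X : Subalgebra A1 A => ∃ x, iot S1 X x = r) := by
  induction r with
  | zero => exact Ev.all fun X => ⟨0, map_zero _⟩
  | add x y hx hy =>
    refine (hx.and hy).imp ?_
    rintro X ⟨⟨x, rfl⟩, y, rfl⟩
    exact ⟨x + y, map_add _ _ _⟩
  | tmul a s =>
    refine (Ev.mem a).imp fun X h => ⟨⟨a, h⟩ ⊗ₜ s, ?_⟩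
    simp [iot]

lemma Ev.colon_map (J : Ideal A1) (c : A1) (r : A ⊗[A1] S1)
    (hr : r ∈ (_root_.colonI (J.map (algebraMap A1 A)) (algebraMap A1 A c)).map
      (algebraMap A (A ⊗[A1] S1))) :
    Ev (fun X : Subalgebra A1 A => ∃ x ∈ (_root_.colonI (J.map (algebraMap A1 X))
      (algebraMap A1 X c)).map (algebraMap X (X ⊗[A1] S1)), iot S1 X x = r) := by
  induction hr using Submodule.span_induction with
  | mem x hx =>
    obtain ⟨j, hj, rfl⟩ := hx
    refine (Ev.colonI J c j hj).imp ?_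
    rintro X ⟨x, hx, rfl⟩
    refine ⟨_, Ideal.mem_map_of_mem _ hx, ?_⟩
    simp [iot, Algebra.TensorProduct.algebraMap_apply]
  | zero => exact Ev.all fun X => ⟨0, zero_mem _, map_zero _⟩
  | add x y _ _ hx hy =>
    refine (hx.and hy).imp ?_
    rintro X ⟨⟨x, hx1, rfl⟩, y, hy1, rfl⟩
    exact ⟨x + y, add_mem hx1 hy1, map_add _ _ _⟩
  | smul r x _ hx =>
    refine (hx.and (Ev.range r)).imp ?_
    rintro X ⟨⟨x, hx1, rfl⟩, r, rfl⟩
    exact ⟨r * x, Ideal.mul_mem_left _ _ hx1, map_mul _ _ _⟩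

noncomputable def inc (S1 : Type u) [CommRing S1] [Algebra A1 S1] {X Y : Subalgebra A1 A}
    (h : X ≤ Y) : X ⊗[A1] S1 →ₐ[A1] Y ⊗[A1] S1 :=
  Algebra.TensorProduct.map (Subalgebra.inclusion h) (AlgHom.id A1 S1)

lemma iot_inc {X Y : Subalgebra A1 A} (h : X ≤ Y) (x : X ⊗[A1] S1) :
    iot S1 Y (inc S1 h x) = iot S1 X x := by
  have : (iot S1 Y).comp (inc S1 h) = iot S1 X := by
    ext <;> simp [iot, inc]
  exact DFunLike.congr_fun this x

lemma inc_inc {X Y Z : Subalgebra A1 A} (h : X ≤ Y) (h' : Y ≤ Z) (x : X ⊗[A1] S1) :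
    inc S1 h' (inc S1 h x) = inc S1 (h.trans h') x := by
  have : (inc S1 h').comp (inc S1 h) = inc S1 (h.trans h') := by
    ext <;> simp [inc]
  exact DFunLike.congr_fun this x

lemma inc_colon (J : Ideal A1) (c : A1) {X Y : Subalgebra A1 A} (h : X ≤ Y) (x : X ⊗[A1] S1)
    (hx : x ∈ (colonI (J.map (algebraMap A1 X))
      (algebraMap A1 X c)).map (algebraMap X (X ⊗[A1] S1))) :
    inc S1 h x ∈ (colonI (J.map (algebraMap A1 Y))
      (algebraMap A1 Y c)).map (algebraMap Y (Y ⊗[A1] S1)) := by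
  have := Ideal.mem_map_of_mem (inc S1 h : X ⊗[A1] S1 →+* Y ⊗[A1] S1) hx
  have e : (inc S1 h : X ⊗[A1] S1 →+* Y ⊗[A1] S1).comp (algebraMap X (X ⊗[A1] S1)) =
      (algebraMap Y (Y ⊗[A1] S1)).comp (Subalgebra.inclusion h : X →+* Y) := by
    ext x; simp [inc, Algebra.TensorProduct.algebraMap_apply]
  rw [Ideal.map_map, e, ← Ideal.map_map] at this
  refine Ideal.map_mono ?_ this
  rw [Ideal.map_le_iff_le_comap]
  intro a ha
  rw [mem_colonI] at ha
  rw [Ideal.mem_comap, mem_colonI]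
  have h1 := Ideal.mem_map_of_mem (Subalgebra.inclusion h : X →+* Y) ha
  rw [Ideal.map_map] at h1
  simpa using h1

lemma descent (J : Ideal A1) (c : A1) (w : A ⊗[A1] S1) (s : Finset S1)
    (hw : ∀ t ∈ s, w * (1 ⊗ₜ t) ∈
      (colonI (J.map (algebraMap A1 A)) (algebraMap A1 A c)).map (algebraMap A (A ⊗[A1] S1))) :
    ∃ X : Subalgebra A1 A, X.FG ∧ ∃ w2 : X ⊗[A1] S1, iot S1 X w2 = w ∧
      ∀ t ∈ s, w2 * (1 ⊗ₜ t) ∈ (colonI (J.map (algebraMap A1 X))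
      (algebraMap A1 X c)).map (algebraMap X (X ⊗[A1] S1)) := by
  classical
  obtain ⟨X, hX, h⟩ := (Ev.range w).and
    (Ev.forall_finset s fun t ht => Ev.colon_map J c _ (hw t ht))
  obtain ⟨⟨w2, hw2⟩, hs⟩ := h X le_rfl
  clear h
  have hs' : ∀ t ∈ s, Ev (fun Y : Subalgebra A1 A => ∀ h : X ≤ Y, inc S1 h (w2 * (1 ⊗ₜ t)) ∈
      (colonI (J.map (algebraMap A1 Y))
      (algebraMap A1 Y c)).map (algebraMap Y (Y ⊗[A1] S1))) := by
    intro t ht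
    obtain ⟨x, hx, hxe⟩ := hs t ht
    have he : iot S1 X x = iot S1 X (w2 * (1 ⊗ₜ t)) := by
      rw [map_mul, hw2, hxe]; simp [iot]
    obtain ⟨Y, hXY, hY, hYe⟩ := TensorProduct.Algebra.eq_of_fg_of_subtype_eq hX he
    refine ⟨Y, hY, fun Z hZ hXZ => ?_⟩
    have hYe' : inc S1 hXY x = inc S1 hXY (w2 * (1 ⊗ₜ t)) := hYe
    rw [← inc_inc hXY hZ, ← hYe']
    exact inc_colon J c _ _ (inc_colon J c _ _ hx)
  obtain ⟨Y, hY, h⟩ := Ev.forall_finset s hs'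
  refine ⟨X ⊔ Y, hX.sup hY, inc S1 (le_sup_left : X ≤ X ⊔ Y) w2, by rw [iot_inc, hw2], ?_⟩
  intro t ht
  have := h (X ⊔ Y) le_sup_right t ht le_sup_left
  rw [map_mul] at this
  convert this using 2
  simp [inc]

end Ev

end PartM2

section PartM3
open TensorProduct

section
variable {A1 A2 S1 : Type u} [CommRing A1] [CommRing A2] [CommRing S1] [Algebra A1 A2] [Algebra A1 S1]

noncomputable def qmap (S1 : Type u) [CommRing S1] [Algebra A1 S1] (K : Ideal A2) :
    A2 ⊗[A1] S1 →ₗ[A1] S1 ⊗[A1] (A2 ⧸ K) :=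
  (((Submodule.mkQ K).restrictScalars A1).lTensor S1).comp (TensorProduct.comm A1 A2 S1).toLinearMap

lemma qmap_tmul (K : Ideal A2) (a : A2) (s : S1) :
    qmap S1 K (a ⊗ₜ s) = s ⊗ₜ[A1] (Submodule.Quotient.mk a : A2 ⧸ K) := by
  simp [qmap]

lemma ker_qmap (K : Ideal A2) (x : A2 ⊗[A1] S1) (hx : qmap S1 K x = 0) :
    x ∈ K.map (algebraMap A2 (A2 ⊗[A1] S1)) := by
  have hex : Function.Exact ((Submodule.subtype K).restrictScalars A1)
      ((Submodule.mkQ K).restrictScalars A1) := LinearMap.exact_subtype_mkQ K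
  obtain ⟨y, hy⟩ := (lTensor_exact S1 hex (Submodule.mkQ_surjective K) _).1 hx
  have hxy : x = (TensorProduct.comm A1 A2 S1).symm
      ((((Submodule.subtype K).restrictScalars A1).lTensor S1) y) := by
    rw [hy]; simp
  rw [hxy]
  clear hxy hy hx
  induction y with
  | zero => simp
  | add a b ha hb => rw [map_add, map_add]; exact add_mem ha hb
  | tmul s k =>
    have : (TensorProduct.comm A1 A2 S1).symm
      ((((Submodule.subtype K).restrictScalars A1).lTensor S1) (s ⊗ₜ k)) =
        (1 ⊗ₜ s) * algebraMap A2 (A2 ⊗[A1] S1) k := by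
      simp [Algebra.TensorProduct.algebraMap_apply]
    rw [this]
    exact Ideal.mul_mem_left _ _ (Ideal.mem_map_of_mem _ k.2)

lemma qmap_mem (K : Ideal A2) (x : A2 ⊗[A1] S1)
    (hx : x ∈ K.map (algebraMap A2 (A2 ⊗[A1] S1))) : qmap S1 K x = 0 := by
  suffices h : ∀ r : A2 ⊗[A1] S1, qmap S1 K (r * x) = 0 by simpa using h 1
  induction hx using Submodule.span_induction with
  | zero => simp
  | add x y _ _ hx hy => intro r; rw [mul_add, map_add, hx, hy, add_zero]
  | mem x hx =>
    obtain ⟨k, hk, rfl⟩ := hx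
    intro r
    induction r with
    | zero => simp
    | add a b ha hb => rw [add_mul, map_add, ha, hb, add_zero]
    | tmul a s =>
      rw [Algebra.TensorProduct.algebraMap_apply, Algebra.algebraMap_self, RingHom.id_apply,
        Algebra.TensorProduct.tmul_mul_tmul,
        qmap_tmul, (Submodule.Quotient.mk_eq_zero K).mpr (Ideal.mul_mem_left _ _ hk), tmul_zero]
  | smul r x hx h => intro r'; rw [smul_eq_mul, ← mul_assoc]; exact h _

lemma iii_a (J : Ideal A1) (c : A1) (h : RF A1 S1 (J ⊔ Ideal.span {c}) 1) (w : A2 ⊗[A1] S1)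
    (hw : ∀ t : S1, c • t ∈ J • (⊤ : Submodule A1 S1) → w * (1 ⊗ₜ t) ∈
      (colonI (J.map (algebraMap A1 A2)) (algebraMap A1 A2 c)).map (algebraMap A2 (A2 ⊗[A1] S1)))
    (s : A2 ⊗[A1] S1) (hs : c • s ∈ (J.map (algebraMap A1 A2)).map (algebraMap A2 (A2 ⊗[A1] S1))) :
    w * s ∈ (colonI (J.map (algebraMap A1 A2)) (algebraMap A1 A2 c)).map
      (algebraMap A2 (A2 ⊗[A1] S1)) := by
  set K := J.map (algebraMap A1 A2) with hK
  obtain ⟨a, b, hab⟩ := RF_T (P := A2 ⧸ K) h (by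
    intro j hj n
    obtain ⟨n, rfl⟩ := Submodule.Quotient.mk_surjective _ n
    rw [← Submodule.Quotient.mk_smul, Submodule.Quotient.mk_eq_zero, Algebra.smul_def]
    exact Ideal.mul_mem_right _ _ (Ideal.mem_map_of_mem _ hj)) (qmap S1 K s) (by
    rw [← map_smul]; exact qmap_mem K _ hs)
  have ha : ∃ x ∈ (colonI K (algebraMap A1 A2 c)).map (algebraMap A2 (A2 ⊗[A1] S1)),
      qmap S1 K x = (LinearMap.ker (LinearMap.lsmul A1 (A2 ⧸ K) c)).subtype.lTensor S1 a := by
    clear hab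
    induction a with
    | zero => exact ⟨0, zero_mem _, by simp⟩
    | add a b ha hb =>
      obtain ⟨x, hx, hxe⟩ := ha
      obtain ⟨y, hy, hye⟩ := hb
      exact ⟨x + y, add_mem hx hy, by rw [map_add, map_add, hxe, hye]⟩
    | tmul s p =>
      obtain ⟨p, hp⟩ := p
      obtain ⟨p, rfl⟩ := Submodule.Quotient.mk_surjective _ p
      refine ⟨(1 ⊗ₜ s) * algebraMap A2 (A2 ⊗[A1] S1) p, Ideal.mul_mem_left _ _
        (Ideal.mem_map_of_mem _ ?_), ?_⟩
      · rw [mem_colonI, ← Algebra.smul_def]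
        rw [LinearMap.mem_ker, LinearMap.lsmul_apply, ← Submodule.Quotient.mk_smul,
          Submodule.Quotient.mk_eq_zero] at hp
        exact hp
      · rw [Algebra.TensorProduct.algebraMap_apply, Algebra.algebraMap_self, RingHom.id_apply,
          Algebra.TensorProduct.tmul_mul_tmul, one_mul, mul_one, qmap_tmul]
        rfl
  have hb : ∃ x, w * x ∈ (colonI K (algebraMap A1 A2 c)).map (algebraMap A2 (A2 ⊗[A1] S1)) ∧
      qmap S1 K x = (cpre c (J • (⊤ : Submodule A1 S1))).subtype.rTensor (A2 ⧸ K) b := by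
    clear hab
    induction b with
    | zero => exact ⟨0, by simp, by simp⟩
    | add a b ha hb =>
      obtain ⟨x, hx, hxe⟩ := ha
      obtain ⟨y, hy, hye⟩ := hb
      exact ⟨x + y, by rw [mul_add]; exact add_mem hx hy, by rw [map_add, map_add, hxe, hye]⟩
    | tmul t p =>
      obtain ⟨p, rfl⟩ := Submodule.Quotient.mk_surjective _ p
      refine ⟨(1 ⊗ₜ t.1) * algebraMap A2 (A2 ⊗[A1] S1) p, ?_, ?_⟩
      · rw [← mul_assoc]
        exact Ideal.mul_mem_right _ _ (hw t.1 t.2)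
      · rw [Algebra.TensorProduct.algebraMap_apply, Algebra.algebraMap_self, RingHom.id_apply,
          Algebra.TensorProduct.tmul_mul_tmul, one_mul, mul_one, qmap_tmul]
        rfl
  obtain ⟨x, hx, hxe⟩ := ha
  obtain ⟨y, hy, hye⟩ := hb
  have hk := ker_qmap K (s - x - y) (by rw [map_sub, map_sub, hab, hxe, hye]; abel)
  have hk' : s - x - y ∈ (colonI K (algebraMap A1 A2 c)).map (algebraMap A2 (A2 ⊗[A1] S1)) := by
    refine Ideal.map_mono ?_ hk
    intro j hj
    exact mem_colonI.mpr (Ideal.mul_mem_left _ _ hj)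
  have : w * s = w * (s - x - y) + w * x + w * y := by ring
  rw [this]
  exact add_mem (add_mem (Ideal.mul_mem_left _ _ hk') (Ideal.mul_mem_left _ _ hx)) hy

lemma iii_b {A S S2 : Type u} [CommRing A] [CommRing S] [CommRing S2] [Algebra A S] [Algebra S S2]
    [Algebra A S2] [IsScalarTower A S S2] (w : S) [IsLocalization.Away w S2] (J : Ideal A) (c : A)
    (h : ∀ s : S, algebraMap A S c * s ∈ J.map (algebraMap A S) → 
      w * s ∈ (colonI J c).map (algebraMap A S))
    (s : S2) (hs : c • s ∈ J • (⊤ : Submodule A S2)) : s ∈ colonI J c • (⊤ : Submodule A S2) := by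
  rw [Ideal.smul_top_eq_map] at hs ⊢
  change _ ∈ J.map (algebraMap A S2) at hs
  change _ ∈ (colonI J c).map (algebraMap A S2)
  rw [IsScalarTower.algebraMap_eq A S S2, ← Ideal.map_map] at hs ⊢
  obtain ⟨⟨s0, m⟩, hm⟩ := IsLocalization.surj (Submonoid.powers w) s
  have h1 : algebraMap S S2 (algebraMap A S c * s0) ∈
      (J.map (algebraMap A S)).map (algebraMap S S2) := by
    rw [map_mul, ← hm, ← mul_assoc, ← IsScalarTower.algebraMap_apply, ← Algebra.smul_def]
    exact Ideal.mul_mem_right _ _ hs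
  rw [IsLocalization.algebraMap_mem_map_algebraMap_iff (Submonoid.powers w)] at h1
  obtain ⟨n, hn, hn'⟩ := h1
  have h2 := h (n * s0) (by convert hn' using 1; ring)
  have h3 := Ideal.mem_map_of_mem (algebraMap S S2) h2
  have hu : IsUnit (algebraMap S S2 (w * n * m)) :=
    IsLocalization.map_units S2 (⟨w * n * m, mul_mem (mul_mem (Submonoid.mem_powers w) hn) m.2⟩ :
      Submonoid.powers w)
  have h4 : algebraMap S S2 (w * n * m) * s ∈ ((colonI J c).map (algebraMap A S)).map
      (algebraMap S S2) := by
    convert h3 using 1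
    simp only at hm
    rw [map_mul, map_mul, map_mul, map_mul, ← hm]; ring
  exact (Ideal.unit_mul_mem_iff_mem _ hu).mp h4

end

end PartM3

section PartM4
open TensorProduct

lemma step_good {A B : Type u} [CommRing A] [CommRing B] [Algebra A B] {I : Ideal A}
    {A1 A2 S1 S2 : Type u} [CommRing A1] [CommRing S1] [Algebra A1 A]
    [Algebra A1 S1] [CommRing A2] [Algebra A1 A2] [Algebra A2 A] [IsScalarTower A1 A2 A]
    [CommRing S2] [Algebra A2 S2] [Algebra (A2 ⊗[A1] S1) S2] [IsScalarTower A2 (A2 ⊗[A1] S1) S2]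
    (hG : Good I B (A ⊗[A1] S1)) (w : A2 ⊗[A1] S1) [IsLocalization.Away w S2]
    (hw : Algebra.TensorProduct.map (IsScalarTower.toAlgHom A1 A2 A) (AlgHom.id A1 S1) w - 1 ∈
      I.map (algebraMap A (A ⊗[A1] S1))) : Good I B (A ⊗[A2] S2) := by
  let e : A ⊗[A2] (A2 ⊗[A1] S1) ≃ₐ[A] A ⊗[A1] S1 :=
    Algebra.TensorProduct.cancelBaseChange A1 A2 A A S1
  have hG2 : Good I B (A ⊗[A2] (A2 ⊗[A1] S1)) := hG.of_equiv e.symm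
  have he : ∀ x : A2 ⊗[A1] S1, e (1 ⊗ₜ x) =
      Algebra.TensorProduct.map (IsScalarTower.toAlgHom A1 A2 A) (AlgHom.id A1 S1) x := by
    intro x
    induction x with
    | zero => simp
    | add x y hx hy => rw [tmul_add, map_add, map_add, hx, hy]
    | tmul a s => simp [e, Algebra.smul_def]
  have hm : (1 ⊗ₜ w : A ⊗[A2] (A2 ⊗[A1] S1)) - 1 ∈ I.map (algebraMap A (A ⊗[A2] (A2 ⊗[A1] S1))) := by
    have h3 := Ideal.mem_map_of_mem (e.symm : A ⊗[A1] S1 →+* A ⊗[A2] (A2 ⊗[A1] S1)) hw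
    have h4 : (e.symm : A ⊗[A1] S1 →+* A ⊗[A2] (A2 ⊗[A1] S1)).comp (algebraMap A _) =
        algebraMap A _ := by
      ext a; exact e.symm.commutes a
    rw [Ideal.map_map, h4, ← he, map_sub, map_one] at h3
    have h5 : (e.symm : A ⊗[A1] S1 →+* A ⊗[A2] (A2 ⊗[A1] S1)) (e (1 ⊗ₜ w)) = 1 ⊗ₜ w :=
      e.symm_apply_apply _
    rwa [h5] at h3
  have hG3 : Good I B (Localization.Away (1 ⊗ₜ w : A ⊗[A2] (A2 ⊗[A1] S1))) :=
    hG2.localization _ hm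
  exact hG3.of_equiv (IsLocalization.Away.tensorProductEquivTMulRight A2 A w S2).symm

lemma step_rf {A1 A2 S1 S2 : Type u} [CommRing A1] [CommRing S1]
    [Algebra A1 S1] [CommRing A2] [Algebra A1 A2]
    [CommRing S2] [Algebra A2 S2] [Algebra (A2 ⊗[A1] S1) S2] [IsScalarTower A2 (A2 ⊗[A1] S1) S2]
    (w : A2 ⊗[A1] S1) [IsLocalization.Away w S2] (J' : Ideal A1) (c' : A1) (h : RF A1 S1 J' c') :
    RF A2 S2 (J'.map (algebraMap A1 A2)) (algebraMap A1 A2 c') := by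
  have : Module.Flat (A2 ⊗[A1] S1) S2 := IsLocalization.flat S2 (Submonoid.powers w)
  exact (h.baseChange (A2 := A2)).of_flat (S := A2 ⊗[A1] S1)

lemma step_rf2 {A1 A2 S1 S2 : Type u} [CommRing A1] [CommRing S1]
    [Algebra A1 S1] [CommRing A2] [Algebra A1 A2] [IsNoetherianRing A2] [Algebra.FiniteType A1 S1]
    [CommRing S2] [Algebra A2 S2] [Algebra (A2 ⊗[A1] S1) S2] [IsScalarTower A2 (A2 ⊗[A1] S1) S2]
    (w : A2 ⊗[A1] S1) [IsLocalization.Away w S2] (J : Ideal A1) (c : A1)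
    (h1 : RF A1 S1 (J ⊔ Ideal.span {c}) 1) (h2 : RF A1 S1 J c)
    (hT : ∀ t : S1, c • t ∈ J • (⊤ : Submodule A1 S1) → w * (1 ⊗ₜ t) ∈
      (colonI (J.map (algebraMap A1 A2)) (algebraMap A1 A2 c)).map (algebraMap A2 (A2 ⊗[A1] S1))) :
    Algebra.FiniteType A2 S2 ∧ RF A2 S2 (J.map (algebraMap A1 A2)) 1 := by
  have hfp : Algebra.FinitePresentation (A2 ⊗[A1] S1) S2 :=
    IsLocalization.Away.finitePresentation w
  have hft2 : Algebra.FiniteType A2 S2 :=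
    Algebra.FiniteType.trans (S := A2 ⊗[A1] S1) inferInstance inferInstance
  refine ⟨hft2, ?_⟩
  have : IsNoetherianRing S2 := Algebra.FiniteType.isNoetherianRing A2 S2
  refine RF_L (c := algebraMap A1 A2 c) ?_ (step_rf w _ _ h2) ?_
  · have := step_rf (S2 := S2) w _ _ h1
    rwa [Ideal.map_sup, Ideal.map_span, Set.image_singleton, map_one] at this
  · refine iii_b (S := A2 ⊗[A1] S1) w _ _ ?_
    intro s' hs'
    refine iii_a J c h1 w hT s' ?_
    rw [Algebra.smul_def, IsScalarTower.algebraMap_apply A1 A2 (A2 ⊗[A1] S1)]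
    exact hs'

lemma step_pack {A B : Type u} [CommRing A] [CommRing B] [Algebra A B] {I : Ideal A}
    {A1 A2 S1 : Type u} [CommRing A1] [CommRing S1] [Algebra A1 A]
    [Algebra A1 S1] [Algebra.FiniteType A1 S1] (J : Ideal A1) (c : A1)
    (hG : Good I B (A ⊗[A1] S1)) (h1 : RF A1 S1 (J ⊔ Ideal.span {c}) 1) (h2 : RF A1 S1 J c)
    [CommRing A2] [Algebra A1 A2] [Algebra A2 A] [IsScalarTower A1 A2 A]
    (hn : IsNoetherianRing A2) (w : A2 ⊗[A1] S1)
    (hw : Algebra.TensorProduct.map (IsScalarTower.toAlgHom A1 A2 A) (AlgHom.id A1 S1) w - 1 ∈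
      I.map (algebraMap A (A ⊗[A1] S1)))
    (hT : ∀ t : S1, c • t ∈ J • (⊤ : Submodule A1 S1) → w * (1 ⊗ₜ t) ∈
      (colonI (J.map (algebraMap A1 A2)) (algebraMap A1 A2 c)).map (algebraMap A2 (A2 ⊗[A1] S1))) :
    ∃ (A2 : Type u) (_ : CommRing A2) (φ : A1 →+* A2) (_ : Algebra A2 A) (S2 : Type u)
      (_ : CommRing S2) (_ : Algebra A2 S2), IsNoetherianRing A2 ∧ Algebra.FiniteType A2 S2 ∧
      Good I B (A ⊗[A2] S2) ∧ (∀ J' c', RF A1 S1 J' c' → RF A2 S2 (J'.map φ) (φ c')) ∧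
      RF A2 S2 (J.map φ) 1 := by
  obtain ⟨hf, hrf⟩ := step_rf2 (S2 := Localization.Away w) w J c h1 h2 hT
  exact ⟨A2, inferInstance, algebraMap A1 A2, inferInstance, Localization.Away w, inferInstance,
    inferInstance, hn, hf, step_good hG w hw, fun J' c' h => step_rf w J' c' h, hrf⟩

lemma step {A B : Type u} [CommRing A] [CommRing B] [Algebra A B] [Module.Flat A B] {I : Ideal A}
    {A1 S1 : Type u} [CommRing A1] [CommRing S1] [IsNoetherianRing A1] [Algebra A1 A]
    [Algebra A1 S1] [Algebra.FiniteType A1 S1] (J : Ideal A1) (c : A1)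
    (hG : Good I B (A ⊗[A1] S1)) (h1 : RF A1 S1 (J ⊔ Ideal.span {c}) 1) (h2 : RF A1 S1 J c) :
    ∃ (A2 : Type u) (_ : CommRing A2) (φ : A1 →+* A2) (_ : Algebra A2 A) (S2 : Type u)
      (_ : CommRing S2) (_ : Algebra A2 S2), IsNoetherianRing A2 ∧ Algebra.FiniteType A2 S2 ∧
      Good I B (A ⊗[A2] S2) ∧ (∀ J' c', RF A1 S1 J' c' → RF A2 S2 (J'.map φ) (φ c')) ∧
      RF A2 S2 (J.map φ) 1 := by
  classical
  have : IsNoetherianRing S1 := Algebra.FiniteType.isNoetherianRing A1 S1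
  obtain ⟨s, hs⟩ := IsNoetherian.noetherian (colonI (J.map (algebraMap A1 S1)) (algebraMap A1 S1 c))
  have comp1 : (Algebra.TensorProduct.includeRight : S1 →ₐ[A1] A ⊗[A1] S1).toRingHom.comp
      (algebraMap A1 S1) = (algebraMap A (A ⊗[A1] S1)).comp (algebraMap A1 A) := by
    rw [← IsScalarTower.algebraMap_eq]
    exact (Algebra.TensorProduct.includeRight : S1 →ₐ[A1] A ⊗[A1] S1).comp_algebraMap
  obtain ⟨w, hw1, hw⟩ := hG.colon (J.map (algebraMap A1 A)) (algebraMap A1 A c)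
    (s.image (fun t => 1 ⊗ₜ[A1] t)) (by
      intro t' ht1
      obtain ⟨t, ht, rfl⟩ := Finset.mem_image.mp ht1
      have ht' : t ∈ colonI (J.map (algebraMap A1 S1)) (algebraMap A1 S1 c) := by
        rw [← hs]; exact Submodule.subset_span ht
      have h3 := Ideal.mem_map_of_mem
        (Algebra.TensorProduct.includeRight : S1 →ₐ[A1] A ⊗[A1] S1).toRingHom (mem_colonI.mp ht')
      rw [Ideal.map_map, comp1, map_mul, ← RingHom.comp_apply, comp1, ← Ideal.map_map] at h3
      exact h3)
  obtain ⟨X, hX, w2, hw2, hst⟩ := descent J c w s (fun t ht => hw _ (Finset.mem_image_of_mem _ ht))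
  have hft : Algebra.FiniteType A1 X := (Subalgebra.fg_iff_finiteType X).mp hX
  have hXn : IsNoetherianRing X := Algebra.FiniteType.isNoetherianRing A1 X
  have hT : ∀ t : S1, c • t ∈ J • (⊤ : Submodule A1 S1) → w2 * (1 ⊗ₜ t) ∈
      (colonI (J.map (algebraMap A1 X)) (algebraMap A1 X c)).map (algebraMap X (X ⊗[A1] S1)) := by
    intro t ht
    rw [Ideal.smul_top_eq_map, Algebra.smul_def] at ht
    have ht' : t ∈ colonI (J.map (algebraMap A1 S1)) (algebraMap A1 S1 c) := ht
    rw [← hs] at ht'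
    clear ht
    induction ht' using Submodule.span_induction with
    | mem x hx => exact hst x hx
    | zero => simp
    | add x y _ _ hx hy => rw [tmul_add, mul_add]; exact add_mem hx hy
    | smul r x _ hx =>
      have : w2 * (1 ⊗ₜ[A1] (r • x)) = (1 ⊗ₜ r) * (w2 * (1 ⊗ₜ x)) := by
        rw [mul_left_comm, Algebra.TensorProduct.tmul_mul_tmul, one_mul, smul_eq_mul]
      rw [this]
      exact Ideal.mul_mem_left _ _ hx
  rw [← hw2] at hw1
  exact step_pack J c hG h1 h2 hXn w2 hw1 hT

end PartM4

section PartM5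
open TensorProduct

lemma main_ind {A B : Type u} [CommRing A] [CommRing B] [Algebra A B] [Module.Flat A B]
    {I : Ideal A} {A0 R0 : Type u} [CommRing A0] [CommRing R0] [IsNoetherianRing A0] [Algebra A0 A]
    [Algebra A0 R0] [Algebra.FiniteType A0 R0] (hG : Good I B (A ⊗[A0] R0)) (J : Ideal A0) :
    ∃ (A2 : Type u) (_ : CommRing A2) (φ : A0 →+* A2) (_ : Algebra A2 A) (S2 : Type u)
      (_ : CommRing S2) (_ : Algebra A2 S2), IsNoetherianRing A2 ∧ Algebra.FiniteType A2 S2 ∧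
      Good I B (A ⊗[A2] S2) ∧ (∀ J' c', RF A0 R0 J' c' → RF A2 S2 (J'.map φ) (φ c')) ∧
      RF A2 S2 (J.map φ) 1 := by
  induction J using WellFoundedGT.induction with
  | ind J ih =>
    by_cases hJ : J = ⊤
    · subst hJ
      refine ⟨A0, inferInstance, RingHom.id A0, inferInstance, R0, inferInstance, inferInstance,
        inferInstance, inferInstance, hG, fun J' c' h => ?_, ?_⟩
      · rw [Ideal.map_id]; exact h
      · rw [Ideal.map_id]; exact RF.top 1
    · obtain ⟨c, hc, hRF⟩ := RF_G (R := R0) J hJ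
      obtain ⟨A1, _, φ, _, S1, _, _, hn, hf, hG1, ht, h1⟩ := ih (J ⊔ Ideal.span {c}) (by
        refine lt_of_le_of_ne le_sup_left fun h => hc ?_
        rw [h]; exact Ideal.mem_sup_right (Ideal.mem_span_singleton_self c))
      rw [Ideal.map_sup, Ideal.map_span, Set.image_singleton] at h1
      obtain ⟨A2, _, φ', _, S2, _, _, hn2, hf2, hG2, ht2, h2⟩ := step (J.map φ) (φ c) hG1 h1 (ht _ _ hRF)
      refine ⟨A2, inferInstance, φ'.comp φ, inferInstance, S2, inferInstance, inferInstance,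
        hn2, hf2, hG2, fun J' c' h => ?_, ?_⟩
      · rw [← Ideal.map_map]; exact ht2 _ _ (ht _ _ h)
      · rw [← Ideal.map_map]; exact h2

lemma model {A R : Type u} [CommRing A] [CommRing R] [Algebra A R] [Algebra.FinitePresentation A R] :
    ∃ (A0 : Type u) (_ : CommRing A0) (_ : Algebra A0 A) (R0 : Type u) (_ : CommRing R0)
      (_ : Algebra A0 R0), IsNoetherianRing A0 ∧ Algebra.FiniteType A0 R0 ∧
      Nonempty (A ⊗[A0] R0 ≃ₐ[A] R) := by
  let P := Algebra.Presentation.ofFinitePresentation A R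
  have hn : IsNoetherianRing P.Core := by
    have : Algebra.FiniteType ℤ P.Core := (Subalgebra.fg_iff_finiteType _).mp
      ⟨P.finite_coeffs.toFinset, by simp [Algebra.Presentation.core, Algebra.Presentation.Core]⟩
    exact Algebra.FiniteType.isNoetherianRing ℤ _
  exact ⟨P.Core, inferInstance, inferInstance, P.ModelOfHasCoeffs P.Core, inferInstance,
    inferInstance, hn, inferInstance, ⟨P.tensorModelOfHasCoeffsEquiv P.Core⟩⟩

end PartM5

open TensorProduct

/-- An hfp and flat algebra over a Henselian pair `(A, I)` is the Henselization of a flat,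
finitely presented `A`-algebra. -/
theorem exists_flat_finitePresentation_of_isHfp_flat
    {A B : Type u} [CommRing A] [CommRing B] [Algebra A B]
    (I : Ideal A) [HenselianRing A I]
    (hhfp : IsHfp (algebraMap A B) I)
    (hflat : Module.Flat A B) :
    ∃ (S : Type u) (_ : CommRing S) (_ : Algebra A S) (ρ : S →+* B),
      Algebra.FinitePresentation A S ∧ Module.Flat A S ∧
      ρ.comp (algebraMap A S) = algebraMap A B ∧
      IsHenselization (I.map (algebraMap A S)) ρ := by
  obtain ⟨R, _, ψ, ρ, hψ, hρ, hH⟩ := hhfp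
  let _ : Algebra A R := ψ.toAlgebra
  have hfp : Algebra.FinitePresentation A R := hψ
  have hG : Good I B R := ⟨hfp, ρ, hρ, hH⟩
  obtain ⟨A0, _, _, R0, _, _, hn, hf, ⟨e⟩⟩ := model (A := A) (R := R)
  obtain ⟨A1, _, φ, _, S1, _, _, hn1, hf1, ⟨hfp1, ρ1, hρ1, hH1⟩, _, h1⟩ :=
    main_ind (hG.of_equiv e.symm) ⊥
  rw [Ideal.map_bot] at h1
  have := h1.flat
  exact ⟨A ⊗[A1] S1, inferInstance, inferInstance, ρ1, hfp1, inferInstance, hρ1, hH1⟩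
end

section
/- Full faithfulness of reduction modulo I for h-étale algebras: let (A, I) be a Henselian pair and let B and B′ be A-algebras, each h-étale over A (i.e. each is a Henselization of the pair (R, I·R) for some étale A-algebra R). Then the natural reduction map from the set of A-algebra homomorphisms B → B′ to the set of A/I-algebra homomorphisms B/(I·B) → B′/(I·B′) is bijective. -/
universe u

open Polynomial in
lemma aux_cayley {C S : Type*} [CommRing C] [CommRing S] [Algebra C S] (J : Ideal C)
    {ι : Type*} [Fintype ι] (v : ι → S) (hv : Submodule.span C (Set.range v) = ⊤)
    (b : S) (d : ι → C)
    (h : ∀ i, b * v i - d i • v i ∈ J • (⊤ : Submodule C S)) :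
    ∃ f : C[X], f.Monic ∧ aeval b f = 0 ∧
      f.map (Ideal.Quotient.mk J) = ∏ i, (X - Polynomial.C (Ideal.Quotient.mk J (d i))) := by
  classical
  have h1 : ∀ j, ∃ a : ι → C, (∀ i, a i ∈ J) ∧ ∑ i, a i • v i = b * v j - d j • v j := by
    intro j
    have := h j
    rw [← hv, Submodule.mem_ideal_smul_span_iff_exists_sum] at this
    obtain ⟨a, ha, e⟩ := this
    refine ⟨a, ha, ?_⟩
    rw [← e, Finsupp.sum_fintype _ _ (by simp)]
  choose a ha e using h1
  let M : Matrix ι ι C := Matrix.diagonal d + Matrix.of (fun i j => a j i)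
  have hM : M.Represents v (LinearMap.mulLeft C b) := by
    rw [Matrix.represents_iff']
    intro j
    simp only [M, Matrix.add_apply, add_smul, Finset.sum_add_distrib, Matrix.of_apply, e j]
    simp [Matrix.diagonal_apply]
  refine ⟨M.charpoly, M.charpoly_monic, ?_, ?_⟩
  · let M' : Matrix.isRepresentation C v := ⟨M, _, hM⟩
    have h2 : Matrix.isRepresentation.toEnd C v hv M' = LinearMap.mulLeft C b :=
      Matrix.isRepresentation.eq_toEnd_of_represents C v hv M' hM
    have h3 : aeval (LinearMap.mulLeft C b) M.charpoly = 0 := by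
      rw [← h2, Polynomial.aeval_algHom_apply,
        ← map_zero (Matrix.isRepresentation.toEnd C v hv)]
      congr 1
      ext1
      rw [Polynomial.aeval_subalgebra_coe, Matrix.aeval_self_charpoly, Subalgebra.coe_zero]
    have h4 : LinearMap.mulLeft C b = Algebra.lmul C S b := rfl
    rw [h4, Polynomial.aeval_algHom_apply] at h3
    have := LinearMap.congr_fun h3 1
    simpa using this
  · rw [← Matrix.charpoly_map]
    have : (M.map (Ideal.Quotient.mk J)) =
        Matrix.diagonal (fun i => Ideal.Quotient.mk J (d i)) := by
      ext i j
      simp only [M, Matrix.map_apply, Matrix.add_apply, Matrix.of_apply, map_add,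
        Ideal.Quotient.eq_zero_iff_mem.mpr (ha j i), add_zero, Matrix.diagonal_apply]
      split_ifs <;> simp
    rw [this, Matrix.charpoly_diagonal]

open Polynomial in
lemma aux_idem {C S : Type*} [CommRing C] [CommRing S] [Algebra C S] (J : Ideal C)
    [HenselianRing C J] [Module.Finite C S] (σ : S →ₐ[C] C ⧸ J) (b : S) (hb : σ b = 1)
    (h : ∀ x c, σ x = Ideal.Quotient.mk J c → b * x - c • b ∈ J • (⊤ : Submodule C S)) :
    ∃ e : S, e * e = e ∧ σ e = 1 ∧ ∀ x, ∃ c : C, e * x = c • e := by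
  classical
  have hjac : J ≤ Ideal.jacobson ⊥ := HenselianRing.jac
  have hloc := isLocalHom_of_le_jacobson_bot J hjac
  obtain ⟨n, x, hx⟩ := Module.Finite.exists_fin (R := C) (M := S)
  choose c hc using fun i => Ideal.Quotient.mk_surjective (σ (x i))
  let v : Option (Fin n) → S := fun o => o.elim b (fun i => x i - c i • b)
  let d : Option (Fin n) → C := fun o => o.elim 1 (fun i => 0)
  have hcs : ∀ (a : C) (y : S), σ (a • y) = Ideal.Quotient.mk J a * σ y := by
    intro a y
    rw [map_smul, Algebra.smul_def]; rfl
  have hv : Submodule.span C (Set.range v) = ⊤ := by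
    rw [← top_le_iff, ← hx, Submodule.span_le]
    rintro _ ⟨i, rfl⟩
    have h1 : x i = v (some i) + c i • v none := by simp [v]
    rw [h1]
    exact add_mem (Submodule.subset_span ⟨_, rfl⟩)
      (Submodule.smul_mem _ _ (Submodule.subset_span ⟨_, rfl⟩))
  obtain ⟨f, hf, hfb, hfJ⟩ := aux_cayley J v hv b d (by
    rintro (_ | i)
    · simpa [v, d] using h b 1 (by simpa using hb)
    · have := h (v (some i)) 0 (by simp [v, hcs, hb, hc])
      simpa [v, d] using this)
  have hfJ' : f.map (Ideal.Quotient.mk J) = (X - Polynomial.C 1) * X ^ n := by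
    rw [hfJ]; simp [Fintype.prod_option, d]
  obtain ⟨a, ha, ha1⟩ := HenselianRing.is_henselian (I := J) f hf 1 (by
    rw [← Ideal.Quotient.eq_zero_iff_mem, ← Polynomial.eval_map_apply, hfJ']
    simp) (by
    rw [← Polynomial.eval_map_apply, ← Polynomial.derivative_map, hfJ']
    simp)
  have ha1' : Ideal.Quotient.mk J a = 1 := by
    rw [← map_one (Ideal.Quotient.mk J)]; exact Ideal.Quotient.eq.mpr ha1
  obtain ⟨k, hk⟩ := Polynomial.dvd_iff_isRoot.mpr ha
  have hkJ : k.map (Ideal.Quotient.mk J) = X ^ n := by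
    apply (Polynomial.monic_X_sub_C (1 : C ⧸ J)).isRegular.left
    simp only
    rw [← hfJ', hk]
    simp [ha1']
  have hau : IsUnit a := hloc.map_nonunit a (by rw [ha1']; exact isUnit_one)
  have hku : IsUnit (k.eval a) := hloc.map_nonunit _ (by
    rw [← Polynomial.eval_map_apply, hkJ, ha1']; simp)
  obtain ⟨u, hu⟩ := hku.exists_left_inv
  obtain ⟨a', ha'⟩ := hau.exists_left_inv
  have hbk : b * aeval b k = a • aeval b k := by
    have : aeval b f = (b - algebraMap C S a) * aeval b k := by rw [hk]; simp
    rw [hfb, sub_mul, eq_comm, sub_eq_zero] at this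
    rw [this, Algebra.smul_def]
  have hpk : ∀ p : C[X], aeval b p * aeval b k = p.eval a • aeval b k := by
    intro p
    obtain ⟨r, hr⟩ := Polynomial.X_sub_C_dvd_sub_C_eval (a := a) (p := p)
    have : aeval b p = (b - algebraMap C S a) * aeval b r + algebraMap C S (p.eval a) := by
      rw [← sub_eq_iff_eq_add]
      have := congrArg (aeval b) hr
      simpa using this
    rw [Algebra.smul_def] at hbk ⊢
    rw [this]
    linear_combination (aeval b r) * hbk
  set e : S := u • aeval b k with he
  have hbe : b * e = a • e := by
    rw [he, mul_smul_comm, hbk, smul_comm]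
  have hee : e * e = e := by
    rw [he, smul_mul_smul_comm, hpk, smul_smul, mul_assoc, hu, mul_one]
  have hue : Ideal.Quotient.mk J u = 1 := by
    have := congrArg (Ideal.Quotient.mk J) hu
    rw [map_mul, ← Polynomial.eval_map_apply, hkJ, ha1'] at this
    simpa using this
  have hσe : σ e = 1 := by
    rw [he, hcs, hue, one_mul, ← Polynomial.aeval_algHom_apply, hb, Polynomial.aeval_def,
      ← Polynomial.eval_map]
    change eval 1 (k.map (Ideal.Quotient.mk J)) = 1
    rw [hkJ]; simp
  refine ⟨e, hee, hσe, ?_⟩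
  have key : LinearMap.range (LinearMap.mulLeft C e) ≤ Submodule.span C {e} := by
    refine Submodule.le_of_le_smul_of_le_jacobson_bot (I := J) ?_ hjac ?_
    · rw [LinearMap.range_eq_map]
      exact (Module.Finite.fg_top).map _
    · rintro _ ⟨y, rfl⟩
      obtain ⟨c, hc⟩ := Ideal.Quotient.mk_surjective (σ y)
      have h1 := h y c hc.symm
      have h2 : e * (b * y - c • b) ∈ J • LinearMap.range (LinearMap.mulLeft C e) := by
        rw [LinearMap.range_eq_map, ← Submodule.map_smul'']
        exact ⟨_, h1, rfl⟩
      have h3 : LinearMap.mulLeft C e y = c • e + a' • (e * (b * y - c • b)) := by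
        simp only [Algebra.smul_def, LinearMap.mulLeft_apply] at hbe ⊢
        have := congrArg (algebraMap C S) ha'
        simp only [map_mul, map_one] at this
        linear_combination (algebraMap C S c * e - e * y) * this -
          (algebraMap C S a' * (y - algebraMap C S c)) * hbe
      rw [h3]
      exact Submodule.add_mem_sup (Submodule.smul_mem _ _ (Submodule.mem_span_singleton_self e))
        (Submodule.smul_mem _ _ h2)
  intro y
  obtain ⟨c, hc⟩ := Submodule.mem_span_singleton.mp (key ⟨y, rfl⟩)
  exact ⟨c, hc.symm⟩

lemma aux_zmt {C R : Type*} [CommRing C] [CommRing R] [Algebra C R] [Algebra.Etale C R]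
    (J : Ideal C) (σ : R →ₐ[C] C ⧸ J) (x : R) :
    ∃ t : R, IsIntegral C t ∧ σ t = 1 ∧ IsIntegral C (t * x) := by
  classical
  have hsurj : ∀ z : C ⧸ J, ∃ c : C, σ (algebraMap C R c) = z := by
    intro z
    obtain ⟨c, rfl⟩ := Ideal.Quotient.mk_surjective z
    exact ⟨c, σ.commutes c⟩
  let T : Ideal (C ⧸ J) :=
    { carrier := {z | ∃ t : R, IsIntegral C t ∧ σ t = z ∧ IsIntegral C (t * x)}
      add_mem' := by
        rintro _ _ ⟨t, h1, rfl, h2⟩ ⟨t', h1', rfl, h2'⟩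
        exact ⟨t + t', h1.add h1', map_add _ _ _, by rw [add_mul]; exact h2.add h2'⟩
      zero_mem' := ⟨0, isIntegral_zero, map_zero _, by rw [zero_mul]; exact isIntegral_zero⟩
      smul_mem' := by
        rintro z _ ⟨t, h1, rfl, h2⟩
        obtain ⟨c, rfl⟩ := hsurj z
        exact ⟨algebraMap C R c * t, isIntegral_algebraMap.mul h1, map_mul _ _ _,
          by rw [mul_assoc]; exact isIntegral_algebraMap.mul h2⟩ }
  suffices T = ⊤ by
    have h1 : (1 : C ⧸ J) ∈ T := by rw [this]; trivial
    exact h1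
  by_contra hT
  obtain ⟨m, hm, hTm⟩ := Ideal.exists_le_maximal T hT
  have := hm.isPrime
  let p : Ideal R := m.comap σ.toRingHom
  have hp : p.IsPrime := Ideal.comap_isPrime _ _
  have hz : Algebra.ZariskisMainProperty C p := .of_finiteType p
  rw [Algebra.zariskisMainProperty_iff] at hz
  obtain ⟨r, hr, hri, hrx⟩ := hz
  obtain ⟨k, hk⟩ := hrx x
  have : σ (r ^ k) ∈ m := hTm ⟨r ^ k, hri.pow k, rfl, hk⟩
  rw [map_pow] at this
  exact hr (hm.isPrime.mem_of_pow_mem _ this)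

lemma aux_finite {C R : Type*} [CommRing C] [CommRing R] [Algebra C R] [Algebra.Etale C R]
    (J : Ideal C) (σ : R →ₐ[C] C ⧸ J) :
    ∃ S : Subalgebra C R, Module.Finite C S ∧ ∀ x : R, ∃ t ∈ S, σ t = 1 ∧ t * x ∈ S := by
  classical
  obtain ⟨s, hs⟩ := Algebra.FiniteType.out (R := C) (A := R)
  choose t ht1 ht2 ht3 using aux_zmt J σ
  let S : Subalgebra C R := Algebra.adjoin C (t '' s ∪ (fun x => t x * x) '' s)
  refine ⟨S, ?_, ?_⟩
  · have : S.toSubmodule.FG := by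
      apply fg_adjoin_of_finite
      · exact (s.finite_toSet.image _).union (s.finite_toSet.image _)
      · rintro _ (⟨x, hx, rfl⟩ | ⟨x, hx, rfl⟩)
        · exact ht1 x
        · exact ht3 x
    exact Module.Finite.iff_fg.mpr this
  · intro x
    have hx : x ∈ Algebra.adjoin C (s : Set R) := by rw [hs]; trivial
    induction hx using Algebra.adjoin_induction with
    | mem x hx =>
      exact ⟨t x, Algebra.subset_adjoin (Or.inl ⟨x, hx, rfl⟩), ht2 x,
        Algebra.subset_adjoin (Or.inr ⟨x, hx, rfl⟩)⟩
    | algebraMap c => exact ⟨1, one_mem _, map_one _, by simpa using S.algebraMap_mem c⟩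
    | add x y _ _ hx hy =>
      obtain ⟨a, ha, ha1, hax⟩ := hx
      obtain ⟨b, hb, hb1, hby⟩ := hy
      refine ⟨a * b, mul_mem ha hb, by rw [map_mul, ha1, hb1, one_mul], ?_⟩
      have : a * b * (x + y) = b * (a * x) + a * (b * y) := by ring
      rw [this]
      exact add_mem (mul_mem hb hax) (mul_mem ha hby)
    | mul x y _ _ hx hy =>
      obtain ⟨a, ha, ha1, hax⟩ := hx
      obtain ⟨b, hb, hb1, hby⟩ := hy
      refine ⟨a * b, mul_mem ha hb, by rw [map_mul, ha1, hb1, one_mul], ?_⟩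
      have : a * b * (x * y) = (a * x) * (b * y) := by ring
      rw [this]
      exact mul_mem hax hby

lemma aux_tensor {A R D : Type*} [CommRing A] [CommRing R] [CommRing D] [Algebra A R]
    [Algebra A D] [Algebra.Etale A R] (f g : R →ₐ[A] D) :
    ∃ u : D, (∀ s, f s * u = g s * u) ∧
      ∀ (D' : Type _) [CommRing D'] (π : D →+* D'), (∀ s, π (f s) = π (g s)) → π u = 1 := by
  obtain ⟨t, ht, ht1⟩ := Algebra.FormallyUnramified.iff_exists_tensorProduct.mp
    (inferInstance : Algebra.FormallyUnramified A R)
  let F := Algebra.TensorProduct.lift f g (fun _ _ => Commute.all _ _)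
  refine ⟨F t, fun s => ?_, fun D' _ π h => ?_⟩
  · have := congrArg F (ht s)
    simp only [map_mul, map_sub, map_zero, F, Algebra.TensorProduct.lift_tmul, map_one, one_mul,
      mul_one] at this
    linear_combination -this
  · have : π.comp F.toRingHom =
        (π.comp f.toRingHom).comp (Algebra.TensorProduct.lmul' A (S := R)).toRingHom := by
      ext z
      · simp [F]
      · simp [F, h]
    have h2 := RingHom.congr_fun this t
    simp only [RingHom.comp_apply] at h2
    have h3 : (Algebra.TensorProduct.lmul' A (S := R)).toRingHom t = 1 := ht1
    rw [h3] at h2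
    simpa using h2

lemma aux_b {C R : Type*} [CommRing C] [CommRing R] [Algebra C R] [Algebra.Etale C R]
    (J : Ideal C) (σ : R →ₐ[C] C ⧸ J) :
    ∃ e : R, σ e = 1 ∧ ∀ x c, σ x = Ideal.Quotient.mk J c →
      e * x - c • e ∈ J • (⊤ : Submodule C R) := by
  have hJσ : ∀ a ∈ J.map (algebraMap C R), σ a = 0 := by
    intro a ha
    have : J.map (algebraMap C R) ≤ RingHom.ker σ.toRingHom := by
      rw [Ideal.map_le_iff_le_comap]
      intro j hj
      change σ (algebraMap C R j) = 0
      rw [σ.commutes]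
      exact Ideal.Quotient.eq_zero_iff_mem.mpr hj
    exact this ha
  let D := R ⧸ J.map (algebraMap C R)
  let f : R →ₐ[C] D := Ideal.Quotient.mkₐ C _
  let ι : C ⧸ J →ₐ[C] D := Ideal.Quotient.liftₐ J (Algebra.ofId C D) (by
    intro a ha
    change Ideal.Quotient.mk (J.map (algebraMap C R)) (algebraMap C R a) = 0
    exact Ideal.Quotient.eq_zero_iff_mem.mpr (Ideal.mem_map_of_mem _ ha))
  let g : R →ₐ[C] D := ι.comp σ
  let σ' : D →+* C ⧸ J := Ideal.Quotient.lift _ σ.toRingHom hJσ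
  have hσ'ι : ∀ z, σ' (ι z) = z := by
    intro z
    obtain ⟨c, rfl⟩ := Ideal.Quotient.mk_surjective z
    change σ' (Ideal.Quotient.mk _ (algebraMap C R c)) = _
    exact σ.commutes c
  obtain ⟨u, hu, hu1⟩ := aux_tensor f g
  have hu1 := hu1 _ σ' (fun s => (hσ'ι (σ s)).symm)
  obtain ⟨e, rfl⟩ := Ideal.Quotient.mk_surjective u
  refine ⟨e, hu1, fun x c hx => ?_⟩
  have h1 : e * x - c • e ∈ J.map (algebraMap C R) := by
    rw [← Ideal.Quotient.eq_zero_iff_mem, map_sub, sub_eq_zero, mul_comm, map_mul]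
    refine (hu x).trans ?_
    rw [Algebra.smul_def, map_mul]
    congr 1
    change ι (σ x) = _
    rw [hx]; rfl
  rwa [Ideal.smul_top_eq_map]

lemma aux_subalg {C R : Type*} [CommRing C] [CommRing R] [Algebra C R] [Algebra.Etale C R]
    (J : Ideal C) (σ : R →ₐ[C] C ⧸ J) (S : Subalgebra C R) [Module.Finite C S]
    (hS : ∀ x : R, ∃ t ∈ S, σ t = 1 ∧ t * x ∈ S) :
    ∃ b : S, σ b = 1 ∧ ∀ (x : S) c, σ x = Ideal.Quotient.mk J c →
      b * x - c • b ∈ J • (⊤ : Submodule C S) := by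
  classical
  obtain ⟨e, he, hex⟩ := aux_b J σ
  obtain ⟨s, hs, hs1, hse⟩ := hS e
  let Q : Submodule C R := J • S.toSubmodule
  have hQ : ∀ q ∈ Q, ∀ t ∈ S, t * q ∈ Q := by
    intro q hq t ht
    induction hq using Submodule.smul_induction_on' with
    | smul r hr n hn =>
      rw [mul_smul_comm]
      exact Submodule.smul_mem_smul hr (S.mul_mem ht hn)
    | add x _ y _ hx hy => rw [mul_add]; exact add_mem hx hy
  have hQ' : ∀ z ∈ J • (⊤ : Submodule C R), ∃ t ∈ S, σ t = 1 ∧ t * z ∈ Q := by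
    intro z hz
    induction hz using Submodule.smul_induction_on' with
    | smul r hr n hn =>
      obtain ⟨t, ht, ht1, htn⟩ := hS n
      exact ⟨t, ht, ht1, by rw [mul_smul_comm]; exact Submodule.smul_mem_smul hr htn⟩
    | add x _ y _ hx hy =>
      obtain ⟨a, ha, ha1, hax⟩ := hx
      obtain ⟨b, hb, hb1, hby⟩ := hy
      refine ⟨a * b, mul_mem ha hb, by rw [map_mul, ha1, hb1, one_mul], ?_⟩
      have : a * b * (x + y) = b * (a * x) + a * (b * y) := by ring
      rw [this]
      exact add_mem (hQ _ hax _ hb) (hQ _ hby _ ha)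
  obtain ⟨n, x, hx⟩ := Module.Finite.exists_fin (R := C) (M := S)
  choose c hc using fun i => Ideal.Quotient.mk_surjective (σ (x i))
  choose t ht ht1 htx using fun i => hQ' _ (hex (x i) (c i) (hc i).symm)
  let T : R := ∏ i, t i
  have hTS : T ∈ S := prod_mem (fun i _ => ht i)
  have hT1 : σ T = 1 := by rw [map_prod]; exact Finset.prod_eq_one (fun i _ => ht1 i)
  have hTx : ∀ i, T * (e * x i - c i • e) ∈ Q := by
    intro i
    have : T = (∏ j ∈ Finset.univ.erase i, t j) * t i :=
      (Finset.prod_erase_mul _ _ (Finset.mem_univ i)).symm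
    rw [this, mul_assoc]
    exact hQ _ (htx i) _ (prod_mem (fun i _ => ht i))
  let b : S := ⟨T * (s * e), mul_mem hTS hse⟩
  have hb1 : σ b = 1 := by
    change σ (T * (s * e)) = 1
    rw [map_mul, map_mul, hT1, hs1, he]; simp
  have hQS : ∀ y : S, (y : R) ∈ Q → y ∈ J • (⊤ : Submodule C S) := by
    intro y hy
    have h1 : Q = (J • (⊤ : Submodule C S)).map S.val.toLinearMap := by
      have h2 : (⊤ : Submodule C S).map S.val.toLinearMap = S.toSubmodule := by
        ext z; simp
      rw [Submodule.map_smul'', h2]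
    rw [h1] at hy
    obtain ⟨y', hy', e'⟩ := hy
    have : y' = y := Subtype.ext e'
    rwa [← this]
  have hmk : ∀ (a : C) (y : R), σ (a • y) = Ideal.Quotient.mk J a * σ y := by
    intro a y
    rw [map_smul, Algebra.smul_def]; rfl
  have hP : ∀ y : S, ∃ c, σ y = Ideal.Quotient.mk J c ∧
      b * y - c • b ∈ J • (⊤ : Submodule C S) := by
    intro y
    have hy : y ∈ Submodule.span C (Set.range x) := by rw [hx]; trivial
    induction hy using Submodule.span_induction with
    | mem y hy =>
      obtain ⟨i, rfl⟩ := hy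
      refine ⟨c i, (hc i).symm, hQS _ ?_⟩
      have : ((b * x i - c i • b : S) : R) = s * (T * (e * x i - c i • e)) := by
        simp only [b, Subalgebra.coe_sub, Subalgebra.coe_mul, Subalgebra.coe_smul]
        simp only [Algebra.smul_def]
        ring
      rw [this]
      exact hQ _ (hTx i) _ hs
    | zero => exact ⟨0, by simp, by simp⟩
    | add y z _ _ hy hz =>
      obtain ⟨c, hc, h⟩ := hy
      obtain ⟨c', hc', h'⟩ := hz
      refine ⟨c + c', by simp [hc, hc'], ?_⟩
      have : b * (y + z) - (c + c') • b = (b * y - c • b) + (b * z - c' • b) := by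
        rw [add_smul]; ring
      rw [this]; exact add_mem h h'
    | smul a y _ hy =>
      obtain ⟨c, hc, h⟩ := hy
      refine ⟨a * c, by rw [Subalgebra.coe_smul, hmk, hc, map_mul], ?_⟩
      have : b * (a • y) - (a * c) • b = a • (b * y - c • b) := by
        rw [smul_sub, mul_smul_comm, mul_smul]
      rw [this]; exact Submodule.smul_mem _ _ h
  refine ⟨b, hb1, fun y c hy => ?_⟩
  obtain ⟨c', hc', h⟩ := hP y
  have h1 : c' - c ∈ J := Ideal.Quotient.eq.mp (hc'.symm.trans hy)
  have : b * y - c • b = (b * y - c' • b) + (c' - c) • b := by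
    rw [sub_smul]; ring
  rw [this]
  exact add_mem h (Submodule.smul_mem_smul h1 trivial)

lemma aux_lift {C R : Type*} [CommRing C] [CommRing R] [Algebra C R] [Algebra.Etale C R]
    (J : Ideal C) [HenselianRing C J] (σ : R →ₐ[C] C ⧸ J) :
    ∃ φ : R →ₐ[C] C, ∀ x, Ideal.Quotient.mk J (φ x) = σ x := by
  have hjac : J ≤ Ideal.jacobson ⊥ := HenselianRing.jac
  have hloc := isLocalHom_of_le_jacobson_bot J hjac
  obtain ⟨S, hSf, hS⟩ := aux_finite J σ
  obtain ⟨b, hb, hbx⟩ := aux_subalg J σ S hS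
  obtain ⟨e, hee, he1, hex⟩ := aux_idem J (σ.comp S.val) b hb hbx
  have hmk : ∀ (a : C) (y : R), σ (a • y) = Ideal.Quotient.mk J a * σ y := by
    intro a y
    rw [map_smul, Algebra.smul_def]; rfl
  have he1' : σ e = 1 := he1
  have hexR : ∀ x : R, ∃ c : C, (e : R) * x = c • (e : R) := by
    intro x
    obtain ⟨t, ht, ht1, htx⟩ := hS x
    obtain ⟨c, hc⟩ := hex ⟨t, ht⟩
    obtain ⟨c', hc'⟩ := hex ⟨t * x, htx⟩
    replace hc := congrArg Subtype.val hc
    replace hc' := congrArg Subtype.val hc'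
    simp only [Subalgebra.coe_mul, Subalgebra.coe_smul] at hc hc'
    have h1 := congrArg σ hc
    rw [map_mul, hmk, he1', ht1] at h1
    have hcu : IsUnit c := hloc.map_nonunit c (by
      have : Ideal.Quotient.mk J c = 1 := by simpa using h1.symm
      rw [this]; exact isUnit_one)
    obtain ⟨d, hd⟩ := hcu.exists_left_inv
    refine ⟨d * c', ?_⟩
    have hd' := congrArg (algebraMap C R) hd
    simp only [Algebra.smul_def, map_mul, map_one] at *
    linear_combination (-(e : R) * x) * hd' - algebraMap C R d * x * hc + algebraMap C R d * hc'
  have heI : IsIdempotentElem (e : R) := congrArg Subtype.val hee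
  let L := Localization.Away (e : R)
  have hRL : Function.Surjective (algebraMap R L) :=
    IsLocalization.Away.algebraMap_surjective_of_isIdempotentElem (e : R) heI
  have heL : algebraMap R L e = 1 := by
    have h1 : IsUnit (algebraMap R L e) := IsLocalization.Away.algebraMap_isUnit (e : R)
    have h2 : algebraMap R L e * algebraMap R L e = algebraMap R L e * 1 := by
      rw [← map_mul, heI, mul_one]
    exact h1.mul_left_cancel h2
  have hxL : ∀ x c, (e : R) * x = c • (e : R) → algebraMap R L x = algebraMap C L c := by
    intro x c h
    have := congrArg (algebraMap R L) h
    rw [Algebra.smul_def, map_mul, map_mul, heL, one_mul, mul_one,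
      ← IsScalarTower.algebraMap_apply] at this
    exact this
  have hCL : Function.Surjective (algebraMap C L) := by
    intro z
    obtain ⟨x, rfl⟩ := hRL z
    obtain ⟨c, hc⟩ := hexR x
    exact ⟨c, (hxL x c hc).symm⟩
  have hLe : Algebra.Etale R L := Algebra.Etale.of_isLocalizationAway (e : R)
  have hLe' : Algebra.Etale C L := Algebra.Etale.comp C R L
  have hk1 : IsIdempotentElem (RingHom.ker (algebraMap C L)) :=
    (Algebra.FormallyEtale.iff_of_surjective hCL).mp inferInstance
  have hk2 : (RingHom.ker (algebraMap C L)).FG :=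
    Algebra.FinitePresentation.ker_fG_of_surjective (Algebra.ofId C L) hCL
  let σL : L →+* C ⧸ J := IsLocalization.Away.lift (e : R) (g := σ.toRingHom)
    (by change IsUnit (σ e); rw [he1']; exact isUnit_one)
  have hσL : ∀ x, σL (algebraMap R L x) = σ x := fun x => IsLocalization.Away.lift_eq _ _ x
  have hσLC : ∀ c, σL (algebraMap C L c) = Ideal.Quotient.mk J c := by
    intro c
    rw [IsScalarTower.algebraMap_apply C R L, hσL]
    exact σ.commutes c
  have hkJ : RingHom.ker (algebraMap C L) ≤ J := by
    intro c hc
    rw [← Ideal.Quotient.eq_zero_iff_mem, ← hσLC, (RingHom.mem_ker).mp hc, map_zero]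
  have hk : RingHom.ker (algebraMap C L) = ⊥ := by
    refine Submodule.eq_bot_of_le_smul_of_le_jacobson_bot _ _ hk2 ?_ (hkJ.trans hjac)
    rw [smul_eq_mul, hk1]
  have hbij : Function.Bijective (Algebra.ofId C L) :=
    ⟨(RingHom.injective_iff_ker_eq_bot _).mpr hk, hCL⟩
  let E := AlgEquiv.ofBijective _ hbij
  refine ⟨E.symm.toAlgHom.comp (IsScalarTower.toAlgHom C R L), fun x => ?_⟩
  rw [← hσLC, ← hσL]
  congr 1
  exact E.apply_symm_apply (algebraMap R L x)

/-- Full faithfulness of reduction mod `I` for h-étale algebras over a Henselian pair: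
every `A/I`-algebra homomorphism `B/IB → B'/IB'` lifts uniquely to an `A`-algebra
homomorphism `B → B'`. -/
theorem reduction_bijective_of_isHEtale
    {A B B' : Type u} [CommRing A] [CommRing B] [CommRing B']
    [Algebra A B] [Algebra A B']
    (I : Ideal A) [HenselianRing A I]
    (hB : IsHEtale (algebraMap A B) I)
    (hB' : IsHEtale (algebraMap A B') I) :
    ∀ q : (B ⧸ I.map (algebraMap A B)) →+* B' ⧸ I.map (algebraMap A B'),
      q.comp ((Ideal.Quotient.mk (I.map (algebraMap A B))).comp (algebraMap A B)) =
        (Ideal.Quotient.mk (I.map (algebraMap A B'))).comp (algebraMap A B') →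
      ∃! g : B →ₐ[A] B',
        (Ideal.Quotient.mk (I.map (algebraMap A B'))).comp g.toRingHom =
          q.comp (Ideal.Quotient.mk (I.map (algebraMap A B))) := by
  intro q hq
  obtain ⟨R, _, _, ρ, hR, hρ, hHens, huniv⟩ := hB
  have hB'H : HenselianRing B' (I.map (algebraMap A B')) := by
    obtain ⟨R', _, _, ρ', _, hρ', h, _⟩ := hB'
    rw [Ideal.map_map, hρ'] at h
    exact h
  let J := I.map (algebraMap A B')
  have hjac : J ≤ Ideal.jacobson ⊥ := HenselianRing.jac
  have hloc := isLocalHom_of_le_jacobson_bot J hjac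
  have hρA : ∀ a, ρ (algebraMap A R a) = algebraMap A B a := fun a => RingHom.congr_fun hρ a
  have hbotH : HenselianRing (B' ⧸ J) ⊥ :=
    { jac := bot_le
      is_henselian := fun f _ a₀ h _ => ⟨a₀, by simpa using h, by simp⟩ }
  let s : R →ₐ[A] B' ⧸ J :=
    { (q.comp (Ideal.Quotient.mk _)).comp ρ with
      commutes' := fun a => by
        change q (Ideal.Quotient.mk _ (ρ (algebraMap A R a))) = _
        rw [hρA]
        exact RingHom.congr_fun hq a }
  have hs : ∀ r, s r = q (Ideal.Quotient.mk _ (ρ r)) := fun r => rfl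
  have hsI : (I.map (algebraMap A R)).map s.toRingHom ≤ ⊥ := by
    rw [Ideal.map_map, Ideal.map_le_iff_le_comap]
    intro a ha
    change s (algebraMap A R a) = 0
    rw [s.commutes]
    change Ideal.Quotient.mk J (algebraMap A B' a) = 0
    exact Ideal.Quotient.eq_zero_iff_mem.mpr (Ideal.mem_map_of_mem _ ha)
  obtain ⟨φ, hφ⟩ := aux_lift (R := TensorProduct A B' R) J
    (Algebra.TensorProduct.lift (Algebra.ofId B' (B' ⧸ J)) s (fun _ _ => Commute.all _ _))
  let f : R →ₐ[A] B' := (φ.restrictScalars A).comp Algebra.TensorProduct.includeRight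
  have hf : ∀ r, Ideal.Quotient.mk J (f r) = s r := by
    intro r
    refine (hφ _).trans ?_
    simp
  have hfI : ∀ f : R →ₐ[A] B', (I.map (algebraMap A R)).map f.toRingHom ≤ J := by
    intro f
    rw [Ideal.map_map, Ideal.map_le_iff_le_comap]
    intro a ha
    change f (algebraMap A R a) ∈ J
    rw [f.commutes]
    exact Ideal.mem_map_of_mem _ ha
  obtain ⟨g, hg, -⟩ := huniv B' J hB'H f.toRingHom (hfI f)
  have hg' : ∀ r, g (ρ r) = f r := fun r => RingHom.congr_fun hg r
  let G : B →ₐ[A] B' :=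
    { g with
      commutes' := fun a => by
        change g (algebraMap A B a) = _
        rw [← hρA, hg', f.commutes] }
  refine ⟨G, ?_, ?_⟩
  · refine (huniv (B' ⧸ J) ⊥ hbotH s.toRingHom hsI).unique ?_ ?_
    · ext r
      change Ideal.Quotient.mk J (g (ρ r)) = s r
      rw [hg', hf]
    · ext r; rfl
  · intro G' hG'
    have hG'r : ∀ x, Ideal.Quotient.mk J (G' x) = q (Ideal.Quotient.mk _ x) :=
      fun x => RingHom.congr_fun hG' x
    let ρA : R →ₐ[A] B := { ρ with commutes' := hρA }
    let f' : R →ₐ[A] B' := G'.comp ρA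
    obtain ⟨u, hu, hu1⟩ := aux_tensor f' f
    have huu : IsUnit u := hloc.map_nonunit u (by
      rw [hu1 _ (Ideal.Quotient.mk J) (fun r => by rw [hf, hs]; exact hG'r (ρ r))]
      exact isUnit_one)
    have hff : ∀ r, f' r = f r := fun r => huu.mul_right_cancel (hu r)
    have : G'.toRingHom = g := by
      refine (huniv B' J hB'H f.toRingHom (hfI f)).unique ?_ hg
      ext r
      exact hff r
    ext x
    exact RingHom.congr_fun this x
end

section
/- Henselized polynomial rings in iterated variables: let (A, I) be a Henselian pair, let n, m be natural numbers, let P = A[X₁, …, Xₙ] be the polynomial ring in n variables, and let ρ : P → B exhibit B as a Henselization of the pair (P, I·P). Let Q = B[Y₁, …, Yₘ] be the polynomial ring in m variables over B and let σ : Q → C exhibit C as a Henselization of the pair (Q, I·Q). Then the composite ring homomorphism A[X₁, …, Xₙ, Y₁, …, Yₘ] → B[Y₁, …, Yₘ] → C (applying ρ to coefficients and then σ) exhibits C as a Henselization of the pair (A[X₁, …, Xₙ, Y₁, …, Yₘ], I·A[X₁, …, Xₙ, Y₁, …, Yₘ]). -/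
universe u

/-- Henselized polynomial rings in iterated variables: if `B` is a Henselization of
`(A[X₁,…,Xₙ], I·A[X₁,…,Xₙ])` and `C` is a Henselization of `(B[Y₁,…,Yₘ], I·B[Y₁,…,Yₘ])`, then
the composite `A[X₁,…,Xₙ,Y₁,…,Yₘ] → B[Y₁,…,Yₘ] → C` exhibits `C` as a Henselization of
`(A[X₁,…,Xₙ,Y₁,…,Yₘ], I·A[X₁,…,Xₙ,Y₁,…,Yₘ])`. -/
theorem isHenselization_iterated_polynomial
    {A B C : Type u} [CommRing A] [CommRing B] [CommRing C]
    (I : Ideal A) [HenselianRing A I] (n m : ℕ)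
    (ρ : MvPolynomial (Fin n) A →+* B)
    (hρ : IsHenselization (I.map (MvPolynomial.C : A →+* MvPolynomial (Fin n) A)) ρ)
    (σ : MvPolynomial (Fin m) B →+* C)
    (hσ : IsHenselization
      (I.map (((MvPolynomial.C : B →+* MvPolynomial (Fin m) B).comp ρ).comp
        (MvPolynomial.C : A →+* MvPolynomial (Fin n) A))) σ) :
    IsHenselization
      (I.map (MvPolynomial.C : A →+* MvPolynomial (Fin n ⊕ Fin m) A))
      (σ.comp ((MvPolynomial.map ρ).comp
        ((MvPolynomial.sumToIter A (Fin m) (Fin n)).comp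
          (MvPolynomial.rename (Sum.swap : Fin n ⊕ Fin m → Fin m ⊕ Fin n)).toRingHom))) := by
  set τ : MvPolynomial (Fin n ⊕ Fin m) A →+* C := (σ.comp ((MvPolynomial.map ρ).comp
        ((MvPolynomial.sumToIter A (Fin m) (Fin n)).comp
          (MvPolynomial.rename (Sum.swap : Fin n ⊕ Fin m → Fin m ⊕ Fin n)).toRingHom))) with hτ
  have h1 : ∀ a, τ (MvPolynomial.C a) = σ (MvPolynomial.C (ρ (MvPolynomial.C a))) := by
    intro a
    simp [hτ, MvPolynomial.sumToIter_C]
  have h2 : ∀ i, τ (MvPolynomial.X (Sum.inl i)) = σ (MvPolynomial.C (ρ (MvPolynomial.X i))) := by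
    intro i
    simp [hτ, MvPolynomial.sumToIter_Xr]
  have h3 : ∀ j, τ (MvPolynomial.X (Sum.inr j)) = σ (MvPolynomial.X j) := by
    intro j
    simp [hτ, MvPolynomial.sumToIter_Xl]
  clear_value τ
  refine ⟨?_, ?_⟩
  · have h := hσ.1
    rw [Ideal.map_map] at h ⊢
    have e : τ.comp MvPolynomial.C = σ.comp (((MvPolynomial.C : B →+* MvPolynomial (Fin m) B).comp
        ρ).comp (MvPolynomial.C : A →+* MvPolynomial (Fin n) A)) := RingHom.ext h1
    rw [e]
    exact h
  · intro D _ J hJ f hf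
    rw [Ideal.map_map] at hf
    let f1 : MvPolynomial (Fin n) A →+* D :=
      f.comp (MvPolynomial.rename (Sum.inl : Fin n → Fin n ⊕ Fin m)).toRingHom
    have hf1C : f1.comp MvPolynomial.C = f.comp MvPolynomial.C := by
      ext a
      simp [f1]
    obtain ⟨g1, hg1, hu1⟩ := hρ.2 D J hJ f1 (by rw [Ideal.map_map, hf1C]; exact hf)
    let f2 : MvPolynomial (Fin m) B →+* D :=
      MvPolynomial.eval₂Hom g1 (fun j => f (MvPolynomial.X (Sum.inr j)))
    have hf2C : f2.comp MvPolynomial.C = g1 := by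
      ext a
      simp [f2]
    obtain ⟨g2, hg2, hu2⟩ := hσ.2 D J hJ f2 (by
      rw [Ideal.map_map, ← RingHom.comp_assoc, ← RingHom.comp_assoc, hf2C, hg1, hf1C]; exact hf)
    have k1 : ∀ p, g1 (ρ p) = f1 p := fun p => RingHom.congr_fun hg1 p
    have k2 : ∀ p, g2 (σ p) = f2 p := fun p => RingHom.congr_fun hg2 p
    refine ⟨g2, ?_, ?_⟩
    · refine MvPolynomial.ringHom_ext ?_ ?_
      · intro a
        simp [h1, k2, f2, k1, f1]
      · rintro (i | j)
        · simp [h2, k2, f2, k1, f1]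
        · simp [h3, k2, f2]
    · intro g hg
      have hg' : ∀ p, g (τ p) = f p := fun p => RingHom.congr_fun hg p
      have e1 : (g.comp σ).comp MvPolynomial.C = g1 := by
        refine hu1 _ ?_
        refine MvPolynomial.ringHom_ext ?_ ?_
        · intro a
          simp [← h1, hg', f1]
        · intro i
          simp [← h2, hg', f1]
      refine hu2 _ ?_
      refine MvPolynomial.ringHom_ext ?_ ?_
      · intro b
        simp [f2, ← e1]
      · intro j
        simp [f2, ← h3, hg']
end
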